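/- arXiv:2106.14953 — 3 statements merged into one kernel-verified Lean document; each statement's English description precedes it below -/
import Mathlib

section
/- Fix an integer k ≥ 2. Then as x → ∞, the number of integers n with 1 ≤ n ≤ x such that n is k-free and yet there exists a prime p with p^k ≤ (log log x)^{0.9} and p^k ∣ s(n) is o(x). (That is, almost always, if n is k-free then s(n) is not divisible by p^k for any prime p with p^k ≤ (log log x)^{0.9}.) -/
open scoped Classical
open Filter Finset

/-- `sigma1 n` is `σ(n)`, the sum of all positive divisors of `n`. -/
def sigma1 (n : ℕ) : ℕ := ArithmeticFunction.sigma 1 n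

/-- `s n` is the sum of the proper divisors of `n`, i.e. `σ(n) − n`. -/
def s (n : ℕ) : ℕ := sigma1 n - n

/-- A positive integer `n` is `k`-free if no `k`-th power of a prime divides it. -/
def KFree (k n : ℕ) : Prop := ∀ p : ℕ, p.Prime → ¬ p ^ k ∣ n


namespace KF

lemma char_sum_period {p : ℕ} [hp : Fact p.Prime] {χ : DirichletCharacter ℂ p} (hχ : χ ≠ 1) :
    ∑ k ∈ range p, χ (k : ZMod p) = 0 := by
  have h := MulChar.sum_eq_zero_of_ne_one hχ
  rw [← h]
  refine Finset.sum_bij (fun k _ => (k : ZMod p)) (by simp) ?_ ?_ (by simp)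
  · intro a ha b hb hab
    have := (ZMod.natCast_eq_natCast_iff' a b p).1 hab
    rwa [Nat.mod_eq_of_lt (by simpa using ha), Nat.mod_eq_of_lt (by simpa using hb)] at this
  · intro b _
    exact ⟨b.val, by simpa using ZMod.val_lt b, by simp⟩

lemma char_sum_bound {p : ℕ} [hp : Fact p.Prime] {χ : DirichletCharacter ℂ p} (hχ : χ ≠ 1)
    (n : ℕ) : ‖∑ k ∈ range n, χ (k : ZMod p)‖ ≤ p := by
  induction n using Nat.strong_induction_on with
  | _ n ih =>
    rcases lt_or_ge n p with h | h
    · calc ‖∑ k ∈ range n, χ (k : ZMod p)‖ ≤ ∑ k ∈ range n, ‖χ (k : ZMod p)‖ := norm_sum_le _ _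
        _ ≤ ∑ k ∈ range n, (1 : ℝ) := Finset.sum_le_sum fun i _ => χ.norm_le_one _
        _ = n := by simp
        _ ≤ p := by exact_mod_cast h.le
    · obtain ⟨m, rfl⟩ := Nat.exists_eq_add_of_le h
      rw [Finset.sum_range_add, char_sum_period hχ, zero_add]
      simpa using ih m (by have := hp.out.pos; omega)

lemma char_sum_bound' {p : ℕ} [hp : Fact p.Prime] {χ : DirichletCharacter ℂ p} (hχ : χ ≠ 1)
    (n : ℕ) : ‖∑ k ∈ Icc 1 n, χ (k : ZMod p)‖ ≤ p := by
  have h := char_sum_bound hχ (n + 1)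
  rw [Finset.sum_range_succ'] at h
  have h0 : χ ((0 : ℕ) : ZMod p) = 0 := by
    simp [MulChar.map_zero]
  rw [h0, add_zero] at h
  rw [range_eq_Ico, Finset.sum_Ico_add' (fun k : ℕ => χ (k : ZMod p)) 0 n 1] at h
  have e : Icc 1 n = Ico (0 + 1) (n + 1) := by ext; simp
  rwa [e]

/-- Real-variable L-value. -/
noncomputable def LL {p : ℕ} (χ : DirichletCharacter ℂ p) (u : ℝ) : ℂ :=
  LSeries (fun n => χ (n : ZMod p)) (u : ℂ)

lemma LL_eq {p : ℕ} [hp : Fact p.Prime] {χ : DirichletCharacter ℂ p} (hχ : χ ≠ 1) {u : ℝ}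
    (hu : 1 < u) : LL χ u = u * ∫ t in Set.Ioi (1 : ℝ),
      (∑ k ∈ Icc 1 ⌊t⌋₊, χ (k : ZMod p)) * ((t ^ (-(u + 1)) : ℝ) : ℂ) := by
  have hre : 1 < (u : ℂ).re := by simpa
  rw [LL, LSeries_eq_mul_integral (fun n : ℕ => χ (n : ZMod p)) (r := 0) le_rfl (s := (u : ℂ))
    (by simp; linarith) (DirichletCharacter.LSeriesSummable_of_one_lt_re χ hre)]
  · congr 1
    refine MeasureTheory.setIntegral_congr_fun measurableSet_Ioi fun t ht => ?_
    have : (0 : ℝ) ≤ t := by linarith [Set.mem_Ioi.1 ht]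
    rw [Complex.ofReal_cpow this]
    push_cast
    rfl
  · refine Asymptotics.IsBigO.of_bound p (Eventually.of_forall fun n => ?_)
    simpa using char_sum_bound' hχ n

lemma measurable_sumfloor (f : ℕ → ℂ) : Measurable fun t : ℝ => ∑ k ∈ Icc 1 ⌊t⌋₊, f k := by
  have : Measurable fun n : ℕ => ∑ k ∈ Icc 1 n, f k := measurable_from_nat
  exact this.comp Nat.measurable_floor

lemma integrable_aux {p : ℕ} [hp : Fact p.Prime] {χ : DirichletCharacter ℂ p} (hχ : χ ≠ 1) {u : ℝ}
    (hu : 1 < u) : MeasureTheory.IntegrableOn (fun t : ℝ =>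
      (∑ k ∈ Icc 1 ⌊t⌋₊, χ (k : ZMod p)) * ((t ^ (-(u + 1)) : ℝ) : ℂ)) (Set.Ioi 1) := by
  have hi := (integrableOn_Ioi_rpow_of_lt (show -(u + 1) < -1 by linarith) one_pos).ofReal (𝕜 := ℂ)
  refine MeasureTheory.Integrable.bdd_mul (c := p) hi
    (measurable_sumfloor _).aestronglyMeasurable ?_
  exact Eventually.of_forall fun t => char_sum_bound' hχ _

lemma LL_int_le {p : ℕ} [hp : Fact p.Prime] {χ : DirichletCharacter ℂ p} (hχ : χ ≠ 1) {u : ℝ}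
    (hu : 1 < u) : ‖∫ t in Set.Ioi (1 : ℝ),
      (∑ k ∈ Icc 1 ⌊t⌋₊, χ (k : ZMod p)) * ((t ^ (-(u + 1)) : ℝ) : ℂ)‖ ≤ p / u := by
  have hi := integrableOn_Ioi_rpow_of_lt (show -(u + 1) < -1 by linarith) one_pos
  have := MeasureTheory.norm_integral_le_of_norm_le (f := fun t : ℝ =>
      (∑ k ∈ Icc 1 ⌊t⌋₊, χ (k : ZMod p)) * ((t ^ (-(u + 1)) : ℝ) : ℂ)) (hi.const_mul (p : ℝ)) ?_
  · refine this.trans ?_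
    rw [MeasureTheory.integral_const_mul, integral_Ioi_rpow_of_lt (by linarith) one_pos]
    simp only [Real.one_rpow]
    apply le_of_eq
    have : u ≠ 0 := by linarith
    rw [show -(u + 1) + 1 = -u by ring]
    field_simp
  · filter_upwards [MeasureTheory.ae_restrict_mem measurableSet_Ioi] with t ht
    have : (0 : ℝ) ≤ t := by linarith [Set.mem_Ioi.1 ht]
    rw [norm_mul, Complex.norm_real, Real.norm_of_nonneg (Real.rpow_nonneg this _)]
    exact mul_le_mul_of_nonneg_right (char_sum_bound' hχ _) (Real.rpow_nonneg this _)

lemma LL_le {p : ℕ} [hp : Fact p.Prime] {χ : DirichletCharacter ℂ p} (hχ : χ ≠ 1) {u : ℝ}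
    (hu : 1 < u) : ‖LL χ u‖ ≤ p := by
  rw [LL_eq hχ hu, norm_mul, Complex.norm_real, Real.norm_of_nonneg (by linarith)]
  calc u * _ ≤ u * (p / u) := mul_le_mul_of_nonneg_left (LL_int_le hχ hu) (by linarith)
    _ = p := by field_simp

lemma rpow_diff {t u v : ℝ} (ht : 1 < t) (hu : 1 < u) (huv : u ≤ v) :
    |t ^ (-(u + 1)) - t ^ (-(v + 1))| ≤ (v - u) * (2 * t ^ (-(3 / 2) : ℝ)) := by
  have t0 : 0 < t := by linarith
  have e : t ^ (-(v + 1)) = t ^ (-(u + 1)) * t ^ (-(v - u)) := by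
    rw [← Real.rpow_add t0]; congr 1; ring
  have h1 : 1 - (v - u) * Real.log t ≤ t ^ (-(v - u)) := by
    rw [Real.rpow_def_of_pos t0]
    have := Real.add_one_le_exp (Real.log t * -(v - u))
    linarith
  have h2 : t ^ (-(v - u)) ≤ 1 := Real.rpow_le_one_of_one_le_of_nonpos ht.le (by linarith)
  have h3 : Real.log t ≤ 2 * t ^ (1 / 2 : ℝ) := by
    have := Real.log_le_rpow_div t0.le (show (0:ℝ) < 1 / 2 by norm_num)
    linarith
  have h4 : t ^ (-(u + 1)) ≤ t ^ (-2 : ℝ) :=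
    Real.rpow_le_rpow_of_exponent_le ht.le (by linarith)
  have h5 : t ^ (-(3 / 2) : ℝ) = t ^ (-2 : ℝ) * t ^ (1 / 2 : ℝ) := by
    rw [← Real.rpow_add t0]; norm_num
  have p1 : 0 < t ^ (-(u + 1)) := Real.rpow_pos_of_pos t0 _
  have p2 : 0 < t ^ (1 / 2 : ℝ) := Real.rpow_pos_of_pos t0 _
  have hl : 0 ≤ Real.log t := Real.log_nonneg ht.le
  rw [e, show t ^ (-(u + 1)) - t ^ (-(u + 1)) * t ^ (-(v - u)) =
    t ^ (-(u + 1)) * (1 - t ^ (-(v - u))) by ring, abs_mul, abs_of_pos p1, abs_of_nonneg (by linarith),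
    h5]
  calc t ^ (-(u + 1)) * (1 - t ^ (-(v - u))) ≤ t ^ (-2 : ℝ) * ((v - u) * Real.log t) := by
        apply mul_le_mul h4 (by linarith) (by linarith) (by positivity)
    _ ≤ t ^ (-2 : ℝ) * ((v - u) * (2 * t ^ (1 / 2 : ℝ))) := by
        have : 0 ≤ v - u := by linarith
        gcongr
    _ = _ := by ring

lemma LL_lip {p : ℕ} [hp : Fact p.Prime] {χ : DirichletCharacter ℂ p} (hχ : χ ≠ 1) {u v : ℝ}
    (hu : 1 < u) (huv : u ≤ v) (hv : v ≤ 2) : ‖LL χ u - LL χ v‖ ≤ 9 * p * (v - u) := by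
  have hv1 : 1 < v := by linarith
  rw [LL_eq hχ hu, LL_eq hχ hv1]
  set I := ∫ t in Set.Ioi (1 : ℝ),
      (∑ k ∈ Icc 1 ⌊t⌋₊, χ (k : ZMod p)) * ((t ^ (-(u + 1)) : ℝ) : ℂ) with hI
  set J := ∫ t in Set.Ioi (1 : ℝ),
      (∑ k ∈ Icc 1 ⌊t⌋₊, χ (k : ZMod p)) * ((t ^ (-(v + 1)) : ℝ) : ℂ) with hJ
  have hIJ : ‖I - J‖ ≤ 4 * p * (v - u) := by
    rw [hI, hJ, ← MeasureTheory.integral_sub (integrable_aux hχ hu) (integrable_aux hχ hv1)]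
    have hi := integrableOn_Ioi_rpow_of_lt (show (-(3/2) : ℝ) < -1 by norm_num) one_pos
    refine (MeasureTheory.norm_integral_le_of_norm_le (hi.const_mul (p * (v - u) * 2)) ?_).trans ?_
    · filter_upwards [MeasureTheory.ae_restrict_mem measurableSet_Ioi] with t ht
      rw [← mul_sub, norm_mul, ← Complex.ofReal_sub, Complex.norm_real, Real.norm_eq_abs]
      calc _ ≤ p * ((v - u) * (2 * t ^ (-(3 / 2) : ℝ))) :=
            mul_le_mul (char_sum_bound' hχ _) (rpow_diff ht hu huv) (abs_nonneg _) (by positivity)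
        _ = _ := by ring
    · rw [MeasureTheory.integral_const_mul, integral_Ioi_rpow_of_lt (by norm_num) one_pos]
      simp only [Real.one_rpow]
      apply le_of_eq
      norm_num
      ring
  have hIu : ‖I‖ ≤ p := (LL_int_le hχ hu).trans (div_le_self (by positivity) hu.le)
  have : (u : ℂ) * I - v * J = ((u - v : ℝ) : ℂ) * I + v * (I - J) := by push_cast; ring
  rw [this]
  refine (norm_add_le _ _).trans ?_
  rw [norm_mul, norm_mul, Complex.norm_real, Complex.norm_real, Real.norm_eq_abs, Real.norm_eq_abs,
    abs_sub_comm, abs_of_nonneg (by linarith : 0 ≤ v - u), abs_of_pos (by linarith : 0 < v)]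
  calc (v - u) * ‖I‖ + v * ‖I - J‖ ≤ (v - u) * p + 2 * (4 * p * (v - u)) := by
        have : 0 ≤ v - u := by linarith
        gcongr
    _ = _ := by ring

end KF

namespace KF

open ArithmeticFunction in
lemma zetaMul_eq {p : ℕ} (χ : DirichletCharacter ℂ p) (n : ℕ+) :
    DirichletCharacter.zetaMul χ n = ∑ x ∈ (n : ℕ).divisorsAntidiagonal, χ (x.1 : ZMod p) := by
  rw [DirichletCharacter.zetaMul, coe_zeta_mul_apply, Nat.sum_divisorsAntidiagonal
    (fun i _ => χ (i : ZMod p))]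
  refine Finset.sum_congr rfl fun i hi => ?_
  have : i ≠ 0 := (Nat.pos_of_mem_divisors hi).ne'
  simp [toArithmeticFunction, this]

lemma lambert_hasSum {p : ℕ} (χ : DirichletCharacter ℂ p) {t : ℝ} (h0 : 0 < t) (h1 : t < 1) :
    HasSum (fun n : ℕ+ => DirichletCharacter.zetaMul χ n * (t : ℂ) ^ (n : ℕ))
      (∑' i : ℕ, χ ((i + 1 : ℕ) : ZMod p) * ((t ^ (i + 1) / (1 - t ^ (i + 1)) : ℝ) : ℂ)) := by
  have hn : ‖(t : ℂ)‖ < 1 := by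
    rw [Complex.norm_real, Real.norm_of_nonneg h0.le]; exact h1
  set f : ℕ+ × ℕ+ → ℂ := fun c => χ ((c.1 : ℕ) : ZMod p) * (t : ℂ) ^ (c.1 * c.2 : ℕ) with hf
  have hs : Summable f := by
    refine Summable.of_norm_bounded (summable_prod_mul_pow 0 hn).norm fun c => ?_
    simp only [hf, norm_mul, pow_zero, one_mul]
    exact mul_le_of_le_one_left (norm_nonneg _) (χ.norm_le_one _)
  have e1 : ∑' c, f c = ∑' i : ℕ, χ ((i + 1 : ℕ) : ZMod p) *
      ((t ^ (i + 1) / (1 - t ^ (i + 1)) : ℝ) : ℂ) := by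
    rw [hs.tsum_prod, ← tsum_pnat_eq_tsum_succ (f := fun i : ℕ => χ (i : ZMod p) *
      ((t ^ i / (1 - t ^ i) : ℝ) : ℂ))]
    refine tsum_congr fun d => ?_
    simp only [hf]
    rw [tsum_mul_left]
    congr 1
    have hd : ‖(t : ℂ) ^ (d : ℕ)‖ < 1 := by
      rw [norm_pow]; exact pow_lt_one₀ (norm_nonneg _) hn d.ne_zero
    rw [tsum_pnat_eq_tsum_succ (f := fun m : ℕ => (t : ℂ) ^ ((d : ℕ) * m))]
    simp only [pow_mul, pow_succ]
    rw [tsum_mul_right, tsum_geometric_of_norm_lt_one hd]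
    push_cast
    field_simp
  have hs2 := sigmaAntidiagonalEquivProd.summable_iff.2 hs
  have h3 : HasSum (f ∘ sigmaAntidiagonalEquivProd) (∑' c, f c) :=
    sigmaAntidiagonalEquivProd.hasSum_iff.2 hs.hasSum
  rw [← e1]
  refine h3.sigma fun n => ?_
  have := hasSum_fintype (fun x : (n : ℕ).divisorsAntidiagonal =>
    (f ∘ sigmaAntidiagonalEquivProd) ⟨n, x⟩)
  convert this using 1
  rw [zetaMul_eq, Finset.sum_mul, ← Finset.sum_attach]
  refine Finset.sum_congr rfl fun x _ => ?_
  have hx := (Nat.mem_divisorsAntidiagonal.1 x.2).1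
  simp only [hf, Function.comp, sigmaAntidiagonalEquivProd, divisorsAntidiagonalFactors,
    Equiv.coe_fn_mk, PNat.mk_coe]
  rw [hx]

lemma zetaMul_ppow {p : ℕ} [hp : Fact p.Prime] (χ : DirichletCharacter ℂ p) (j : ℕ) :
    DirichletCharacter.zetaMul χ (p ^ j) = 1 := by
  have := zetaMul_eq χ ⟨p ^ j, pow_pos hp.out.pos j⟩
  simp only [PNat.mk_coe] at this
  rw [this, Nat.sum_divisorsAntidiagonal (fun i _ => χ (i : ZMod p)),
    Nat.sum_divisors_prime_pow hp.out, Finset.sum_range_succ']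
  simp [MulChar.map_zero]

lemma lambert_ge {p : ℕ} [hp : Fact p.Prime] {χ : DirichletCharacter ℂ p} (hχ : χ ^ 2 = 1)
    {t : ℝ} (h0 : 0 < t) (h1 : t < 1) (J : ℕ) :
    ∑ j ∈ range J, t ^ (p ^ j) ≤
    (∑' i : ℕ, χ ((i + 1 : ℕ) : ZMod p) * ((t ^ (i + 1) / (1 - t ^ (i + 1)) : ℝ) : ℂ)).re := by
  have h := Complex.hasSum_re (lambert_hasSum χ h0 h1)
  have hinj : Function.Injective (fun j : ℕ => (⟨p ^ j, pow_pos hp.out.pos j⟩ : ℕ+)) := by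
    intro a b hab
    have : p ^ a = p ^ b := congrArg PNat.val hab
    exact Nat.pow_right_injective hp.out.two_le this
  have hnn : ∀ n : ℕ+, 0 ≤ (DirichletCharacter.zetaMul χ n * (t : ℂ) ^ (n : ℕ)).re := by
    intro n
    have := DirichletCharacter.zetaMul_nonneg hχ (n : ℕ)
    rw [← Complex.ofReal_pow, Complex.re_mul_ofReal]
    exact mul_nonneg (Complex.le_def.1 this).1 (by positivity)
  have h2 := sum_le_hasSum ((range J).map (⟨_, hinj⟩ : ℕ ↪ ℕ+)) (fun n _ => hnn n) h
  refine le_trans (le_of_eq ?_) h2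
  rw [Finset.sum_map]
  refine Finset.sum_congr rfl fun j _ => ?_
  change t ^ p ^ j = (DirichletCharacter.zetaMul χ (p ^ j) * (t : ℂ) ^ (p ^ j)).re
  rw [zetaMul_ppow, one_mul, ← Complex.ofReal_pow, Complex.ofReal_re]

/-- Abel summation bound. -/
lemma abel_bound {f : ℕ → ℝ} {g : ℕ → ℂ} {B : ℝ} (hf : Antitone f) (hf0 : ∀ n, 0 ≤ f n)
    (hg : ∀ n, ‖∑ i ∈ range n, g i‖ ≤ B) (n : ℕ) : ‖∑ i ∈ range n, f i • g i‖ ≤ B * f 0 := by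
  have hB : 0 ≤ B := (norm_nonneg _).trans (hg 0)
  rw [Finset.sum_range_by_parts]
  refine (norm_sub_le _ _).trans ?_
  have h1 : ‖f (n - 1) • ∑ i ∈ range n, g i‖ ≤ f (n - 1) * B := by
    rw [norm_smul, Real.norm_of_nonneg (hf0 _)]
    exact mul_le_mul_of_nonneg_left (hg _) (hf0 _)
  have h2 : ‖∑ i ∈ range (n - 1), (f (i + 1) - f i) • ∑ i ∈ range (i + 1), g i‖ ≤
      ∑ i ∈ range (n - 1), (f i - f (i + 1)) * B := by
    refine (norm_sum_le _ _).trans (Finset.sum_le_sum fun i _ => ?_)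
    have := hf (Nat.le_succ i)
    rw [norm_smul, Real.norm_eq_abs, abs_sub_comm, abs_of_nonneg (by simpa using this)]
    exact mul_le_mul_of_nonneg_left (hg _) (by simpa using this)
  rw [← Finset.sum_mul, Finset.sum_range_sub'] at h2
  nlinarith

/-- geometric sum AM-GM -/
lemma geom_ge {r : ℝ} (h0 : 0 < r) (n : ℕ) :
    n * r ^ (n - 1) ≤ ∑ i ∈ range n, (r ^ 2) ^ i := by
  have h2 : 2 * ∑ i ∈ range n, (r ^ 2) ^ i = ∑ i ∈ range n, ((r ^ 2) ^ i + (r ^ 2) ^ (n - 1 - i)) := by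
    rw [Finset.sum_add_distrib, Finset.sum_range_reflect (fun i => (r ^ 2) ^ i) n]; ring
  have h3 : ∑ i ∈ range n, 2 * r ^ (n - 1) ≤
      ∑ i ∈ range n, ((r ^ 2) ^ i + (r ^ 2) ^ (n - 1 - i)) := by
    refine Finset.sum_le_sum fun i hi => ?_
    have hi := Finset.mem_range.1 hi
    have : r ^ (n - 1) = r ^ i * r ^ (n - 1 - i) := by
      rw [← pow_add]; congr 1; omega
    rw [this, ← pow_mul, ← pow_mul, mul_comm 2 i, mul_comm 2 (n - 1 - i), pow_mul, pow_mul]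
    nlinarith [sq_nonneg (r ^ i - r ^ (n - 1 - i))]
  simp only [Finset.sum_const, Finset.card_range, nsmul_eq_mul] at h3
  linarith

/-- The sequence of Monsky, index shifted by one. -/
noncomputable def bb (t : ℝ) (i : ℕ) : ℝ :=
  1 / ((i + 1 : ℕ) * (1 - t)) - t ^ (i + 1) / (1 - t ^ (i + 1))

lemma bb_zero {t : ℝ} (h1 : t < 1) : bb t 0 = 1 := by
  have : 1 - t ≠ 0 := by linarith
  simp only [bb]; norm_num; field_simp

lemma bb_eq {t : ℝ} (h0 : 0 < t) (h1 : t < 1) (i : ℕ) :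
    bb t i = (1 / (i + 1 : ℕ) - t ^ (i + 1) / ∑ j ∈ range (i + 1), t ^ j) / (1 - t) := by
  have h := mul_neg_geom_sum t (i + 1)
  have : 1 - t ≠ 0 := by linarith
  have hp : 0 < ∑ j ∈ range (i + 1), t ^ j := Finset.sum_pos (fun j _ => by positivity) (by simp)
  rw [bb, ← h, sub_div]
  field_simp

lemma bb_anti {r : ℝ} (h0 : 0 < r) (h1 : r < 1) : Antitone (bb (r ^ 2)) := by
  refine antitone_nat_of_succ_le fun i => ?_
  have t1 : r ^ 2 < 1 := by nlinarith
  have t0 : 0 < r ^ 2 := by positivity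
  rw [bb_eq t0 t1, bb_eq t0 t1]
  refine div_le_div_of_nonneg_right ?_ (by linarith)
  have g1 := geom_ge h0 (i + 1)
  have g2 := geom_ge h0 (i + 1 + 1)
  have e1 : ∑ j ∈ range (i + 1 + 1), (r ^ 2) ^ j = (∑ j ∈ range (i + 1), (r ^ 2) ^ j) * r ^ 2 + 1 :=
    by rw [geom_sum_succ]; ring
  set A := ∑ j ∈ range (i + 1), (r ^ 2) ^ j with hA
  have hAp : 0 < A := Finset.sum_pos (fun j _ => by positivity) (by simp)
  set A' := ∑ j ∈ range (i + 1 + 1), (r ^ 2) ^ j with hA'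
  have hAp' : 0 < A' := Finset.sum_pos (fun j _ => by positivity) (by simp)
  have e2 : (r ^ 2) ^ (i + 1) / A - (r ^ 2) ^ (i + 1 + 1) / A' = (r ^ 2) ^ (i + 1) / (A * A') := by
    rw [div_sub_div _ _ hAp.ne' hAp'.ne']
    congr 1
    rw [e1]; ring
  have e3 : (1 : ℝ) / (i + 1 : ℕ) - 1 / (i + 1 + 1 : ℕ) = 1 / ((i + 1 : ℕ) * (i + 1 + 1 : ℕ)) := by
    push_cast; field_simp; ring
  have key : (r ^ 2) ^ (i + 1) / (A * A') ≤ 1 / ((i + 1 : ℕ) * (i + 1 + 1 : ℕ)) := by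
    rw [div_le_div_iff₀ (by positivity) (by positivity), one_mul]
    have h5 : ((i + 1 : ℕ) * r ^ (i + 1 - 1)) * ((i + 1 + 1 : ℕ) * r ^ (i + 1 + 1 - 1)) ≤ A * A' :=
      mul_le_mul g1 g2 (by positivity) hAp.le
    refine le_trans ?_ h5
    simp only [Nat.add_sub_cancel]
    have : (r ^ 2) ^ (i + 1) ≤ r ^ i * r ^ (i + 1) := by
      rw [← pow_mul, ← pow_add]
      exact pow_le_pow_of_le_one h0.le h1.le (by omega)
    have h6 : (0 : ℝ) ≤ (i + 1 : ℕ) * (i + 1 + 1 : ℕ) := by positivity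
    nlinarith [mul_le_mul_of_nonneg_right this h6]
  linarith

lemma bb_nonneg {t : ℝ} (h0 : 0 < t) (h1 : t < 1) (i : ℕ) : 0 ≤ bb t i := by
  rw [bb_eq h0 h1]
  refine div_nonneg ?_ (by linarith)
  have hp : 0 < ∑ j ∈ range (i + 1), t ^ j := Finset.sum_pos (fun j _ => by positivity) (by simp)
  rw [sub_nonneg, div_le_div_iff₀ hp (by positivity), one_mul]
  have : ∑ j ∈ range (i + 1), t ^ (i + 1) ≤ ∑ j ∈ range (i + 1), t ^ j :=
    Finset.sum_le_sum fun j hj => pow_le_pow_of_le_one h0.le h1.le (by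
      have := Finset.mem_range.1 hj; omega)
  simp only [Finset.sum_const, Finset.card_range, nsmul_eq_mul] at this
  linarith

end KF

namespace KF

open Topology

lemma lam_le {t : ℝ} (h0 : 0 < t) (h1 : t < 1) (i : ℕ) :
    t ^ (i + 1) / (1 - t ^ (i + 1)) ≤ t ^ i / (1 - t) := by
  have a : t ^ (i + 1) ≤ t := by
    have := pow_le_one₀ (n := i) h0.le h1.le
    rw [pow_succ]; nlinarith
  apply div_le_div₀ (by positivity) _ (by linarith) (by linarith)
  exact pow_le_pow_of_le_one h0.le h1.le (by omega)

lemma lam_nonneg {t : ℝ} (h0 : 0 < t) (h1 : t < 1) (i : ℕ) :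
    0 ≤ t ^ (i + 1) / (1 - t ^ (i + 1)) := by
  have a : t ^ (i + 1) ≤ t := by
    have := pow_le_one₀ (n := i) h0.le h1.le
    rw [pow_succ]; nlinarith
  exact div_nonneg (by positivity) (by linarith)

lemma wt_le_one {u : ℝ} (hu : 1 ≤ u) (i : ℕ) : ((i + 1 : ℕ) : ℝ) ^ (-(u - 1)) ≤ 1 :=
  Real.rpow_le_one_of_one_le_of_nonpos (by push_cast; linarith [Nat.cast_nonneg (α := ℝ) i])
    (by linarith)

lemma dd_bound {p : ℕ} (χ : DirichletCharacter ℂ p) {t : ℝ} (h0 : 0 < t) (h1 : t < 1) {u : ℝ}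
    (hu : 1 ≤ u) (i : ℕ) :
    ‖χ ((i + 1 : ℕ) : ZMod p) * ((((i + 1 : ℕ) : ℝ) ^ (-(u - 1)) *
      (t ^ (i + 1) / (1 - t ^ (i + 1))) : ℝ) : ℂ)‖ ≤ t ^ i / (1 - t) := by
  have hl := lam_nonneg h0 h1 i
  have hw : 0 ≤ ((i + 1 : ℕ) : ℝ) ^ (-(u - 1)) := by positivity
  rw [norm_mul, Complex.norm_real, Real.norm_of_nonneg (mul_nonneg hw hl)]
  calc _ ≤ 1 * (1 * (t ^ i / (1 - t))) := by
        apply mul_le_mul (χ.norm_le_one _) _ (mul_nonneg hw hl) zero_le_one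
        exact mul_le_mul (wt_le_one hu i) (lam_le h0 h1 i) hl zero_le_one
    _ = _ := by ring

lemma summable_bd {t : ℝ} (h0 : 0 < t) (h1 : t < 1) : Summable fun i : ℕ => t ^ i / (1 - t) :=
  (summable_geometric_of_lt_one h0.le h1).div_const _

lemma hasSum_of_eq_fun {f g : ℕ → ℂ} {a : ℂ} (h : HasSum g a) (e : ∀ i, f i = g i) :
    HasSum f a := by
  rwa [show f = g from funext e]

lemma LL_hasSum {p : ℕ} [hp : Fact p.Prime] (χ : DirichletCharacter ℂ p) {u : ℝ} (hu : 1 < u) :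
    HasSum (fun i : ℕ => χ ((i + 1 : ℕ) : ZMod p) * ((((i + 1 : ℕ) : ℝ) ^ (-u) : ℝ) : ℂ))
      (LL χ u) := by
  have hre : 1 < (u : ℂ).re := by simpa
  have h := (DirichletCharacter.LSeriesSummable_of_one_lt_re χ hre).hasSum
  have h2 := (hasSum_nat_add_iff' 1).2 h
  simp only [Finset.range_one, Finset.sum_singleton, LSeries.term_zero, sub_zero] at h2
  refine hasSum_of_eq_fun h2 fun i => ?_
  rw [LSeries.term_of_ne_zero (by omega), Complex.ofReal_cpow (by positivity), div_eq_mul_inv,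
    ← Complex.cpow_neg]
  push_cast
  rfl

lemma monsky_u {p : ℕ} [hp : Fact p.Prime] {χ : DirichletCharacter ℂ p} (hχ : χ ≠ 1) {r u : ℝ}
    (h0 : 0 < r) (h1 : r < 1) (hu : 1 < u) :
    ‖LL χ u * ((1 - r ^ 2)⁻¹ : ℝ) - ∑' i : ℕ, χ ((i + 1 : ℕ) : ZMod p) *
      ((((i + 1 : ℕ) : ℝ) ^ (-(u - 1)) *
      ((r ^ 2) ^ (i + 1) / (1 - (r ^ 2) ^ (i + 1))) : ℝ) : ℂ)‖ ≤ p := by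
  have t1 : r ^ 2 < 1 := by nlinarith
  have t0 : 0 < r ^ 2 := by positivity
  set t := r ^ 2 with ht
  have hsum : Summable fun i : ℕ => χ ((i + 1 : ℕ) : ZMod p) * ((((i + 1 : ℕ) : ℝ) ^ (-(u - 1)) *
      (t ^ (i + 1) / (1 - t ^ (i + 1))) : ℝ) : ℂ) :=
    Summable.of_norm_bounded (summable_bd t0 t1) (dd_bound χ t0 t1 hu.le)
  have H := ((LL_hasSum χ hu).mul_right (((1 - t)⁻¹ : ℝ) : ℂ)).sub hsum.hasSum
  set f : ℕ → ℝ := fun i => ((i + 1 : ℕ) : ℝ) ^ (-(u - 1)) * bb t i with hf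
  have hfa : Antitone f := by
    intro a b hab
    refine mul_le_mul ?_ (bb_anti h0 h1 hab) (bb_nonneg t0 t1 _) (by positivity)
    exact Real.rpow_le_rpow_of_nonpos (by positivity) (by exact_mod_cast Nat.succ_le_succ hab)
      (by linarith)
  have hf0 : ∀ n, 0 ≤ f n := fun n => mul_nonneg (by positivity) (bb_nonneg t0 t1 n)
  have hg : ∀ n, ‖∑ i ∈ range n, χ ((i + 1 : ℕ) : ZMod p)‖ ≤ p := by
    intro n
    have h := char_sum_bound hχ (n + 1)
    rw [Finset.sum_range_succ'] at h
    simpa [MulChar.map_zero] using h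
  have H2 : HasSum (fun i => f i • χ ((i + 1 : ℕ) : ZMod p)) (LL χ u * ((1 - t)⁻¹ : ℝ) -
      ∑' i : ℕ, χ ((i + 1 : ℕ) : ZMod p) * ((((i + 1 : ℕ) : ℝ) ^ (-(u - 1)) *
      (t ^ (i + 1) / (1 - t ^ (i + 1))) : ℝ) : ℂ)) := by
    refine hasSum_of_eq_fun H fun i => ?_
    have e : ((i + 1 : ℕ) : ℝ) ^ (-u) = ((i + 1 : ℕ) : ℝ) ^ (-(u - 1)) * (1 / (i + 1 : ℕ)) := by
      rw [one_div, ← Real.rpow_neg_one, ← Real.rpow_add (by positivity)]; congr 1; ring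
    have e2 : f i = ((i + 1 : ℕ) : ℝ) ^ (-u) * (1 - t)⁻¹ - (((i + 1 : ℕ) : ℝ) ^ (-(u - 1)) *
      (t ^ (i + 1) / (1 - t ^ (i + 1)))) := by
      rw [e, hf]
      simp only [bb]
      have : 1 - t ≠ 0 := by linarith
      field_simp
    rw [e2, Complex.real_smul]
    simp only [Complex.ofReal_sub, Complex.ofReal_mul]
    ring
  refine le_of_tendsto H2.tendsto_sum_nat.norm (Eventually.of_forall fun n => ?_)
  have := abel_bound hfa hf0 hg n
  refine this.trans (le_of_eq ?_)
  simp [hf, bb_zero t1]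

lemma quad_eventually {p : ℕ} [hp : Fact p.Prime] {χ : DirichletCharacter ℂ p} (hχ : χ ≠ 1)
    (hχ2 : χ ^ 2 = 1) : ∀ᶠ u : ℝ in 𝓝[>] 1, (p : ℝ) * ((p : ℝ) ^ (4 * p))⁻¹ / 4 ≤ ‖LL χ u‖ := by
  have hp2 : (2 : ℝ) ≤ p := by exact_mod_cast hp.out.two_le
  set E : ℝ := ((p : ℝ) ^ (4 * p))⁻¹ with hE
  have hE0 : 0 < E := by positivity
  have hE1 : E ≤ 1 := by
    rw [hE]; exact inv_le_one_of_one_le₀ (one_le_pow₀ (by linarith))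
  set r := Real.sqrt (1 - E / 2) with hr
  have hr2 : r ^ 2 = 1 - E / 2 := Real.sq_sqrt (by linarith)
  have h0 : 0 < r := Real.sqrt_pos.2 (by linarith)
  have h1 : r < 1 := by nlinarith
  have t1 : r ^ 2 < 1 := by nlinarith
  have t0 : 0 < r ^ 2 := by positivity
  have hl := lambert_ge hχ2 t0 t1 (4 * p)
  have hl2 : (2 * p : ℝ) ≤ ∑ j ∈ range (4 * p), (r ^ 2) ^ (p ^ j) := by
    have : ∑ j ∈ range (4 * p), (1 / 2 : ℝ) ≤ ∑ j ∈ range (4 * p), (r ^ 2) ^ (p ^ j) := by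
      refine Finset.sum_le_sum fun j hj => ?_
      have b := one_add_mul_le_pow (show (-2 : ℝ) ≤ -(E / 2) by linarith) (p ^ j)
      rw [hr2, show 1 - E / 2 = 1 + -(E / 2) by ring]
      refine le_trans ?_ b
      have : (p : ℝ) ^ j ≤ (p : ℝ) ^ (4 * p) :=
        pow_le_pow_right₀ (by linarith) (Finset.mem_range.1 hj).le
      have h3 : (p : ℝ) ^ j * E ≤ 1 := by
        rw [hE, ← div_eq_mul_inv]; exact div_le_one_of_le₀ this (by positivity)
      push_cast
      linarith
    simp only [Finset.sum_const, Finset.card_range, nsmul_eq_mul] at this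
    push_cast at this
    linarith
  have hlim : Tendsto (fun u : ℝ => ∑' i : ℕ, χ ((i + 1 : ℕ) : ZMod p) *
      ((((i + 1 : ℕ) : ℝ) ^ (-(u - 1)) *
      ((r ^ 2) ^ (i + 1) / (1 - (r ^ 2) ^ (i + 1))) : ℝ) : ℂ)) (𝓝[>] 1)
      (𝓝 (∑' i : ℕ, χ ((i + 1 : ℕ) : ZMod p) *
        (((r ^ 2) ^ (i + 1) / (1 - (r ^ 2) ^ (i + 1)) : ℝ) : ℂ))) := by
    refine tendsto_tsum_of_dominated_convergence (summable_bd t0 t1) (fun i => ?_) ?_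
    · have hc : Continuous fun u : ℝ => χ ((i + 1 : ℕ) : ZMod p) *
        ((((i + 1 : ℕ) : ℝ) ^ (-(u - 1)) *
        ((r ^ 2) ^ (i + 1) / (1 - (r ^ 2) ^ (i + 1))) : ℝ) : ℂ) := by
        refine continuous_const.mul (Complex.continuous_ofReal.comp (Continuous.mul ?_
          continuous_const))
        exact Real.continuous_const_rpow (by positivity) |>.comp (by fun_prop)
      have := (hc.tendsto 1).mono_left (nhdsWithin_le_nhds (s := Set.Ioi (1 : ℝ)))
      simpa using this
    · filter_upwards [self_mem_nhdsWithin] with u hu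
      exact dd_bound χ t0 t1 (le_of_lt hu)
  have hlim2 := (Complex.continuous_re.tendsto _).comp hlim
  have hev := hlim2.eventually (lt_mem_nhds (show (3 / 2 * p : ℝ) < _ from
    lt_of_lt_of_le (by linarith) (hl2.trans hl)))
  filter_upwards [hev, self_mem_nhdsWithin] with u h2 hu
  have hm := monsky_u hχ h0 h1 hu
  simp only [Function.comp] at h2
  set D := ∑' i : ℕ, χ ((i + 1 : ℕ) : ZMod p) *
      ((((i + 1 : ℕ) : ℝ) ^ (-(u - 1)) *
      ((r ^ 2) ^ (i + 1) / (1 - (r ^ 2) ^ (i + 1))) : ℝ) : ℂ) with hD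
  have h3 : ‖D‖ - ‖LL χ u * ((1 - r ^ 2)⁻¹ : ℝ)‖ ≤ p := by
    rw [norm_sub_rev] at hm
    exact (norm_sub_norm_le _ _).trans hm
  have h4 : (3 / 2 * p : ℝ) < ‖D‖ := h2.trans_le (Complex.re_le_norm D)
  rw [norm_mul, Complex.norm_real, Real.norm_of_nonneg (inv_nonneg.2 (by linarith))] at h3
  have h5 : (p / 2 : ℝ) ≤ ‖LL χ u‖ * (1 - r ^ 2)⁻¹ := by linarith
  rw [← div_eq_mul_inv, le_div_iff₀ (by linarith), hr2] at h5
  linarith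

lemma quad_lower {p : ℕ} [hp : Fact p.Prime] {χ : DirichletCharacter ℂ p} (hχ : χ ≠ 1)
    (hχ2 : χ ^ 2 = 1) {u : ℝ} (hu : 1 < u) (hu2 : u ≤ 1 + ((p : ℝ) ^ (4 * p))⁻¹ / 72) :
    ((p : ℝ) ^ (4 * p))⁻¹ / 8 ≤ ‖LL χ u‖ := by
  have hp2 : (2 : ℝ) ≤ p := by exact_mod_cast hp.out.two_le
  have h := quad_eventually hχ hχ2
  set E : ℝ := ((p : ℝ) ^ (4 * p))⁻¹ with hE
  have hE0 : 0 < E := by positivity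
  have hE1 : E ≤ 1 := by
    rw [hE]; exact inv_le_one_of_one_le₀ (one_le_pow₀ (by linarith))
  obtain ⟨v, hv, hv1, hvu⟩ := (h.and (Ioo_mem_nhdsGT hu)).exists
  have hl := LL_lip hχ hv1 hvu.le (by linarith)
  have := norm_sub_norm_le (LL χ v) (LL χ u)
  have h6 : 9 * p * (u - v) ≤ 9 * p * (E / 72) := by gcongr; linarith
  nlinarith

end KF

namespace KF

open Topology

lemma zeta_bounds : ∃ c : ℝ, 0 < c ∧ c ≤ 1 ∧ ∀ u : ℝ, 1 < u → u ≤ 1 + c →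
    1 / (2 * (u - 1)) ≤ ‖riemannZeta u‖ ∧ ‖riemannZeta u‖ ≤ 2 / (u - 1) := by
  have h1 : Tendsto (fun u : ℝ => (u : ℂ)) (𝓝[>] 1) (𝓝[≠] 1) := by
    refine tendsto_nhdsWithin_of_tendsto_nhds_of_eventually_within _ ?_ ?_
    · have := (Complex.continuous_ofReal.tendsto 1).mono_left
        (nhdsWithin_le_nhds (s := Set.Ioi (1 : ℝ)))
      simpa using this
    · filter_upwards [self_mem_nhdsWithin] with u hu
      have : u ≠ 1 := ne_of_gt hu
      simpa using this
  have h2 := (riemannZeta_residue_one.comp h1).norm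
  rw [norm_one] at h2
  have h3 := (h2.eventually (lt_mem_nhds (show (1 / 2 : ℝ) < 1 by norm_num))).and
    (h2.eventually (gt_mem_nhds (show (1 : ℝ) < 2 by norm_num)))
  obtain ⟨b, hb, hs⟩ := (mem_nhdsGT_iff_exists_Ioc_subset).1 h3
  have hb : 1 < b := hb
  refine ⟨min (b - 1) 1, lt_min (by linarith) one_pos, min_le_right _ _, fun u hu hu2 => ?_⟩
  have hub : u ≤ b := by linarith [min_le_left (b - 1) 1]
  have h4 := hs ⟨hu, hub⟩
  simp only [Function.comp, Set.mem_setOf_eq] at h4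
  rw [norm_mul, show ((u : ℂ) - 1) = ((u - 1 : ℝ) : ℂ) by push_cast; ring, Complex.norm_real,
    Real.norm_of_nonneg (by linarith)] at h4
  have : 0 < u - 1 := by linarith
  constructor
  · rw [div_le_iff₀ (by linarith)]; linarith
  · rw [le_div_iff₀ (by linarith)]; linarith

lemma LL_one {p : ℕ} [hp : Fact p.Prime] {u : ℝ} (hu : 1 < u) :
    ‖riemannZeta u‖ / 2 ≤ ‖LL (1 : DirichletCharacter ℂ p) u‖ ∧
    ‖LL (1 : DirichletCharacter ℂ p) u‖ ≤ ‖riemannZeta u‖ := by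
  have hre : 1 < (u : ℂ).re := by simpa
  have e : LL (1 : DirichletCharacter ℂ p) u = (1 - (p : ℂ) ^ (-(u : ℂ))) * riemannZeta u := by
    have h1 := DirichletCharacter.LFunctionTrivChar_eq_mul_riemannZeta (N := p) (s := (u : ℂ))
      (by have : u ≠ 1 := hu.ne'
          exact_mod_cast this)
    rw [DirichletCharacter.LFunctionTrivChar, DirichletCharacter.LFunction_eq_LSeries _ hre,
      Nat.Prime.primeFactors hp.out, Finset.prod_singleton] at h1
    exact h1
  have hp2 : (2 : ℝ) ≤ p := by exact_mod_cast hp.out.two_le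
  have e2 : (1 - (p : ℂ) ^ (-(u : ℂ))) = ((1 - (p : ℝ) ^ (-u) : ℝ) : ℂ) := by
    push_cast [Complex.ofReal_cpow (show (0 : ℝ) ≤ p by positivity)]
    rfl
  have h3 : (p : ℝ) ^ (-u) ≤ 1 / 2 := by
    calc (p : ℝ) ^ (-u) ≤ (p : ℝ) ^ (-1 : ℝ) :=
          Real.rpow_le_rpow_of_exponent_le (by linarith) (by linarith)
      _ = (p : ℝ)⁻¹ := Real.rpow_neg_one _
      _ ≤ 1 / 2 := by rw [one_div]; exact inv_anti₀ (by norm_num) hp2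
  have h4 : 0 < (p : ℝ) ^ (-u) := by positivity
  rw [e, e2, norm_mul, Complex.norm_real, Real.norm_of_nonneg (by linarith)]
  have := norm_nonneg (riemannZeta u)
  constructor <;> nlinarith

lemma three_four_one {p : ℕ} [hp : Fact p.Prime] (χ : DirichletCharacter ℂ p) {u : ℝ}
    (hu : 1 < u) :
    1 ≤ ‖LL (1 : DirichletCharacter ℂ p) u‖ ^ 3 * ‖LL χ u‖ ^ 4 * ‖LL (χ ^ 2) u‖ := by
  have h := DirichletCharacter.norm_LSeries_product_ge_one χ (x := u - 1) (by linarith) 0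
  have e : (1 : ℂ) + ((u - 1 : ℝ) : ℂ) = u := by push_cast; ring
  simp only [Complex.ofReal_zero, mul_zero, add_zero, e, norm_mul, norm_pow] at h
  exact h

lemma complex_lower : ∃ c : ℝ, 0 < c ∧ c ≤ 1 ∧ ∀ (p : ℕ) [hp : Fact p.Prime]
    (χ : DirichletCharacter ℂ p), χ ^ 2 ≠ 1 → ∀ u : ℝ, 1 < u → u ≤ 1 + c / (p : ℝ) ^ 5 →
    c / (p : ℝ) ^ 5 ≤ ‖LL χ u‖ := by
  obtain ⟨c0, h0, h01, hz⟩ := zeta_bounds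
  refine ⟨min c0 (1 / (8 * 18 ^ 4)), by positivity, (min_le_left _ _).trans h01, ?_⟩
  intro p hp χ hχ u hu hu2
  set c := min c0 (1 / (8 * 18 ^ 4)) with hc
  have hc0 : 0 < c := by positivity
  have hχ1 : χ ≠ 1 := by rintro rfl; simp at hχ
  have hp2 : (2 : ℝ) ≤ p := by exact_mod_cast hp.out.two_le
  set η := c / (p : ℝ) ^ 5 with hη
  have hη0 : 0 < η := by positivity
  have hηc : η ≤ c := div_le_self hc0.le (one_le_pow₀ (by linarith))
  have hcc0 : c ≤ c0 := min_le_left _ _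
  have h341 := three_four_one χ (u := 1 + η) (by linarith)
  have b1 : ‖LL (1 : DirichletCharacter ℂ p) (1 + η)‖ ≤ 2 / η := by
    have := (hz (1 + η) (by linarith) (by linarith)).2
    rw [add_sub_cancel_left] at this
    exact (LL_one (by linarith)).2.trans this
  have b2 := LL_le hχ (u := 1 + η) (by linarith)
  set X := ‖LL χ (1 + η)‖ with hX
  have hX0 : 0 ≤ X := norm_nonneg _
  have h5 : 1 ≤ (2 / η) ^ 3 * X ^ 4 * p := by
    refine h341.trans ?_
    gcongr
  have h6 : η * p ^ 5 ≤ 1 / (8 * 18 ^ 4) := by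
    rw [hη, div_mul_cancel₀ _ (by positivity)]; exact min_le_right _ _
  have h7 : 18 * p * η ≤ X := by
    by_contra hlt
    push Not at hlt
    have h8 : X ^ 4 < (18 * p * η) ^ 4 := pow_lt_pow_left₀ hlt hX0 (by norm_num)
    have h9 : (2 / η) ^ 3 * X ^ 4 * p < (2 / η) ^ 3 * (18 * p * η) ^ 4 * p := by
      have : (0 : ℝ) < p := by linarith
      gcongr
    have h10 : (2 / η) ^ 3 * (18 * p * η) ^ 4 * p = 8 * 18 ^ 4 * (η * p ^ 5) := by
      field_simp; ring
    rw [h10] at h9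
    have : 8 * 18 ^ 4 * (η * (p : ℝ) ^ 5) ≤ 1 := by
      rw [le_div_iff₀ (by norm_num)] at h6; linarith
    linarith
  have hl := LL_lip hχ1 hu hu2 (by linarith)
  rw [norm_sub_rev] at hl
  have h11 := norm_sub_norm_le (LL χ (1 + η)) (LL χ u)
  have h12 : 9 * p * (1 + η - u) ≤ 9 * p * η := by gcongr; linarith
  have h13 : 0 < p * η := by positivity
  nlinarith

lemma log_bounds : ∃ c : ℝ, 0 < c ∧ c ≤ 1 ∧ ∀ (p : ℕ) [hp : Fact p.Prime]
    (χ : DirichletCharacter ℂ p), χ ≠ 1 → ∀ u : ℝ, 1 < u →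
    u ≤ 1 + c * ((p : ℝ) ^ (4 * p))⁻¹ →
    |Real.log ‖LL χ u‖| ≤ 4 * p * Real.log p - Real.log c := by
  obtain ⟨c1, h0, h01, hz⟩ := complex_lower
  refine ⟨min c1 (1 / 72), by positivity, (min_le_left _ _).trans h01, ?_⟩
  intro p hp χ hχ u hu hu2
  set c := min c1 (1 / 72) with hc
  have hc0 : 0 < c := by positivity
  have hc1 : c ≤ c1 := min_le_left _ _
  have hc2 : c ≤ 1 / 72 := min_le_right _ _
  have hp2 : (2 : ℝ) ≤ p := by exact_mod_cast hp.out.two_le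
  have hlp : 0 ≤ Real.log p := Real.log_nonneg (by linarith)
  set E : ℝ := ((p : ℝ) ^ (4 * p))⁻¹ with hE
  have hE0 : 0 < E := by positivity
  have hE5 : E ≤ 1 / (p : ℝ) ^ 5 := by
    rw [hE, one_div]
    exact inv_anti₀ (by positivity) (pow_le_pow_right₀ (by linarith) (by
      have := hp.out.two_le; omega))
  have hlow : c * E ≤ ‖LL χ u‖ := by
    by_cases h2 : χ ^ 2 = 1
    · have := quad_lower hχ h2 hu (by nlinarith)
      nlinarith
    · have : c * E ≤ c1 / (p : ℝ) ^ 5 := by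
        calc c * E ≤ c1 * (1 / (p : ℝ) ^ 5) := by gcongr
          _ = _ := by ring
      exact this.trans (hz p χ h2 u hu (by linarith))
  have hL : 0 < ‖LL χ u‖ := lt_of_lt_of_le (by positivity) hlow
  have hup := LL_le hχ hu
  have a1 := Real.log_le_log (by positivity) hlow
  have a2 := Real.log_le_log hL hup
  rw [Real.log_mul hc0.ne' hE0.ne', hE, Real.log_inv, Real.log_pow] at a1
  push_cast at a1
  have hlc : Real.log c ≤ 0 := Real.log_nonpos hc0.le (by linarith)
  rw [abs_le]
  constructor
  · linarith
  · nlinarith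

/-- The prime sum attached to a character. -/
noncomputable def PP {p : ℕ} (χ : DirichletCharacter ℂ p) (u : ℝ) : ℂ :=
  ∑' q : Nat.Primes, χ ((q : ℕ) : ZMod p) * (((q : ℕ) : ℝ) ^ (-u) : ℝ)

noncomputable def KK : ℝ := ∑' q : Nat.Primes, ((q : ℕ) : ℝ) ^ (-2 : ℝ)

lemma PP_summable {p : ℕ} (χ : DirichletCharacter ℂ p) {u : ℝ} (hu : 1 < u) :
    Summable fun q : Nat.Primes => χ ((q : ℕ) : ZMod p) * ((((q : ℕ) : ℝ) ^ (-u) : ℝ) : ℂ) := by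
  refine Summable.of_norm_bounded (Nat.Primes.summable_rpow.2 (show -u < -1 by linarith))
    fun q => ?_
  rw [norm_mul, Complex.norm_real, Real.norm_of_nonneg (by positivity)]
  exact mul_le_of_le_one_left (by positivity) (χ.norm_le_one _)

lemma log_LL {p : ℕ} [hp : Fact p.Prime] (χ : DirichletCharacter ℂ p) {u : ℝ} (hu : 1 < u) :
    |Real.log ‖LL χ u‖ - (PP χ u).re| ≤ KK := by
  have hre : 1 < (u : ℂ).re := by simpa
  have h := DirichletCharacter.LSeries_eulerProduct_exp_log χ hre
  have hs := DirichletCharacter.summable_neg_log_one_sub_mul_prime_cpow χ hre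
  have e : Real.log ‖LL χ u‖ =
      (∑' q : Nat.Primes, -Complex.log (1 - χ q * (q : ℂ) ^ (-(u : ℂ)))).re := by
    rw [LL, ← h, Complex.norm_exp, Real.log_exp]
  rw [e, PP, ← Complex.sub_re, ← hs.tsum_sub (PP_summable χ hu)]
  refine (Complex.abs_re_le_norm _).trans ?_
  refine tsum_of_norm_bounded (Nat.Primes.summable_rpow.2 (show (-2 : ℝ) < -1 by norm_num)).hasSum
    fun q => ?_
  have hq2 : (2 : ℝ) ≤ (q : ℕ) := by exact_mod_cast q.2.two_le
  have ec : ((q : ℕ) : ℂ) ^ (-(u : ℂ)) = ((((q : ℕ) : ℝ) ^ (-u) : ℝ) : ℂ) := by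
    push_cast [Complex.ofReal_cpow (show (0 : ℝ) ≤ (q : ℕ) by positivity)]
    rfl
  rw [ec]
  set z := χ ((q : ℕ) : ZMod p) * ((((q : ℕ) : ℝ) ^ (-u) : ℝ) : ℂ) with hz
  have hzn : ‖z‖ ≤ ((q : ℕ) : ℝ)⁻¹ := by
    rw [hz, norm_mul, Complex.norm_real, Real.norm_of_nonneg (by positivity)]
    refine (mul_le_of_le_one_left (by positivity) (χ.norm_le_one _)).trans ?_
    rw [← Real.rpow_neg_one]
    exact Real.rpow_le_rpow_of_exponent_le (by linarith) (by linarith)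
  have hzh : ‖z‖ ≤ 1 / 2 := hzn.trans (by rw [one_div]; exact inv_anti₀ (by norm_num) hq2)
  have hb := Complex.norm_log_one_add_sub_self_le (z := -z) (by rw [norm_neg]; linarith)
  rw [norm_neg] at hb
  have e2 : -Complex.log (1 - z) - z = -(Complex.log (1 + -z) - -z) := by ring_nf
  rw [e2, norm_neg]
  refine hb.trans ?_
  have h3 : (1 - ‖z‖)⁻¹ ≤ 2 := by
    rw [inv_le_comm₀ (by linarith) (by norm_num)]; linarith
  have h4 : ((q : ℕ) : ℝ) ^ (-2 : ℝ) = (((q : ℕ) : ℝ)⁻¹) ^ 2 := by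
    rw [Real.rpow_neg (by positivity), inv_pow]; norm_num
  rw [h4]
  calc ‖z‖ ^ 2 * (1 - ‖z‖)⁻¹ / 2 ≤ ‖z‖ ^ 2 * 2 / 2 := by gcongr
    _ = ‖z‖ ^ 2 := by ring
    _ ≤ _ := by gcongr

end KF

namespace KF

noncomputable def SS (p : ℕ) (u : ℝ) : ℝ :=
  ∑' q : Nat.Primes, if ((q : ℕ) : ZMod p) = -1 then ((q : ℕ) : ℝ) ^ (-u) else 0

lemma SS_summable (p : ℕ) {u : ℝ} (hu : 1 < u) : Summable fun q : Nat.Primes =>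
    if ((q : ℕ) : ZMod p) = -1 then ((q : ℕ) : ℝ) ^ (-u) else 0 := by
  refine Summable.of_norm_bounded (Nat.Primes.summable_rpow.2 (show -u < -1 by linarith))
    fun q => ?_
  split_ifs
  · rw [Real.norm_of_nonneg (by positivity)]
  · rw [norm_zero]; positivity

lemma SS_nonneg (p : ℕ) (u : ℝ) : 0 ≤ SS p u := by
  refine tsum_nonneg fun q => ?_
  split_ifs
  · positivity
  · exact le_rfl

lemma ortho {p : ℕ} [hp : Fact p.Prime] {u : ℝ} (hu : 1 < u) :
    ((p.totient : ℝ) : ℂ) * (SS p u : ℂ) = ∑ χ : DirichletCharacter ℂ p, χ (-1) * PP χ u := by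
  have hneg : ((-1 : ZMod p))⁻¹ = -1 := by
    rw [inv_neg, inv_one]
  have h := fun b : ZMod p => DirichletCharacter.sum_char_inv_mul_char_eq ℂ (n := p)
    (a := -1) (isUnit_one.neg) b
  simp only [hneg] at h
  have e : ∀ χ : DirichletCharacter ℂ p, χ (-1) * PP χ u = ∑' q : Nat.Primes,
      χ (-1) * (χ ((q : ℕ) : ZMod p) * ((((q : ℕ) : ℝ) ^ (-u) : ℝ) : ℂ)) := fun χ =>
    ((PP_summable χ hu).tsum_mul_left _).symm
  rw [Finset.sum_congr rfl fun χ _ => e χ, ← Summable.tsum_finsetSum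
    fun χ _ => (PP_summable χ hu).mul_left _, SS, Complex.ofReal_tsum, ← tsum_mul_left]
  refine tsum_congr fun q => ?_
  simp only [← mul_assoc]
  rw [← Finset.sum_mul, h]
  by_cases hq : ((q : ℕ) : ZMod p) = -1
  · rw [if_pos hq, if_pos hq.symm]; simp
  · rw [if_neg hq, if_neg (Ne.symm hq)]; simp

lemma chi_neg_one {p : ℕ} (χ : DirichletCharacter ℂ p) : χ (-1) = 1 ∨ χ (-1) = -1 := by
  have : χ (-1) * χ (-1) = 1 := by rw [← map_mul]; simp
  exact mul_self_eq_one_iff.1 this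

lemma KK_nonneg : 0 ≤ KK := tsum_nonneg fun q => by positivity

lemma class_lower : ∃ c C : ℝ, 0 < c ∧ c ≤ 1 ∧ 0 ≤ C ∧ ∀ (p : ℕ) [hp : Fact p.Prime] (u : ℝ),
    1 < u → u ≤ 1 + c * ((p : ℝ) ^ (4 * p))⁻¹ →
    -Real.log (u - 1) - C - p * (4 * p * Real.log p + C) ≤ p * SS p u := by
  obtain ⟨c1, h10, h11, hz⟩ := zeta_bounds
  obtain ⟨c2, h20, h21, hl⟩ := log_bounds
  have hlc : Real.log c2 ≤ 0 := Real.log_nonpos h20.le h21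
  have hl4 : 0 ≤ Real.log 4 := Real.log_nonneg (by norm_num)
  have hK := KK_nonneg
  refine ⟨min c1 c2, Real.log 4 + KK - Real.log c2, lt_min h10 h20, (min_le_left _ _).trans h11,
    by linarith, fun p hp u hu hu' => ?_⟩
  have hp1 : (1 : ℝ) ≤ p := by exact_mod_cast hp.out.one_le
  have hE0 : 0 < ((p : ℝ) ^ (4 * p))⁻¹ := by positivity
  have hE1 : ((p : ℝ) ^ (4 * p))⁻¹ ≤ 1 := inv_le_one_of_one_le₀ (one_le_pow₀ hp1)
  have hlp : 0 ≤ Real.log p := Real.log_nonneg hp1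
  have hu1 : u ≤ 1 + c1 := hu'.trans (by
    nlinarith [min_le_left c1 c2])
  have hu2 : u ≤ 1 + c2 * ((p : ℝ) ^ (4 * p))⁻¹ := hu'.trans (by
    nlinarith [min_le_right c1 c2])
  have hre := congrArg Complex.re (ortho (p := p) hu)
  rw [Complex.re_ofReal_mul, Complex.ofReal_re, Complex.re_sum,
    ← Finset.add_sum_erase _ _ (Finset.mem_univ (1 : DirichletCharacter ℂ p))] at hre
  have h1 : ((1 : DirichletCharacter ℂ p) (-1) * PP (1 : DirichletCharacter ℂ p) u).re =
      (PP (1 : DirichletCharacter ℂ p) u).re := by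
    rw [MulChar.one_apply (isUnit_one.neg), one_mul]
  rw [h1] at hre
  have h2 : ∀ χ ∈ Finset.univ.erase (1 : DirichletCharacter ℂ p),
      -(4 * p * Real.log p - Real.log c2 + KK) ≤ (χ (-1) * PP χ u).re := by
    intro χ hχ
    have hχ1 : χ ≠ 1 := Finset.ne_of_mem_erase hχ
    have a1 := abs_le.1 (hl p χ hχ1 u hu hu2)
    have a2 := abs_le.1 (log_LL χ hu)
    rcases chi_neg_one χ with h | h
    · rw [h, one_mul]; linarith
    · rw [h, neg_one_mul, Complex.neg_re]; linarith
  have h3 := Finset.sum_le_sum h2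
  rw [Finset.sum_const, nsmul_eq_mul] at h3
  have hcard : ((Finset.univ.erase (1 : DirichletCharacter ℂ p)).card : ℝ) ≤ p := by
    have : (Finset.univ.erase (1 : DirichletCharacter ℂ p)).card ≤ p := by
      refine (Finset.card_erase_le).trans ?_
      rw [Finset.card_univ, ← Nat.card_eq_fintype_card,
        DirichletCharacter.card_eq_totient_of_hasEnoughRootsOfUnity]
      exact Nat.totient_le p
    exact_mod_cast this
  have h4 : (p.totient : ℝ) * SS p u ≤ p * SS p u := by
    have := SS_nonneg p u
    have h5 : (p.totient : ℝ) ≤ p := by exact_mod_cast Nat.totient_le p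
    gcongr
  have a2 := abs_le.1 (log_LL (1 : DirichletCharacter ℂ p) hu)
  have hz1 := (hz u hu hu1).1
  have hz2 := (LL_one (p := p) hu).1
  have hpos : 0 < u - 1 := by linarith
  have hlog : -Real.log 4 - Real.log (u - 1) ≤ Real.log ‖LL (1 : DirichletCharacter ℂ p) u‖ := by
    have : Real.log ((4 * (u - 1))⁻¹) ≤ Real.log ‖LL (1 : DirichletCharacter ℂ p) u‖ := by
      refine Real.log_le_log (by positivity) ?_
      refine le_trans ?_ hz2
      have : (4 * (u - 1))⁻¹ = 1 / (2 * (u - 1)) / 2 := by field_simp; norm_num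
      rw [this]; linarith
    rw [Real.log_inv, Real.log_mul (by norm_num) hpos.ne'] at this
    linarith
  have hX : 0 ≤ 4 * p * Real.log p - Real.log c2 + KK := by
    have : 0 ≤ 4 * p * Real.log p := by positivity
    linarith
  have h6 : ((Finset.univ.erase (1 : DirichletCharacter ℂ p)).card : ℝ) *
      (4 * p * Real.log p - Real.log c2 + KK) ≤ p * (4 * p * Real.log p - Real.log c2 + KK) := by
    gcongr
  have h7 : 0 ≤ p * Real.log 4 := by positivity
  linarith

/-- primes up to `N` congruent to `-1` mod `p`. -/
noncomputable def QQ (p N : ℕ) : Finset ℕ :=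
  (Icc 1 N).filter fun q => q.Prime ∧ ((q : ℕ) : ZMod p) = -1

lemma trunc : ∃ c : ℝ, 0 < c ∧ c ≤ 1 ∧ ∀ (p : ℕ) [hp : Fact p.Prime] (u x : ℝ),
    1 < u → u ≤ 1 + c → 1 ≤ x →
    SS p u ≤ ∑ q ∈ QQ p ⌊x⌋₊, (q : ℝ)⁻¹ +
      x ^ (-((u - 1) / 2)) * (Real.log (4 / (u - 1)) + KK) := by
  obtain ⟨c1, h10, h11, hz⟩ := zeta_bounds
  refine ⟨c1, h10, h11, fun p hp u x hu hu' hx => ?_⟩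
  set v := 1 + (u - 1) / 2 with hv
  have hv1 : 1 < v := by rw [hv]; linarith
  have a2 := abs_le.1 (log_LL (1 : DirichletCharacter ℂ p) hv1)
  have hz1 := (hz v hv1 (by rw [hv]; linarith)).2
  have hz2 := (LL_one (p := p) hv1).2
  have hz3 := (LL_one (p := p) hv1).1
  have hz4 := (hz v hv1 (by rw [hv]; linarith)).1
  have hLpos : 0 < ‖LL (1 : DirichletCharacter ℂ p) v‖ := by
    have : 0 < 1 / (2 * (v - 1)) := by
      have : 0 < v - 1 := by linarith
      positivity
    linarith
  have e4 : 2 / (v - 1) = 4 / (u - 1) := by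
    have : u - 1 ≠ 0 := by linarith
    have h' : v - 1 = (u - 1) / 2 := by rw [hv]; ring
    rw [h', div_div_eq_mul_div]; norm_num
  have hlog : Real.log ‖LL (1 : DirichletCharacter ℂ p) v‖ ≤ Real.log (4 / (u - 1)) :=
    Real.log_le_log hLpos (by rw [← e4]; exact hz2.trans hz1)
  have hPP : (PP (1 : DirichletCharacter ℂ p) v).re ≤ Real.log (4 / (u - 1)) + KK := by linarith
  have hsum := (Complex.hasSum_re (PP_summable (1 : DirichletCharacter ℂ p) hv1).hasSum)
  have hterm : ∀ q : Nat.Primes, ((1 : DirichletCharacter ℂ p) ((q : ℕ) : ZMod p) *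
      ((((q : ℕ) : ℝ) ^ (-v) : ℝ) : ℂ)).re =
      if IsUnit ((q : ℕ) : ZMod p) then ((q : ℕ) : ℝ) ^ (-v) else 0 := by
    intro q
    by_cases h : IsUnit ((q : ℕ) : ZMod p)
    · rw [if_pos h, MulChar.one_apply h, one_mul, Complex.ofReal_re]
    · rw [if_neg h, MulChar.map_nonunit _ h, zero_mul, Complex.zero_re]
  have hx0 : 0 < x := by linarith
  refine Real.tsum_le_of_sum_le (fun q => ?_) fun F => ?_
  · split_ifs
    · positivity
    · exact le_rfl
  have hF : ∑ q ∈ F, ((1 : DirichletCharacter ℂ p) ((q : ℕ) : ZMod p) *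
      ((((q : ℕ) : ℝ) ^ (-v) : ℝ) : ℂ)).re ≤ Real.log (4 / (u - 1)) + KK := by
    refine le_trans (sum_le_hasSum F (fun q _ => ?_) hsum) hPP
    rw [hterm]
    split_ifs
    · positivity
    · exact le_rfl
  have hbound : ∀ q ∈ F, (if ((q : ℕ) : ZMod p) = -1 then ((q : ℕ) : ℝ) ^ (-u) else 0) ≤
      (if (q : ℕ) ∈ QQ p ⌊x⌋₊ then ((q : ℕ) : ℝ)⁻¹ else 0) +
      x ^ (-((u - 1) / 2)) * ((1 : DirichletCharacter ℂ p) ((q : ℕ) : ZMod p) *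
      ((((q : ℕ) : ℝ) ^ (-v) : ℝ) : ℂ)).re := by
    intro q _
    rw [hterm]
    have hq1 : (1 : ℝ) ≤ (q : ℕ) := by exact_mod_cast q.2.one_le
    have hxp : 0 < x ^ (-((u - 1) / 2)) := by positivity
    have hnn : 0 ≤ x ^ (-((u - 1) / 2)) *
        (if IsUnit ((q : ℕ) : ZMod p) then ((q : ℕ) : ℝ) ^ (-v) else 0) := by
      refine mul_nonneg hxp.le ?_
      split_ifs
      · positivity
      · exact le_rfl
    by_cases h : ((q : ℕ) : ZMod p) = -1
    · rw [if_pos h]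
      by_cases hq : (q : ℕ) ∈ QQ p ⌊x⌋₊
      · rw [if_pos hq]
        have : ((q : ℕ) : ℝ) ^ (-u) ≤ ((q : ℕ) : ℝ)⁻¹ := by
          rw [← Real.rpow_neg_one]
          exact Real.rpow_le_rpow_of_exponent_le hq1 (by linarith)
        linarith
      · rw [if_neg hq, zero_add, if_pos (by rw [h]; exact isUnit_one.neg)]
        have hqx : x ≤ (q : ℕ) := by
          by_contra hlt
          push Not at hlt
          refine hq ?_
          simp only [QQ, Finset.mem_filter, Finset.mem_Icc]
          exact ⟨⟨q.2.one_le, Nat.le_floor hlt.le⟩, q.2, h⟩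
        have e : ((q : ℕ) : ℝ) ^ (-u) = ((q : ℕ) : ℝ) ^ (-((u - 1) / 2)) * ((q : ℕ) : ℝ) ^ (-v) := by
          rw [← Real.rpow_add (by linarith)]
          congr 1
          rw [hv]; ring
        rw [e]
        refine mul_le_mul_of_nonneg_right ?_ (by positivity)
        exact Real.rpow_le_rpow_of_nonpos hx0 hqx (by linarith)
    · rw [if_neg h]
      refine add_nonneg ?_ hnn
      split_ifs
      · positivity
      · exact le_rfl
  refine (Finset.sum_le_sum hbound).trans ?_
  rw [Finset.sum_add_distrib, ← Finset.mul_sum]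
  refine add_le_add ?_ (mul_le_mul_of_nonneg_left hF (by positivity))
  rw [← Finset.sum_filter]
  rw [← Finset.sum_image (s := F.filter fun q : Nat.Primes => (q : ℕ) ∈ QQ p ⌊x⌋₊)
    (g := fun q : Nat.Primes => (q : ℕ)) (f := fun q : ℕ => (q : ℝ)⁻¹)
    (fun a _ b _ h => Subtype.ext h)]
  refine Finset.sum_le_sum_of_subset_of_nonneg ?_ fun q _ _ => by positivity
  intro q hq
  obtain ⟨a, ha, rfl⟩ := Finset.mem_image.1 hq
  exact (Finset.mem_filter.1 ha).2

end KF

namespace KF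

set_option maxHeartbeats 800000 in
lemma prime_sum_core : ∀ᶠ L : ℝ in atTop, ∀ p : ℕ, p.Prime → (p : ℝ) ^ 2 ≤ L ^ (0.9 : ℝ) →
    L / (2 * p) ≤ ∑ q ∈ QQ p ⌊Real.exp (Real.exp L)⌋₊, (q : ℝ)⁻¹ := by
  obtain ⟨c, C, hc0, hc1, hC, hcl⟩ := class_lower
  obtain ⟨c', hc0', hc1', htr⟩ := trunc
  set δ : ℝ := 1 / (2 * (7 + 2 * C)) with hδ
  have hδ0 : 0 < δ := by positivity
  have hδ1 : δ ≤ 1 / 14 := by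
    rw [hδ]; exact one_div_le_one_div_of_le (by norm_num) (by linarith)
  have e1 : ∀ᶠ L : ℝ in atTop, Real.log L ≤ δ * L ^ (0.1 : ℝ) := by
    have := (isLittleO_log_rpow_atTop (show (0 : ℝ) < 0.1 by norm_num)).bound hδ0
    filter_upwards [this, eventually_ge_atTop (1 : ℝ)] with L h h1
    rw [Real.norm_of_nonneg (Real.log_nonneg h1), Real.norm_of_nonneg (by positivity)] at h
    exact h
  have e2 : ∀ᶠ L : ℝ in atTop, 1 / δ ≤ L ^ (0.1 : ℝ) :=
    (tendsto_rpow_atTop (show (0 : ℝ) < 0.1 by norm_num)).eventually_ge_atTop _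
  have e3 : ∀ᶠ L : ℝ in atTop, 2 * L ≤ min c c' * Real.exp (1 / 2 * L) := by
    have h0 : 0 < min c c' := lt_min hc0 hc0'
    have := (isLittleO_pow_exp_pos_mul_atTop 1 (show (0 : ℝ) < 1 / 2 by norm_num)).bound
      (show 0 < min c c' / 2 by positivity)
    filter_upwards [this, eventually_ge_atTop (1 : ℝ)] with L h h1
    rw [Real.norm_of_nonneg (by positivity), Real.norm_of_nonneg (by positivity)] at h
    linarith
  filter_upwards [e1, e2, e3, eventually_ge_atTop (1 : ℝ), eventually_ge_atTop (Real.log 2 + KK)]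
    with L h1 h2 h3 h4 h5 p hp hpL
  have : Fact p.Prime := ⟨hp⟩
  have hp1 : (1 : ℝ) ≤ p := by exact_mod_cast hp.one_le
  have hL0 : 0 < L := by linarith
  have hlL : 0 ≤ Real.log L := Real.log_nonneg h4
  have hlp : 0 ≤ Real.log p := Real.log_nonneg hp1
  set A := L ^ (0.9 : ℝ) with hA
  set B := L ^ (0.1 : ℝ) with hB
  have hAB : A * B = L := by
    rw [hA, hB, ← Real.rpow_add hL0]; norm_num
  have hA1 : 1 ≤ A := Real.one_le_rpow h4 (by norm_num)
  have hB1 : 1 ≤ B := Real.one_le_rpow h4 (by norm_num)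
  have hAL : A ≤ L := by nlinarith
  have hBL : B ≤ L := by nlinarith
  have hpA : (p : ℝ) ≤ A := by nlinarith
  have hlpL : Real.log p ≤ Real.log L := Real.log_le_log (by linarith) (by linarith)
  have hδB : 1 ≤ δ * B := by
    rw [div_le_iff₀ hδ0] at h2; linarith
  have hplog : p * Real.log p ≤ δ * L := by
    calc p * Real.log p ≤ A * (δ * B) := by
          apply mul_le_mul hpA (hlpL.trans h1) hlp (by linarith)
      _ = δ * L := by rw [← hAB]; ring
  set ℓ := Real.exp L with hℓ
  have hℓ0 : 0 < ℓ := Real.exp_pos _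
  have hexp2 : Real.exp (1 / 2 * L) * Real.exp (1 / 2 * L) = ℓ := by
    rw [hℓ, ← Real.exp_add]; ring_nf
  have hE1 : 1 ≤ Real.exp (1 / 2 * L) := Real.one_le_exp (by linarith)
  have hm1 : min c c' ≤ c := min_le_left _ _
  have hm2 : min c c' ≤ c' := min_le_right _ _
  have hm0 : 0 < min c c' := lt_min hc0 hc0'
  set E := Real.exp (1 / 2 * L) with hE
  have hE0 : 0 < E := by linarith
  set u := 1 + 2 * L / ℓ with hu
  have hu1 : u - 1 = 2 * L / ℓ := by rw [hu]; ring
  have hupos : 0 < u - 1 := by rw [hu1]; positivity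
  have hub : u - 1 ≤ min c c' * E⁻¹ := by
    rw [hu1, div_le_iff₀ hℓ0, ← hexp2]
    calc 2 * L ≤ min c c' * E := h3
      _ = _ := by field_simp
  have hEinv : E⁻¹ ≤ 1 := inv_le_one_of_one_le₀ hE1
  have hEinv0 : 0 < E⁻¹ := by positivity
  have hpp : ((p : ℝ) ^ (4 * p)) ≤ E := by
    have hp0 : (0 : ℝ) < p := by linarith
    rw [← Real.exp_log (pow_pos hp0 (4 * p)), hE, Real.exp_le_exp, Real.log_pow]
    push_cast
    have : δ * L ≤ 1 / 14 * L := by gcongr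
    linarith
  have hu2 : u ≤ 1 + c * ((p : ℝ) ^ (4 * p))⁻¹ := by
    have : E⁻¹ ≤ ((p : ℝ) ^ (4 * p))⁻¹ := inv_anti₀ (by positivity) hpp
    have h6 : min c c' * E⁻¹ ≤ c * ((p : ℝ) ^ (4 * p))⁻¹ :=
      mul_le_mul hm1 this hEinv0.le hc0.le
    linarith
  have hu3 : u ≤ 1 + c' := by
    have h6 : min c c' * E⁻¹ ≤ c' * 1 :=
      mul_le_mul hm2 hEinv hEinv0.le hc0'.le
    linarith
  have H1 := hcl p u (by linarith) hu2
  have H2 := htr p u (Real.exp ℓ) (by linarith) hu3 (Real.one_le_exp hℓ0.le)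
  have hxp : Real.exp ℓ ^ (-((u - 1) / 2)) = ℓ⁻¹ := by
    rw [← Real.exp_mul, hu1, hℓ, ← Real.exp_neg]
    congr 1
    rw [← hℓ]
    field_simp
  have hlogu : Real.log (u - 1) = Real.log 2 + Real.log L - L := by
    rw [hu1, Real.log_div (by positivity) hℓ0.ne', Real.log_mul (by norm_num) hL0.ne', hℓ,
      Real.log_exp]
  have hlog4 : Real.log (4 / (u - 1)) = Real.log 2 - Real.log L + L := by
    rw [Real.log_div (by norm_num) hupos.ne', hlogu]
    have : Real.log 4 = 2 * Real.log 2 := by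
      rw [show (4 : ℝ) = 2 ^ 2 by norm_num, Real.log_pow]; norm_num
    rw [this]; ring
  have htail : ℓ⁻¹ * (Real.log (4 / (u - 1)) + KK) ≤ 1 := by
    rw [hlog4, inv_mul_le_iff₀ hℓ0, mul_one]
    have : 2 * L ≤ ℓ := by
      rw [← hexp2]
      exact h3.trans (mul_le_mul_of_nonneg_right ((hm1.trans hc1).trans hE1) hE0.le)
    linarith
  rw [hxp] at H2
  set Q := ∑ q ∈ QQ p ⌊Real.exp ℓ⌋₊, (q : ℝ)⁻¹ with hQ
  rw [hlogu] at H1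
  have H3 : p * SS p u ≤ p * (Q + 1) :=
    mul_le_mul_of_nonneg_left (by linarith) (by linarith)
  have hlog2 : Real.log 2 ≤ 1 := by
    have := Real.log_le_sub_one_of_pos (show (0 : ℝ) < 2 by norm_num)
    linarith
  have k1 : δ * B ≤ δ * L := by gcongr
  have k2 : (p : ℝ) * (4 * p * Real.log p + C) + p ≤ (5 + C) * (δ * L) := by
    have : (p : ℝ) * (4 * p * Real.log p + C) + p ≤ A * (4 * (δ * B) + C * (δ * B) + δ * B) := by
      have a1 : (p : ℝ) ^ 2 * Real.log p ≤ A * (δ * B) :=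
        mul_le_mul hpL (hlpL.trans h1) hlp (by linarith)
      have a2 : p * C ≤ A * (C * (δ * B)) :=
        mul_le_mul hpA (le_mul_of_one_le_right hC hδB) hC (by linarith)
      have a3 : p * 1 ≤ A * (δ * B) := mul_le_mul hpA hδB (by norm_num) (by linarith)
      linarith
    calc _ ≤ _ := this
      _ = _ := by rw [← hAB]; ring
  have k3 : Real.log 2 + C ≤ (1 + C) * (δ * L) := by
    have a1 : (1 + C) * 1 ≤ (1 + C) * (δ * L) :=
      mul_le_mul_of_nonneg_left (hδB.trans k1) (by linarith)
    linarith
  have k4 : (7 + 2 * C) * (δ * L) = L / 2 := by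
    rw [hδ]; field_simp
  have hfin : L / 2 ≤ p * Q := by linarith
  rw [div_le_iff₀ (by positivity)]
  linarith

lemma prime_sum : ∀ᶠ x : ℝ in atTop, ∀ p : ℕ, p.Prime →
    (p : ℝ) ^ 2 ≤ (Real.log (Real.log x)) ^ (0.9 : ℝ) →
    Real.log (Real.log x) / (2 * p) ≤ ∑ q ∈ QQ p ⌊x⌋₊, (q : ℝ)⁻¹ := by
  have h := (Real.tendsto_log_atTop.comp Real.tendsto_log_atTop).eventually prime_sum_core
  filter_upwards [h, eventually_gt_atTop (Real.exp 1)] with x h1 h2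
  have hx0 : 0 < x := (Real.exp_pos 1).trans h2
  have hl : 0 < Real.log x := by
    have := (Real.lt_log_iff_exp_lt hx0).2 h2
    linarith
  simpa only [Function.comp, Real.exp_log hl, Real.exp_log hx0] using h1

end KF

namespace KF

lemma count_dvd (N d : ℕ) : ∑ n ∈ Icc 1 N, (if d ∣ n then (1 : ℝ) else 0) = ((N / d : ℕ) : ℝ) := by
  rw [Finset.sum_ite, Finset.sum_const_zero, add_zero, Finset.sum_const, nsmul_eq_mul, mul_one]
  have := Nat.Ioc_filter_dvd_card_eq_div N d
  rw [← this]
  rfl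

lemma turan (Q : Finset ℕ) (N : ℕ) (hQ : ∀ q ∈ Q, q.Prime ∧ q ≤ N) :
    ∑ n ∈ Icc 1 N, ((∑ q ∈ Q, if q ∣ n then (1 : ℝ) else 0) - ∑ q ∈ Q, (q : ℝ)⁻¹) ^ 2 ≤
      3 * N * ∑ q ∈ Q, (q : ℝ)⁻¹ := by
  set S := ∑ q ∈ Q, (q : ℝ)⁻¹ with hS
  have hS0 : 0 ≤ S := Finset.sum_nonneg fun q _ => by positivity
  have h1 : N * S - Q.card ≤ ∑ n ∈ Icc 1 N, ∑ q ∈ Q, if q ∣ n then (1 : ℝ) else 0 := by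
    rw [Finset.sum_comm, Finset.sum_congr rfl fun q _ => count_dvd N q, hS, Finset.mul_sum,
      Finset.card_eq_sum_ones, Nat.cast_sum, ← Finset.sum_sub_distrib]
    refine Finset.sum_le_sum fun q _ => ?_
    have := Nat.floor_div_eq_div (K := ℝ) N q
    have h2 := (Nat.lt_floor_add_one ((N : ℝ) / q)).le
    rw [this] at h2
    push_cast
    rw [← div_eq_mul_inv]; linarith
  have h2 : ∑ n ∈ Icc 1 N, (∑ q ∈ Q, if q ∣ n then (1 : ℝ) else 0) ^ 2 ≤ N * S ^ 2 + N * S := by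
    have e : ∀ n, (∑ q ∈ Q, if q ∣ n then (1 : ℝ) else 0) ^ 2 =
        ∑ q ∈ Q, ∑ r ∈ Q, (if q ∣ n then (1 : ℝ) else 0) * (if r ∣ n then (1 : ℝ) else 0) := by
      intro n
      rw [sq, Finset.sum_mul_sum]
    rw [Finset.sum_congr rfl fun n _ => e n, Finset.sum_comm]
    have e2 : N * S ^ 2 + N * S =
        ∑ q ∈ Q, ∑ r ∈ Q, (N * ((q : ℝ)⁻¹ * (r : ℝ)⁻¹) + if q = r then N * (q : ℝ)⁻¹ else 0) := by
      simp only [Finset.sum_add_distrib]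
      congr 1
      · rw [sq, hS, Finset.sum_mul_sum, Finset.mul_sum]
        simp only [Finset.mul_sum]
      · rw [hS, Finset.mul_sum]
        refine Finset.sum_congr rfl fun q hq => ?_
        rw [Finset.sum_ite_eq, if_pos hq]
    rw [e2]
    refine Finset.sum_le_sum fun q hq => ?_
    rw [Finset.sum_comm]
    refine Finset.sum_le_sum fun r hr => ?_
    by_cases hqr : q = r
    · subst hqr
      rw [if_pos rfl]
      have e3 : ∀ n, (if q ∣ n then (1 : ℝ) else 0) * (if q ∣ n then (1 : ℝ) else 0) =
          if q ∣ n then (1 : ℝ) else 0 := by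
        intro n; split_ifs <;> simp
      rw [Finset.sum_congr rfl fun n _ => e3 n, count_dvd]
      have : ((N / q : ℕ) : ℝ) ≤ N / q := Nat.cast_div_le
      rw [div_eq_mul_inv] at this
      have h0 : 0 ≤ (N : ℝ) * ((q : ℝ)⁻¹ * (q : ℝ)⁻¹) := by positivity
      linarith
    · rw [if_neg hqr, add_zero]
      have hcop : Nat.Coprime q r := (Nat.coprime_primes (hQ q hq).1 (hQ r hr).1).2 hqr
      have e3 : ∀ n, (if q ∣ n then (1 : ℝ) else 0) * (if r ∣ n then (1 : ℝ) else 0) =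
          if q * r ∣ n then (1 : ℝ) else 0 := by
        intro n
        by_cases a : q ∣ n
        · by_cases b : r ∣ n
          · rw [if_pos a, if_pos b, if_pos (hcop.mul_dvd_of_dvd_of_dvd a b), one_mul]
          · rw [if_neg b, if_neg fun h => b ((Nat.dvd_mul_left r q).trans h), mul_zero]
        · rw [if_neg a, if_neg fun h => a ((Nat.dvd_mul_right q r).trans h), zero_mul]
      rw [Finset.sum_congr rfl fun n _ => e3 n, count_dvd]
      have : ((N / (q * r) : ℕ) : ℝ) ≤ N / ((q * r : ℕ) : ℝ) := Nat.cast_div_le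
      push_cast at this
      rwa [div_eq_mul_inv, mul_inv] at this
  have h3 : (Q.card : ℝ) ≤ N := by
    have : Q ⊆ Icc 1 N := fun q hq => Finset.mem_Icc.2 ⟨(hQ q hq).1.one_le, (hQ q hq).2⟩
    have := Finset.card_le_card this
    rw [Nat.card_Icc] at this
    exact_mod_cast (show Q.card ≤ N by omega)
  have e4 : ∑ n ∈ Icc 1 N, ((∑ q ∈ Q, if q ∣ n then (1 : ℝ) else 0) - S) ^ 2 =
      ∑ n ∈ Icc 1 N, (∑ q ∈ Q, if q ∣ n then (1 : ℝ) else 0) ^ 2 -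
      2 * S * (∑ n ∈ Icc 1 N, ∑ q ∈ Q, if q ∣ n then (1 : ℝ) else 0) + N * S ^ 2 := by
    have : (N : ℝ) * S ^ 2 = ∑ n ∈ Icc 1 N, S ^ 2 := by
      rw [Finset.sum_const, Nat.card_Icc, nsmul_eq_mul]; simp
    rw [this, Finset.mul_sum, ← Finset.sum_sub_distrib, ← Finset.sum_add_distrib]
    refine Finset.sum_congr rfl fun n _ => by ring
  rw [e4]
  have h5 := mul_le_mul_of_nonneg_left h1 hS0
  have h6 := mul_le_mul_of_nonneg_left h3 hS0
  nlinarith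

lemma turan_count (Q : Finset ℕ) (N : ℕ) (hQ : ∀ q ∈ Q, q.Prime ∧ q ≤ N)
    (hS : 0 < ∑ q ∈ Q, (q : ℝ)⁻¹) :
    (((Icc 1 N).filter fun n => ((Q.filter fun q => q ∣ n).card : ℝ) ≤
      (∑ q ∈ Q, (q : ℝ)⁻¹) / 2).card : ℝ) ≤ 12 * N / ∑ q ∈ Q, (q : ℝ)⁻¹ := by
  have h := turan Q N hQ
  set S := ∑ q ∈ Q, (q : ℝ)⁻¹
  set B := (Icc 1 N).filter fun n => ((Q.filter fun q => q ∣ n).card : ℝ) ≤ S / 2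
  have h1 : (B.card : ℝ) * (S ^ 2 / 4) ≤
      ∑ n ∈ Icc 1 N, ((∑ q ∈ Q, if q ∣ n then (1 : ℝ) else 0) - S) ^ 2 := by
    rw [← nsmul_eq_mul, ← Finset.sum_const]
    refine (Finset.sum_le_sum fun n hn => ?_).trans
      (Finset.sum_le_sum_of_subset_of_nonneg (Finset.filter_subset _ _) fun _ _ _ => sq_nonneg _)
    have hn' := (Finset.mem_filter.1 hn).2
    rw [Finset.sum_boole]
    nlinarith
  rw [le_div_iff₀ hS]
  have h2 := h1.trans h
  have : B.card * S * (S / 4) ≤ 12 * N * (S / 4) := by nlinarith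
  exact le_of_mul_le_mul_right this (by positivity)

/-- Integers with many square divisors `q²`, `q` prime. -/
lemma square_count (N : ℕ) (T : ℝ) (hT : 0 < T) :
    (((Icc 1 N).filter fun n => T ≤ (((Icc 1 N).filter fun q =>
      q.Prime ∧ q ^ 2 ∣ n).card : ℝ)).card : ℝ) ≤ 2 * N / T := by
  set B := (Icc 1 N).filter fun n => T ≤ (((Icc 1 N).filter fun q =>
      q.Prime ∧ q ^ 2 ∣ n).card : ℝ)
  have h1 : (B.card : ℝ) * T ≤ ∑ n ∈ Icc 1 N, ∑ q ∈ Icc 1 N, if q ≠ 1 ∧ q ^ 2 ∣ n then (1 : ℝ) else 0 := by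
    rw [← nsmul_eq_mul, ← Finset.sum_const]
    refine (Finset.sum_le_sum fun n hn => ?_).trans
      (Finset.sum_le_sum_of_subset_of_nonneg (Finset.filter_subset _ _) fun _ _ _ =>
        Finset.sum_nonneg fun _ _ => by split_ifs <;> norm_num)
    refine (Finset.mem_filter.1 hn).2.trans ?_
    rw [Finset.sum_boole]
    have : ((Icc 1 N).filter fun q => q.Prime ∧ q ^ 2 ∣ n) ⊆
      (Icc 1 N).filter fun q => q ≠ 1 ∧ q ^ 2 ∣ n := fun q hq => by
        rw [Finset.mem_filter] at hq ⊢
        exact ⟨hq.1, hq.2.1.ne_one, hq.2.2⟩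
    exact_mod_cast Finset.card_le_card this
  rw [Finset.sum_comm] at h1
  have h2 : ∀ q ∈ Icc 1 N, (∑ n ∈ Icc 1 N, if q ≠ 1 ∧ q ^ 2 ∣ n then (1 : ℝ) else 0) ≤
      N * (2 * ((q : ℝ)⁻¹ - ((q + 1 : ℕ) : ℝ)⁻¹)) := by
    intro q hq
    have hq1 : 1 ≤ q := (Finset.mem_Icc.1 hq).1
    have hqr : (1 : ℝ) ≤ q := by exact_mod_cast hq1
    have hq0 : (q : ℝ) ≠ 0 := by linarith
    have key : ((q : ℝ) ^ 2)⁻¹ ≤ 2 * ((q : ℝ)⁻¹ - ((q + 1 : ℕ) : ℝ)⁻¹) := by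
      have : (q : ℝ)⁻¹ - ((q + 1 : ℕ) : ℝ)⁻¹ = 1 / (q * (q + 1)) := by
        push_cast; field_simp; ring
      rw [this, ← mul_div_assoc, inv_eq_one_div, div_le_div_iff₀ (by positivity) (by positivity)]
      nlinarith
    refine le_trans (Finset.sum_le_sum (g := fun n => if q ^ 2 ∣ n then (1 : ℝ) else 0)
      fun n _ => ?_) ?_
    · by_cases a : q ^ 2 ∣ n
      · rw [if_pos a]; split_ifs <;> norm_num
      · rw [if_neg a, if_neg fun h => a h.2]
    · rw [count_dvd]
      have : ((N / (q ^ 2) : ℕ) : ℝ) ≤ N / ((q ^ 2 : ℕ) : ℝ) := Nat.cast_div_le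
      refine this.trans ?_
      push_cast
      rw [div_eq_mul_inv]
      push_cast at key
      gcongr
  have h3 := h1.trans (Finset.sum_le_sum h2)
  rw [← Finset.mul_sum, ← Finset.mul_sum] at h3
  have h4 : ∑ q ∈ Icc 1 N, ((q : ℝ)⁻¹ - ((q + 1 : ℕ) : ℝ)⁻¹) ≤ 1 := by
    have : ∀ M : ℕ, ∑ q ∈ Icc 1 M, ((q : ℝ)⁻¹ - ((q + 1 : ℕ) : ℝ)⁻¹) = 1 - ((M + 1 : ℕ) : ℝ)⁻¹ := by
      intro M
      induction M with
      | zero => simp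
      | succ M ih => rw [Finset.sum_Icc_succ_top (by omega), ih]; ring
    rw [this]
    have : 0 ≤ ((N + 1 : ℕ) : ℝ)⁻¹ := by positivity
    linarith
  rw [le_div_iff₀ hT]
  refine h3.trans ?_
  have : (N : ℝ) * (2 * ∑ q ∈ Icc 1 N, ((q : ℝ)⁻¹ - ((q + 1 : ℕ) : ℝ)⁻¹)) ≤ N * (2 * 1) := by gcongr
  linarith

end KF

namespace KF

lemma pow_dvd_sigma {p : ℕ} (F : Finset ℕ) : ∀ n : ℕ,
    (∀ q ∈ F, q.Prime ∧ q ∣ n ∧ ¬ q ^ 2 ∣ n ∧ ((q : ℕ) : ZMod p) = -1) →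
    p ^ F.card ∣ sigma1 n := by
  induction F using Finset.induction_on with
  | empty => intro n _; simp
  | insert q F hq ih =>
    intro n h
    obtain ⟨hqp, ⟨m, rfl⟩, hq2, hqm⟩ := h q (Finset.mem_insert_self _ _)
    have hqnm : ¬ q ∣ m := fun hd => hq2 (by rw [sq]; exact Nat.mul_dvd_mul_left q hd)
    have hcop : Nat.Coprime q m := (Nat.Prime.coprime_iff_not_dvd hqp).2 hqnm
    have e : sigma1 (q * m) = (q + 1) * sigma1 m := by
      unfold sigma1
      rw [ArithmeticFunction.isMultiplicative_sigma.map_mul_of_coprime hcop]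
      congr 1
      have := ArithmeticFunction.sigma_one_apply_prime_pow (i := 1) hqp
      rw [pow_one] at this
      rw [this]
      simp [Finset.sum_range_succ, add_comm]
    rw [e, Finset.card_insert_of_notMem hq, pow_succ, mul_comm]
    refine Nat.mul_dvd_mul ?_ (ih m fun r hr => ?_)
    · rw [← ZMod.natCast_eq_zero_iff]
      push_cast; rw [hqm]; ring
    · obtain ⟨h1, h2, h3, h4⟩ := h r (Finset.mem_insert_of_mem hr)
      have hne : r ≠ q := fun h => hq (h ▸ hr)
      have hc : Nat.Coprime r q := (Nat.coprime_primes h1 hqp).2 hne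
      exact ⟨h1, hc.dvd_of_dvd_mul_left h2, fun hd => h3 (hd.mul_left q), h4⟩

lemma not_dvd_s {k n p : ℕ} (hn : 1 ≤ n) (hf : KFree k n) (hp : p.Prime) (h : p ^ k ∣ sigma1 n) :
    ¬ p ^ k ∣ s n := by
  intro hs
  have hle : n ≤ sigma1 n := by
    unfold sigma1
    rw [ArithmeticFunction.sigma_one_apply]
    exact Finset.single_le_sum (f := fun d => d) (fun _ _ => Nat.zero_le _)
      (Nat.mem_divisors_self n (by omega))
  refine hf p hp ?_
  have := (Nat.dvd_sub h hs)
  unfold s at this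
  rwa [Nat.sub_sub_self hle] at this

lemma main_incl {k N : ℕ} {T L : ℝ} (hT : 0 < T) {p : ℕ} (hp : p.Prime)
    (hS : L / (2 * p) ≤ ∑ q ∈ QQ p N, (q : ℝ)⁻¹) (hL : T + k ≤ L / (4 * p)) {n : ℕ}
    (hn : n ∈ Icc 1 N) (hf : KFree k n) (hs : p ^ k ∣ s n) :
    n ∈ ((Icc 1 N).filter fun n => T ≤ (((Icc 1 N).filter fun q =>
      q.Prime ∧ q ^ 2 ∣ n).card : ℝ)) ∪
      ((Icc 1 N).filter fun n => (((QQ p N).filter fun q => q ∣ n).card : ℝ) ≤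
      (∑ q ∈ QQ p N, (q : ℝ)⁻¹) / 2) := by
  by_contra hcon
  rw [Finset.mem_union, not_or] at hcon
  obtain ⟨h1, h2⟩ := hcon
  rw [Finset.mem_filter, not_and, not_le] at h1 h2
  replace h1 := h1 hn
  replace h2 := h2 hn
  set F := (QQ p N).filter fun q => q ∣ n ∧ ¬ q ^ 2 ∣ n with hF
  have hsub : ((QQ p N).filter fun q => q ∣ n) ⊆
      F ∪ ((Icc 1 N).filter fun q => q.Prime ∧ q ^ 2 ∣ n) := by
    intro q hq
    rw [Finset.mem_filter] at hq
    have hq' := hq.1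
    simp only [QQ, Finset.mem_filter] at hq'
    rw [Finset.mem_union, hF, Finset.mem_filter, Finset.mem_filter]
    by_cases h : q ^ 2 ∣ n
    · exact Or.inr ⟨hq'.1, hq'.2.1, h⟩
    · exact Or.inl ⟨hq.1, hq.2, h⟩
  have hc : (((QQ p N).filter fun q => q ∣ n).card : ℝ) ≤
      F.card + (((Icc 1 N).filter fun q => q.Prime ∧ q ^ 2 ∣ n).card : ℝ) := by
    exact_mod_cast (Finset.card_le_card hsub).trans (Finset.card_union_le _ _)
  have e : L / (4 * p) = L / (2 * p) / 2 := by
    rw [div_div]; congr 1; ring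
  have hk : k ≤ F.card := by
    have : (k : ℝ) ≤ F.card := by linarith
    exact_mod_cast this
  refine not_dvd_s (Finset.mem_Icc.1 hn).1 hf hp ((pow_dvd_pow p hk).trans
    (pow_dvd_sigma F n fun q hq => ?_)) hs
  rw [hF, Finset.mem_filter] at hq
  have hq' := hq.1
  simp only [QQ, Finset.mem_filter] at hq'
  exact ⟨hq'.2.1, hq.2.1, hq.2.2, hq'.2.2⟩

lemma main_bound (k : ℕ) (hk : 2 ≤ k) (N : ℕ) (T L : ℝ) (hT : 0 < T) (hL1 : 1 ≤ L)
    (hLT : T + k ≤ L ^ (0.55 : ℝ) / 4)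
    (hS : ∀ p : ℕ, p.Prime → (p : ℝ) ^ 2 ≤ L ^ (0.9 : ℝ) →
      L / (2 * p) ≤ ∑ q ∈ QQ p N, (q : ℝ)⁻¹) :
    ((((Icc 1 N).filter fun n => KFree k n ∧ ∃ p : ℕ, p.Prime ∧
      ((p ^ k : ℕ) : ℝ) ≤ L ^ (0.9 : ℝ) ∧ p ^ k ∣ s n).card : ℝ)) ≤
      2 * N / T + 24 * N * L ^ (-0.1 : ℝ) := by
  set P := (Icc 1 ⌊L ^ (0.45 : ℝ)⌋₊).filter fun p : ℕ => p.Prime ∧ (p : ℝ) ^ 2 ≤ L ^ (0.9 : ℝ) with hP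
  set B1 := (Icc 1 N).filter fun n => T ≤ (((Icc 1 N).filter fun q =>
      q.Prime ∧ q ^ 2 ∣ n).card : ℝ) with hB1
  set B2 : ℕ → Finset ℕ := fun p => (Icc 1 N).filter fun n =>
      (((QQ p N).filter fun q => q ∣ n).card : ℝ) ≤ (∑ q ∈ QQ p N, (q : ℝ)⁻¹) / 2 with hB2
  have hL0 : 0 < L := by linarith
  have h45 : (L ^ (0.45 : ℝ)) ^ 2 = L ^ (0.9 : ℝ) := by
    rw [← Real.rpow_natCast, ← Real.rpow_mul hL0.le]; norm_num
  have h45' : L ^ (0.45 : ℝ) * L ^ (0.55 : ℝ) = L := by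
    rw [← Real.rpow_add hL0]; norm_num
  have h91 : L ^ (0.9 : ℝ) = L * L ^ (-0.1 : ℝ) := by
    nth_rewrite 2 [← Real.rpow_one L]
    rw [← Real.rpow_add hL0]; norm_num
  set R := L ^ (0.45 : ℝ) with hR
  have hR0 : 0 < R := by positivity
  have hpR : ∀ p : ℕ, (p : ℝ) ^ 2 ≤ L ^ (0.9 : ℝ) → (p : ℝ) ≤ R := fun p h => by
    rw [← h45] at h
    exact (pow_le_pow_iff_left₀ (by positivity) hR0.le two_ne_zero).1 h
  have hsub : ((Icc 1 N).filter fun n => KFree k n ∧ ∃ p : ℕ, p.Prime ∧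
      ((p ^ k : ℕ) : ℝ) ≤ L ^ (0.9 : ℝ) ∧ p ^ k ∣ s n) ⊆ B1 ∪ P.biUnion B2 := by
    intro n hn
    rw [Finset.mem_filter] at hn
    obtain ⟨hn, hf, p, hp, hpk, hs⟩ := hn
    have hp1 : (1 : ℝ) ≤ p := by exact_mod_cast hp.one_le
    have hp2 : (p : ℝ) ^ 2 ≤ L ^ (0.9 : ℝ) := by
      refine le_trans ?_ hpk
      push_cast
      exact pow_le_pow_right₀ hp1 hk
    have hpr := hpR p hp2
    have hl : T + k ≤ L / (4 * p) := by
      refine hLT.trans ?_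
      rw [div_le_div_iff₀ (by norm_num) (by positivity)]
      have : L ^ (0.55 : ℝ) * p ≤ L ^ (0.55 : ℝ) * R := by gcongr
      nlinarith
    have := main_incl hT hp (hS p hp hp2) hl hn hf hs
    rw [Finset.mem_union] at this ⊢
    refine this.imp id fun h => Finset.mem_biUnion.2 ⟨p, ?_, h⟩
    rw [hP, Finset.mem_filter, Finset.mem_Icc]
    exact ⟨⟨hp.one_le, Nat.le_floor hpr⟩, hp, hp2⟩
  have hc1 : (B1.card : ℝ) ≤ 2 * N / T := square_count N T hT
  have hc2 : ∀ p ∈ P, ((B2 p).card : ℝ) ≤ 24 * N * R / L := by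
    intro p hp
    rw [hP, Finset.mem_filter] at hp
    obtain ⟨-, hp, hp2⟩ := hp
    have hp1 : (1 : ℝ) ≤ p := by exact_mod_cast hp.one_le
    have hSp := hS p hp hp2
    have hpos : 0 < L / (2 * p) := by positivity
    refine (turan_count (QQ p N) N (fun q hq => ?_) (hpos.trans_le hSp)).trans ?_
    · simp only [QQ, Finset.mem_filter, Finset.mem_Icc] at hq
      exact ⟨hq.2.1, hq.1.2⟩
    · calc 12 * N / ∑ q ∈ QQ p N, (q : ℝ)⁻¹ ≤ 12 * N / (L / (2 * p)) := by gcongr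
        _ = 24 * N * p / L := by field_simp; ring
        _ ≤ _ := by have := hpR p hp2; gcongr
  have hcP : (P.card : ℝ) ≤ R := by
    have h1 : P.card ≤ ⌊R⌋₊ := by
      refine (Finset.card_filter_le _ _).trans ?_
      rw [Nat.card_Icc, ← hR]; omega
    have h1' : (P.card : ℝ) ≤ (⌊R⌋₊ : ℝ) := by exact_mod_cast h1
    exact h1'.trans (Nat.floor_le hR0.le)
  have hU : ((P.biUnion B2).card : ℝ) ≤ 24 * N * L ^ (-0.1 : ℝ) := by
    have h1 : ((P.biUnion B2).card : ℝ) ≤ ∑ p ∈ P, ((B2 p).card : ℝ) := by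
      exact_mod_cast Finset.card_biUnion_le
    refine h1.trans ((Finset.sum_le_sum hc2).trans ?_)
    rw [Finset.sum_const, nsmul_eq_mul]
    calc (P.card : ℝ) * (24 * N * R / L) ≤ R * (24 * N * R / L) := by gcongr
      _ = 24 * N * (R ^ 2 / L) := by ring
      _ = _ := by rw [h45, h91]; field_simp
  have hfin := (Finset.card_le_card hsub).trans (Finset.card_union_le _ _)
  have hfin' : ((((Icc 1 N).filter fun n => KFree k n ∧ ∃ p : ℕ, p.Prime ∧
      ((p ^ k : ℕ) : ℝ) ≤ L ^ (0.9 : ℝ) ∧ p ^ k ∣ s n).card : ℝ)) ≤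
      B1.card + (P.biUnion B2).card := by exact_mod_cast hfin
  linarith

theorem kfree_implies_no_small_prime_power_in_s_proof (k : ℕ) (hk : 2 ≤ k) :
    (fun x : ℝ => (((Finset.Icc 1 ⌊x⌋₊).filter (fun n => KFree k n ∧ ∃ p : ℕ, p.Prime ∧
          ((p ^ k : ℕ) : ℝ) ≤ (Real.log (Real.log x)) ^ (0.9 : ℝ) ∧ p ^ k ∣ s n)).card : ℝ))
      =o[atTop] (fun x : ℝ => x) := by
  rw [Asymptotics.isLittleO_iff]
  intro ε hε
  have hLL : Tendsto (fun x : ℝ => Real.log (Real.log x)) atTop atTop :=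
    Real.tendsto_log_atTop.comp Real.tendsto_log_atTop
  have e1 := hLL.eventually ((tendsto_rpow_atTop
    (show (0 : ℝ) < 0.55 by norm_num)).eventually_ge_atTop (4 * (4 / ε + k)))
  have e2 := hLL.eventually ((tendsto_rpow_neg_atTop
    (show (0 : ℝ) < 0.1 by norm_num)).eventually_le_const (show 0 < ε / 48 by positivity))
  filter_upwards [prime_sum, e1, e2, hLL.eventually_ge_atTop 1, eventually_ge_atTop (1 : ℝ)]
    with x h1 h2 h3 h4 h5
  have hb := main_bound k hk ⌊x⌋₊ (4 / ε) (Real.log (Real.log x)) (by positivity) h4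
    (by linarith) h1
  rw [Real.norm_of_nonneg (by positivity), Real.norm_of_nonneg (by linarith)]
  refine hb.trans ?_
  have hN : (⌊x⌋₊ : ℝ) ≤ x := Nat.floor_le (by linarith)
  have a1 : 2 * (⌊x⌋₊ : ℝ) / (4 / ε) = ε / 2 * ⌊x⌋₊ := by field_simp; ring
  have a2 : 24 * (⌊x⌋₊ : ℝ) * Real.log (Real.log x) ^ (-0.1 : ℝ) ≤ 24 * (⌊x⌋₊ : ℝ) * (ε / 48) := by
    gcongr
  rw [a1]
  nlinarith

end KF
theorem kfree_implies_no_small_prime_power_in_s (k : ℕ) (hk : 2 ≤ k) :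
    (fun x : ℝ => (((Finset.Icc 1 ⌊x⌋₊).filter
        (fun n => KFree k n ∧ ∃ p : ℕ, p.Prime ∧
          ((p ^ k : ℕ) : ℝ) ≤ (Real.log (Real.log x)) ^ (0.9 : ℝ) ∧ p ^ k ∣ s n)).card : ℝ))
      =o[atTop] (fun x : ℝ => x) := by
  exact KF.kfree_implies_no_small_prime_power_in_s_proof k hk
end

section
/- Fix an integer k ≥ 2. Suppose that, as x → ∞, the number of integers n with 1 ≤ n ≤ x such that there exists a prime p with p^k > (log log x)^{0.9} and p^k ∣ s(n) is o(x). Then, as x → ∞, the number of integers n with 1 ≤ n ≤ x for which the equivalence "n is k-free if and only if s(n) is k-free" fails is o(x). -/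
open scoped Classical
open Filter Finset

/-! ### Character sums and the integral representation -/

lemma charsum_range_period {N : ℕ} [NeZero N] (χ : DirichletCharacter ℂ N) (hχ : χ ≠ 1) (n : ℕ) :
    ∑ k ∈ Finset.range (n + N), χ (k : ZMod N) = ∑ k ∈ Finset.range n, χ (k : ZMod N) := by
  induction n with
  | zero =>
    simp only [zero_add, Finset.range_zero, Finset.sum_empty]
    rw [← MulChar.sum_eq_zero_of_ne_one hχ]
    refine Finset.sum_bij' (fun k _ => (k : ZMod N)) (fun a _ => a.val) ?_ ?_ ?_ ?_ ?_
    · intros; simp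
    · intro a _; simpa using ZMod.val_lt a
    · intro k hk; exact ZMod.val_cast_of_lt (by simpa using hk)
    · intro a _; simp
    · intros; rfl
  | succ n ih =>
    rw [show n + 1 + N = (n + N) + 1 by ring, Finset.sum_range_succ, ih, Finset.sum_range_succ]
    simp

lemma charsum_range_le {N : ℕ} [NeZero N] (χ : DirichletCharacter ℂ N) (hχ : χ ≠ 1) (n : ℕ) :
    ‖∑ k ∈ Finset.range n, χ (k : ZMod N)‖ ≤ N := by
  have key : ∀ m q : ℕ, ∑ k ∈ Finset.range (m + N * q), χ (k : ZMod N)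
      = ∑ k ∈ Finset.range m, χ (k : ZMod N) := by
    intro m q
    induction q with
    | zero => simp
    | succ q ih =>
      rw [show m + N * (q + 1) = (m + N * q) + N by ring, charsum_range_period χ hχ, ih]
  rw [← Nat.mod_add_div n N, key]
  calc _ ≤ ∑ k ∈ Finset.range (n % N), ‖χ (k : ZMod N)‖ := norm_sum_le _ _
    _ ≤ ∑ k ∈ Finset.range (n % N), 1 := Finset.sum_le_sum fun k _ => χ.norm_le_one _
    _ = ((n % N : ℕ) : ℝ) := by simp
    _ ≤ N := by exact_mod_cast (Nat.mod_lt n (NeZero.pos N)).le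

lemma char_zero {N : ℕ} [NeZero N] (χ : DirichletCharacter ℂ N) (hχ : χ ≠ 1) : χ 0 = 0 := by
  apply χ.map_nonunit
  intro h
  apply hχ
  have : N = 1 := by
    have h1 : (0 : ZMod N) = 1 := by
      rwa [isUnit_zero_iff] at h
    have h2 : ((1 : ℕ) : ZMod N) = 0 := by simpa using h1.symm
    rw [ZMod.natCast_eq_zero_iff] at h2
    exact Nat.dvd_one.mp h2
  subst this
  exact DirichletCharacter.level_one χ

lemma charsum_Icc_eq {N : ℕ} [NeZero N] (χ : DirichletCharacter ℂ N) (hχ : χ ≠ 1) (n : ℕ) :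
    ∑ k ∈ Finset.Icc 1 n, χ (k : ZMod N) = ∑ k ∈ Finset.range (n + 1), χ (k : ZMod N) := by
  rw [Finset.range_eq_Ico, Finset.sum_eq_sum_Ico_succ_bot (by lia)]
  simp [char_zero χ hχ]
  rfl

lemma charsum_Icc_le {N : ℕ} [NeZero N] (χ : DirichletCharacter ℂ N) (hχ : χ ≠ 1) (n : ℕ) :
    ‖∑ k ∈ Finset.Icc 1 n, χ (k : ZMod N)‖ ≤ N := by
  rw [charsum_Icc_eq χ hχ]
  exact charsum_range_le χ hχ _

/-- Mellin integral of the character sum. -/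
noncomputable def Mint {N : ℕ} (χ : DirichletCharacter ℂ N) (u : ℝ) : ℂ :=
  ∫ t in Set.Ioi (1 : ℝ), (∑ k ∈ Finset.Icc 1 ⌊t⌋₊, χ (k : ZMod N)) * ((t ^ (-(u + 1)) : ℝ) : ℂ)

lemma LSeries_eq_Mint {N : ℕ} [NeZero N] (χ : DirichletCharacter ℂ N) (hχ : χ ≠ 1) {u : ℝ}
    (hu : 1 < u) : LSeries (fun n => χ (n : ZMod N)) (u : ℂ) = u * Mint χ u := by
  rw [LSeries_eq_mul_integral (fun n => χ (n : ZMod N)) (r := 0) le_rfl (by simp; linarith)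
    (χ.LSeriesSummable_of_one_lt_re (by simpa using hu))]
  · congr 1
    unfold Mint
    apply MeasureTheory.setIntegral_congr_fun measurableSet_Ioi
    intro t ht
    have ht0 : (0 : ℝ) ≤ t := by
      have : (1 : ℝ) < t := ht
      linarith
    simp only
    rw [Complex.ofReal_cpow ht0]
    push_cast
    rfl
  · simp only [Real.rpow_zero]
    apply Asymptotics.IsBigO.of_bound (N : ℝ)
    filter_upwards with n
    simpa using charsum_Icc_le χ hχ n

lemma Mint_integrable {N : ℕ} [NeZero N] (χ : DirichletCharacter ℂ N) (hχ : χ ≠ 1) {u : ℝ}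
    (hu : 0 < u) : MeasureTheory.IntegrableOn
      (fun t : ℝ => (∑ k ∈ Finset.Icc 1 ⌊t⌋₊, χ (k : ZMod N)) * ((t ^ (-(u + 1)) : ℝ) : ℂ))
      (Set.Ioi (1 : ℝ)) := by
  have h1 : MeasureTheory.IntegrableOn (fun t : ℝ => (N : ℝ) * t ^ (-(u + 1))) (Set.Ioi 1) :=
    (integrableOn_Ioi_rpow_of_lt (by linarith) one_pos).const_mul _
  refine MeasureTheory.Integrable.mono' h1 ?_ ?_
  · apply Measurable.aestronglyMeasurable
    apply Measurable.mul
    · exact (measurable_from_nat (f := fun n => ∑ k ∈ Finset.Icc 1 n, χ (k : ZMod N))).comp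
        Nat.measurable_floor
    · fun_prop
  · filter_upwards [MeasureTheory.ae_restrict_mem measurableSet_Ioi] with t ht
    have ht0 : (0 : ℝ) ≤ t := by
      have : (1 : ℝ) < t := ht
      linarith
    rw [norm_mul, Complex.norm_real, Real.norm_of_nonneg (Real.rpow_nonneg ht0 _)]
    exact mul_le_mul_of_nonneg_right (charsum_Icc_le χ hχ _) (Real.rpow_nonneg ht0 _)

lemma integral_rpow_one {u : ℝ} (hu : 0 < u) :
    ∫ t in Set.Ioi (1 : ℝ), t ^ (-(u + 1)) = 1 / u := by
  rw [integral_Ioi_rpow_of_lt (by linarith) one_pos, Real.one_rpow]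
  rw [show -(u + 1) + 1 = -u by ring, neg_div_neg_eq]

lemma Mint_norm_le {N : ℕ} [NeZero N] (χ : DirichletCharacter ℂ N) (hχ : χ ≠ 1) {u : ℝ}
    (hu : 0 < u) : ‖Mint χ u‖ ≤ N / u := by
  have h1 : MeasureTheory.IntegrableOn (fun t : ℝ => (N : ℝ) * t ^ (-(u + 1))) (Set.Ioi 1) :=
    (integrableOn_Ioi_rpow_of_lt (by linarith) one_pos).const_mul _
  have := MeasureTheory.norm_integral_le_of_norm_le h1 (f := fun t : ℝ =>
    (∑ k ∈ Finset.Icc 1 ⌊t⌋₊, χ (k : ZMod N)) * ((t ^ (-(u + 1)) : ℝ) : ℂ)) ?_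
  · rw [MeasureTheory.integral_const_mul, integral_rpow_one hu] at this
    simpa [Mint, div_eq_mul_inv] using this
  · filter_upwards [MeasureTheory.ae_restrict_mem measurableSet_Ioi] with t ht
    have ht0 : (0 : ℝ) ≤ t := by
      have : (1 : ℝ) < t := ht
      linarith
    rw [norm_mul, Complex.norm_real, Real.norm_of_nonneg (Real.rpow_nonneg ht0 _)]
    exact mul_le_mul_of_nonneg_right (charsum_Icc_le χ hχ _) (Real.rpow_nonneg ht0 _)

lemma Mint_sub_le {N : ℕ} [NeZero N] (χ : DirichletCharacter ℂ N) (hχ : χ ≠ 1) {u v : ℝ}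
    (hu : 1 ≤ u) (huv : u ≤ v) : ‖Mint χ u - Mint χ v‖ ≤ N * (v - u) := by
  have hu0 : 0 < u := by linarith
  have hv0 : 0 < v := by linarith
  have iu := integrableOn_Ioi_rpow_of_lt (show -(u + 1) < -1 by linarith) (one_pos (α := ℝ))
  have iv := integrableOn_Ioi_rpow_of_lt (show -(v + 1) < -1 by linarith) (one_pos (α := ℝ))
  have h1 : MeasureTheory.IntegrableOn
      (fun t : ℝ => (N : ℝ) * (t ^ (-(u + 1)) - t ^ (-(v + 1)))) (Set.Ioi 1) :=
    (iu.sub iv).const_mul _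
  have h2 : ‖Mint χ u - Mint χ v‖ ≤
      ∫ t in Set.Ioi (1 : ℝ), (N : ℝ) * (t ^ (-(u + 1)) - t ^ (-(v + 1))) := by
    unfold Mint
    rw [← MeasureTheory.integral_sub (Mint_integrable χ hχ hu0) (Mint_integrable χ hχ hv0)]
    apply MeasureTheory.norm_integral_le_of_norm_le h1
    filter_upwards [MeasureTheory.ae_restrict_mem measurableSet_Ioi] with t ht
    have ht1 : (1 : ℝ) ≤ t := le_of_lt ht
    rw [← mul_sub, norm_mul, ← Complex.ofReal_sub, Complex.norm_real, Real.norm_of_nonneg]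
    · apply mul_le_mul_of_nonneg_right (charsum_Icc_le χ hχ _)
      exact sub_nonneg.mpr (Real.rpow_le_rpow_of_exponent_le ht1 (by linarith))
    · exact sub_nonneg.mpr (Real.rpow_le_rpow_of_exponent_le ht1 (by linarith))
  refine h2.trans ?_
  rw [MeasureTheory.integral_const_mul, MeasureTheory.integral_sub iu iv, integral_rpow_one hu0,
    integral_rpow_one hv0]
  apply mul_le_mul_of_nonneg_left _ (Nat.cast_nonneg N)
  rw [div_sub_div _ _ hu0.ne' hv0.ne', div_le_iff₀ (by positivity)]
  have : 1 ≤ u * v := one_le_mul_of_one_le_of_one_le hu (by linarith)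
  nlinarith


/-! ### Bounds for zeta on the real line -/

lemma zr_summable {u : ℝ} (hu : 1 < u) : Summable (fun n : ℕ => (n : ℝ) ^ (-u)) :=
  Real.summable_nat_rpow.mpr (by linarith)

lemma zr_term (u : ℝ) (hu : 1 < u) (n : ℕ) :
    LSeries.term (fun _ => (1 : ℂ)) (u : ℂ) n = (((n : ℝ) ^ (-u) : ℝ) : ℂ) := by
  rcases eq_or_ne n 0 with rfl | hn
  · simp [Real.zero_rpow (show -u ≠ 0 by linarith)]
  · rw [LSeries.term_of_ne_zero hn, Complex.ofReal_cpow (by positivity)]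
    push_cast
    rw [Complex.cpow_neg, one_div]

lemma zr_eq {u : ℝ} (hu : 1 < u) :
    ((∑' n : ℕ, (n : ℝ) ^ (-u) : ℝ) : ℂ) = LSeries (fun _ => (1 : ℂ)) (u : ℂ) := by
  rw [LSeries, Complex.ofReal_tsum]
  exact tsum_congr fun n => (zr_term u hu n).symm

lemma zr_integral {u : ℝ} (hu : 1 < u) :
    ∑' n : ℕ, (n : ℝ) ^ (-u) = u * ∫ t in Set.Ioi (1 : ℝ), (⌊t⌋₊ : ℝ) * t ^ (-(u + 1)) := by
  have h := LSeries_eq_mul_integral_of_nonneg (fun _ => (1 : ℝ)) (r := 1) zero_le_one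
    (s := (u : ℂ)) (by simpa using hu) ?_ (fun _ => zero_le_one)
  · have h2 := zr_eq hu
    simp only [Complex.ofReal_one] at h
    rw [h] at h2
    have h3 : (∫ t in Set.Ioi (1 : ℝ), (∑ k ∈ Finset.Icc 1 ⌊t⌋₊, (1 : ℂ)) *
        (t : ℂ) ^ (-((u : ℂ) + 1)))
        = ((∫ t in Set.Ioi (1 : ℝ), (⌊t⌋₊ : ℝ) * t ^ (-(u + 1)) : ℝ) : ℂ) := by
      rw [← integral_complex_ofReal]
      apply MeasureTheory.setIntegral_congr_fun measurableSet_Ioi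
      intro t ht
      have ht0 : (0 : ℝ) ≤ t := by
        have : (1 : ℝ) < t := ht
        linarith
      simp [Complex.ofReal_cpow ht0]
    rw [h3] at h2
    exact_mod_cast h2
  · simp only [Finset.sum_const, Nat.card_Icc, Real.rpow_one]
    simpa using Asymptotics.isBigO_refl (fun n : ℕ => (n : ℝ)) atTop

lemma floor_integrable {u : ℝ} (hu : 1 < u) : MeasureTheory.IntegrableOn
    (fun t : ℝ => (⌊t⌋₊ : ℝ) * t ^ (-(u + 1))) (Set.Ioi 1) := by
  refine MeasureTheory.Integrable.mono'
    (integrableOn_Ioi_rpow_of_lt (show -u < -1 by linarith) one_pos) ?_ ?_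
  · apply Measurable.aestronglyMeasurable
    apply Measurable.mul
    · exact (measurable_from_nat (f := fun n : ℕ => (n : ℝ))).comp Nat.measurable_floor
    · fun_prop
  · filter_upwards [MeasureTheory.ae_restrict_mem measurableSet_Ioi] with t ht
    have ht0 : (0 : ℝ) < t := by
      have : (1 : ℝ) < t := ht
      linarith
    rw [Real.norm_of_nonneg (by positivity)]
    calc (⌊t⌋₊ : ℝ) * t ^ (-(u + 1)) ≤ t * t ^ (-(u + 1)) := by
          gcongr; exact Nat.floor_le ht0.le
      _ = t ^ (-u) := by
          rw [← Real.rpow_one_add' ht0.le (by linarith)]; congr 1; ring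

lemma integral_rpow_one' {u : ℝ} (hu : 1 < u) :
    ∫ t in Set.Ioi (1 : ℝ), t ^ (-u) = 1 / (u - 1) := by
  have := integral_rpow_one (u := u - 1) (by linarith)
  simpa using this

lemma zr_le {u : ℝ} (hu : 1 < u) : ∑' n : ℕ, (n : ℝ) ^ (-u) ≤ u / (u - 1) := by
  rw [zr_integral hu, div_eq_mul_one_div, ← integral_rpow_one' hu]
  apply mul_le_mul_of_nonneg_left _ (by linarith)
  apply MeasureTheory.setIntegral_mono_on (floor_integrable hu)
    (integrableOn_Ioi_rpow_of_lt (show -u < -1 by linarith) one_pos) measurableSet_Ioi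
  intro t ht
  have ht0 : (0 : ℝ) < t := by
    have : (1 : ℝ) < t := ht
    linarith
  calc (⌊t⌋₊ : ℝ) * t ^ (-(u + 1)) ≤ t * t ^ (-(u + 1)) := by
        gcongr; exact Nat.floor_le ht0.le
    _ = t ^ (-u) := by
        rw [← Real.rpow_one_add' ht0.le (by linarith)]; congr 1; ring

lemma le_zr {u : ℝ} (hu : 1 < u) : 1 / (u - 1) ≤ ∑' n : ℕ, (n : ℝ) ^ (-u) := by
  have hu0 : 0 < u := by linarith
  have i1 := integrableOn_Ioi_rpow_of_lt (show -u < -1 by linarith) (one_pos (α := ℝ))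
  have i2 := integrableOn_Ioi_rpow_of_lt (show -(u + 1) < -1 by linarith) (one_pos (α := ℝ))
  have h : ∫ t in Set.Ioi (1 : ℝ), (t ^ (-u) - t ^ (-(u + 1))) ≤
      ∫ t in Set.Ioi (1 : ℝ), (⌊t⌋₊ : ℝ) * t ^ (-(u + 1)) := by
    apply MeasureTheory.setIntegral_mono_on (i1.sub i2) (floor_integrable hu) measurableSet_Ioi
    intro t ht
    have ht0 : (0 : ℝ) < t := by
      have : (1 : ℝ) < t := ht
      linarith
    have e : t ^ (-u) = t * t ^ (-(u + 1)) := by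
      rw [← Real.rpow_one_add' ht0.le (by linarith)]; congr 1; ring
    have := (Nat.sub_one_lt_floor t).le
    have h3 : 0 ≤ t ^ (-(u + 1)) := by positivity
    simp only [Pi.sub_apply]
    rw [e]
    nlinarith
  rw [MeasureTheory.integral_sub i1 i2, integral_rpow_one' hu, integral_rpow_one hu0] at h
  rw [zr_integral hu]
  have h2 := mul_le_mul_of_nonneg_left h hu0.le
  refine le_trans (le_of_eq ?_) h2
  have : u - 1 ≠ 0 := by linarith
  field_simp
  ring

lemma LSeries_char_norm_le {N : ℕ} (χ : DirichletCharacter ℂ N) {u : ℝ} (hu : 1 < u) :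
    ‖LSeries (fun n => χ (n : ZMod N)) (u : ℂ)‖ ≤ u / (u - 1) := by
  refine le_trans ?_ (zr_le hu)
  unfold LSeries
  apply tsum_of_norm_bounded (zr_summable hu).hasSum
  intro n
  rcases eq_or_ne n 0 with rfl | hn
  · simp [Real.zero_rpow (show -u ≠ 0 by linarith)]
  · rw [LSeries.term_of_ne_zero hn, norm_div, Complex.norm_natCast_cpow_of_pos (by lia),
      Complex.ofReal_re, Real.rpow_neg (by positivity), ← one_div]
    gcongr
    exact χ.norm_le_one _

/-! ### Lower bound for non-quadratic characters -/

lemma L_lower_nonquad {N : ℕ} [NeZero N] (χ : DirichletCharacter ℂ N) (hχ : χ ^ 2 ≠ 1) {u : ℝ}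
    (hu : 1 < u) (hu2 : u ≤ 1 + 1 / (2048 * (N : ℝ) ^ 5)) :
    1 / (2048 * (N : ℝ) ^ 4) ≤ ‖LSeries (fun n => χ (n : ZMod N)) (u : ℂ)‖ := by
  have hχ1 : χ ≠ 1 := by rintro rfl; simp at hχ
  have hN : (1 : ℝ) ≤ N := by exact_mod_cast NeZero.one_le
  set x : ℝ := 1 / (2048 * (N : ℝ) ^ 5) with hx
  have hx0 : 0 < x := by positivity
  have hx1 : x ≤ 1 := by
    rw [hx, div_le_one (by positivity)]
    have := one_le_pow₀ hN (n := 5)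
    linarith
  have h341 := χ.norm_LSeries_product_ge_one hx0 0
  simp only [Complex.ofReal_zero, mul_zero, add_zero] at h341
  rw [norm_mul, norm_mul, norm_pow, norm_pow] at h341
  rw [show (1 : ℂ) + (x : ℂ) = ((1 + x : ℝ) : ℂ) by push_cast; rfl] at h341
  have b0 := LSeries_char_norm_le (1 : DirichletCharacter ℂ N) (show 1 < 1 + x by linarith)
  have b2 := LSeries_eq_Mint (χ ^ 2) hχ (show 1 < 1 + x by linarith)
  have b2' := Mint_norm_le (χ ^ 2) hχ (show 0 < 1 + x by linarith)
  have b1 := LSeries_eq_Mint χ hχ1 (show 1 < 1 + x by linarith)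
  have b2'' : ‖LSeries (fun n => (χ ^ 2) (n : ZMod N)) ((1 + x : ℝ) : ℂ)‖ ≤ N := by
    rw [b2, norm_mul, Complex.norm_real, Real.norm_of_nonneg (by linarith)]
    rwa [le_div_iff₀ (by linarith), mul_comm] at b2'
  have b0' : ‖LSeries (fun n => (1 : DirichletCharacter ℂ N) (n : ZMod N)) ((1 + x : ℝ) : ℂ)‖
      ≤ 2 / x := by
    refine b0.trans ?_
    rw [show (1 + x - 1) = x by ring]
    gcongr
    linarith
  set m := ‖Mint χ (1 + x)‖ with hm
  have b1' : ‖LSeries (fun n => χ (n : ZMod N)) ((1 + x : ℝ) : ℂ)‖ ≤ 2 * m := by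
    rw [b1, norm_mul, Complex.norm_real, Real.norm_of_nonneg (by linarith)]
    exact mul_le_mul_of_nonneg_right (by linarith) (norm_nonneg _)
  have hprod : 1 ≤ (2 / x) ^ 3 * (2 * m) ^ 4 * N := by
    refine le_trans h341 ?_
    gcongr
  have hm2 : 2 * N * x ≤ m := by
    by_contra! hlt
    have hm0 : 0 ≤ m := norm_nonneg _
    have h4 : (2 / x) ^ 3 * (2 * m) ^ 4 * N < (2 / x) ^ 3 * (2 * (2 * N * x)) ^ 4 * N := by
      gcongr
    have h5 : (2 / x) ^ 3 * (2 * (2 * N * x)) ^ 4 * N = 1 := by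
      rw [hx]
      field_simp
      norm_num
    linarith
  have hd := Mint_sub_le χ hχ1 hu.le hu2
  have h6 : ‖Mint χ (1 + x)‖ - ‖Mint χ u‖ ≤ ‖Mint χ u - Mint χ (1 + x)‖ := by
    rw [norm_sub_rev]
    exact norm_sub_norm_le _ _
  have h7 : (N : ℝ) * (1 + x - u) ≤ N * x := by
    gcongr
    linarith
  have h8 : N * x ≤ ‖Mint χ u‖ := by linarith
  have h9 : N * x = 1 / (2048 * (N : ℝ) ^ 4) := by
    rw [hx]
    field_simp
  rw [LSeries_eq_Mint χ hχ1 hu, norm_mul, Complex.norm_real, Real.norm_of_nonneg (by linarith),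
    ← h9]
  nlinarith [norm_nonneg (Mint χ u)]


/-! ### Lower bound for quadratic characters (Lambert series argument) -/

lemma abel_bound (f c : ℕ → ℝ) (hf : Antitone f) (hf0 : ∀ n, 0 ≤ f n) (B : ℝ)
    (hc : ∀ n, |∑ i ∈ Finset.range n, c i| ≤ B) (n : ℕ) :
    |∑ i ∈ Finset.range n, f i * c i| ≤ B * f 0 := by
  have hB : 0 ≤ B := le_trans (abs_nonneg _) (hc 0)
  rcases Nat.eq_zero_or_pos n with rfl | hn
  · simp; exact mul_nonneg hB (hf0 0)
  have h := Finset.sum_range_by_parts f c n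
  simp only [smul_eq_mul] at h
  rw [h]
  have h1 : |f (n - 1) * ∑ i ∈ Finset.range n, c i| ≤ f (n - 1) * B := by
    rw [abs_mul, abs_of_nonneg (hf0 _)]
    exact mul_le_mul_of_nonneg_left (hc n) (hf0 _)
  have h2 : |∑ i ∈ Finset.range (n - 1), (f (i + 1) - f i) * ∑ i ∈ Finset.range (i + 1), c i|
      ≤ (f 0 - f (n - 1)) * B := by
    refine (Finset.abs_sum_le_sum_abs _ _).trans ?_
    calc _ ≤ ∑ i ∈ Finset.range (n - 1), (f i - f (i + 1)) * B := by
          apply Finset.sum_le_sum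
          intro i _
          have : f (i + 1) ≤ f i := hf (Nat.le_succ i)
          rw [abs_mul, abs_of_nonpos (by linarith), neg_sub]
          exact mul_le_mul_of_nonneg_left (hc _) (by linarith)
      _ = (f 0 - f (n - 1)) * B := by
          rw [← Finset.sum_mul, Finset.sum_range_sub']
  have := abs_sub (f (n - 1) * ∑ i ∈ Finset.range n, c i)
    (∑ i ∈ Finset.range (n - 1), (f (i + 1) - f i) * ∑ i ∈ Finset.range (i + 1), c i)
  linarith

lemma geom_amgm (t : ℝ) (ht : 0 ≤ t) (d : ℕ) :
    (d : ℝ) * t ^ (d - 1) ≤ ∑ i ∈ Finset.range d, (t ^ 2) ^ i := by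
  have h1 : 2 * ∑ i ∈ Finset.range d, (t ^ 2) ^ i =
      ∑ i ∈ Finset.range d, ((t ^ 2) ^ i + (t ^ 2) ^ (d - 1 - i)) := by
    rw [Finset.sum_add_distrib, Finset.sum_range_reflect (fun i => (t ^ 2) ^ i) d]
    ring
  have h2 : ∑ i ∈ Finset.range d, 2 * t ^ (d - 1) ≤
      ∑ i ∈ Finset.range d, ((t ^ 2) ^ i + (t ^ 2) ^ (d - 1 - i)) := by
    apply Finset.sum_le_sum
    intro i hi
    have hi' : i < d := by simpa using hi
    have e : t ^ (d - 1) = t ^ i * t ^ (d - 1 - i) := by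
      rw [← pow_add]; congr 1; lia
    rw [e, ← pow_mul, ← pow_mul, mul_comm 2 i, mul_comm 2 (d - 1 - i), pow_mul, pow_mul]
    nlinarith [sq_nonneg (t ^ i - t ^ (d - 1 - i))]
  simp only [Finset.sum_const, Finset.card_range, nsmul_eq_mul] at h2
  linarith

/-- The comparison function `1/(d(1-x)) - x^d/(1-x^d)`. -/
noncomputable def lamG (x : ℝ) (d : ℕ) : ℝ := 1 / (d * (1 - x)) - x ^ d / (1 - x ^ d)

lemma lamG_anti (x : ℝ) (hx0 : 0 < x) (hx1 : x < 1) : Antitone (fun i => lamG x (i + 1)) := by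
  apply antitone_nat_of_succ_le
  intro n
  set d := n + 1 with hd
  have hd0 : (0 : ℝ) < d := by rw [hd]; positivity
  have hy : 0 < 1 - x := by linarith
  obtain ⟨t, ht, rfl⟩ : ∃ t : ℝ, 0 ≤ t ∧ t ^ 2 = x := ⟨√x, Real.sqrt_nonneg _, Real.sq_sqrt hx0.le⟩
  have ht1 : t ≤ 1 := by nlinarith
  have e1 := mul_neg_geom_sum (t ^ 2) d
  have e2 := mul_neg_geom_sum (t ^ 2) (d + 1)
  have a1 := geom_amgm t ht d
  have a2 := geom_amgm t ht (d + 1)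
  set G := ∑ i ∈ Finset.range d, (t ^ 2) ^ i
  set G' := ∑ i ∈ Finset.range (d + 1), (t ^ 2) ^ i
  have ht0 : 0 < t := by
    rcases ht.eq_or_lt with h | h
    · rw [← h] at hx0; simp at hx0
    · exact h
  have hG : 0 < G := lt_of_lt_of_le (by positivity) a1
  have hG' : 0 < G' := lt_of_lt_of_le (by positivity) a2
  have key : (d : ℝ) * (d + 1) * (t ^ 2) ^ d ≤ G * G' := by
    calc (d : ℝ) * (d + 1) * (t ^ 2) ^ d ≤ (d * t ^ (d - 1)) * (((d + 1 : ℕ) : ℝ) * t ^ (d + 1 - 1)) := by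
          have : (t ^ 2) ^ d ≤ t ^ (d - 1) * t ^ d := by
            rw [← pow_mul, ← pow_add]
            apply pow_le_pow_of_le_one ht ht1
            lia
          have h2 : 0 ≤ (d : ℝ) * (d + 1) := by positivity
          calc _ ≤ (d : ℝ) * (d + 1) * (t ^ (d - 1) * t ^ d) := by gcongr
            _ = _ := by rw [Nat.add_sub_cancel]; push_cast; ring
      _ ≤ G * G' := by gcongr
  simp only [lamG]
  rw [← e1, ← e2]
  have h3 : (t ^ 2) ^ d / ((1 - t ^ 2) * G) - (t ^ 2) ^ (d + 1) / ((1 - t ^ 2) * G') ≤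
      1 / (d * (1 - t ^ 2)) - 1 / (((d + 1 : ℕ) : ℝ) * (1 - t ^ 2)) := by
    have e3 : (t ^ 2) ^ d / ((1 - t ^ 2) * G) - (t ^ 2) ^ (d + 1) / ((1 - t ^ 2) * G')
        = (t ^ 2) ^ d / (G * G') / (1 - t ^ 2) := by
      have : (t ^ 2) ^ d * G' - (t ^ 2) ^ (d + 1) * G = (t ^ 2) ^ d := by
        have hy' := hy.ne'
        apply mul_left_cancel₀ hy'
        linear_combination (t ^ 2) ^ d * e2 - (t ^ 2) ^ (d + 1) * e1
      rw [div_sub_div _ _ (by positivity) (by positivity), div_div,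
        div_eq_div_iff (by positivity) (by positivity)]
      linear_combination ((1 - t ^ 2) ^ 2 * G * G') * this
    have e4 : 1 / (d * (1 - t ^ 2)) - 1 / (((d + 1 : ℕ) : ℝ) * (1 - t ^ 2)) =
        1 / (d * (d + 1)) / (1 - t ^ 2) := by
      push_cast
      field_simp
      ring
    rw [e3, e4]
    apply div_le_div_of_nonneg_right _ hy.le
    rw [div_le_div_iff₀ (by positivity) (by positivity)]
    linarith
  linarith

lemma lamG_nonneg (x : ℝ) (hx0 : 0 < x) (hx1 : x < 1) (i : ℕ) : 0 ≤ lamG x (i + 1) := by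
  have hy : 0 < 1 - x := by linarith
  have e1 := mul_neg_geom_sum x (i + 1)
  have h : ((i + 1 : ℕ) : ℝ) * x ^ (i + 1) ≤ ∑ j ∈ Finset.range (i + 1), x ^ j := by
    have : ∑ j ∈ Finset.range (i + 1), x ^ (i + 1) ≤ ∑ j ∈ Finset.range (i + 1), x ^ j := by
      apply Finset.sum_le_sum
      intro j hj
      apply pow_le_pow_of_le_one hx0.le hx1.le
      have : j < i + 1 := by simpa using hj
      lia
    simpa using this
  have hG : 0 < ∑ j ∈ Finset.range (i + 1), x ^ j := lt_of_lt_of_le (by positivity) h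
  rw [lamG, ← e1, sub_nonneg, div_le_div_iff₀ (by positivity) (by positivity)]
  nlinarith

lemma lamG_one (x : ℝ) (hx1 : x < 1) : lamG x 1 = 1 := by
  have : 1 - x ≠ 0 := by linarith
  simp [lamG]
  field_simp

lemma quad_vals {N : ℕ} {χ : DirichletCharacter ℂ N} (hχ : χ ^ 2 = 1) (a : ZMod N) :
    χ a = ((χ a).re : ℂ) := by
  rcases MulChar.isQuadratic_iff_sq_eq_one.mpr hχ a with h | h | h <;> simp [h]

lemma zetaMul_apply' {N : ℕ} (χ : DirichletCharacter ℂ N) (n : ℕ) :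
    χ.zetaMul n = ∑ d ∈ n.divisors, χ (d : ZMod N) := by
  rw [DirichletCharacter.zetaMul, ArithmeticFunction.coe_zeta_mul_apply]
  apply Finset.sum_congr rfl
  intro d hd
  exact if_neg (Nat.pos_of_mem_divisors hd).ne'

lemma zetaMul_sq {N : ℕ} {χ : DirichletCharacter ℂ N} (hχ : χ ^ 2 = 1) (m : ℕ) (hm : m ≠ 0) :
    1 ≤ (χ.zetaMul (m ^ 2)).re := by
  have hm2 : m ^ 2 ≠ 0 := pow_ne_zero _ hm
  have : ∃ a : ℝ, 1 ≤ a ∧ χ.zetaMul (m ^ 2) = a := by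
    rw [χ.isMultiplicative_zetaMul.multiplicative_factorization _ hm2]
    apply Finset.prod_induction _ (fun z : ℂ => ∃ a : ℝ, 1 ≤ a ∧ z = a)
    · rintro z w ⟨a, ha, rfl⟩ ⟨b, hb, rfl⟩
      exact ⟨a * b, one_le_mul_of_one_le_of_one_le ha hb, by push_cast; rfl⟩
    · exact ⟨1, le_rfl, by simp⟩
    · intro p hp
      have hp' : p.Prime := Nat.prime_of_mem_primeFactors hp
      have e : (m ^ 2).factorization p = 2 * m.factorization p := by simp
      rw [e]
      set k := m.factorization p
      beta_reduce
      rw [zetaMul_apply', Nat.sum_divisors_prime_pow hp']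
      simp only [Nat.cast_pow, map_pow]
      rcases MulChar.isQuadratic_iff_sq_eq_one.mpr hχ p with h | h | h
      · refine ⟨1, le_rfl, ?_⟩
        rw [Finset.sum_range_succ']
        simp [h]
      · refine ⟨2 * k + 1, by simp, ?_⟩
        simp [h]
      · refine ⟨1, le_rfl, ?_⟩
        rw [h, neg_one_geom_sum, if_neg (by simp [Nat.even_add_one])]
        simp
  obtain ⟨a, ha, h⟩ := this
  rw [h]
  simpa using ha

lemma zetaMul_re {N : ℕ} (χ : DirichletCharacter ℂ N) (n : ℕ) :
    (χ.zetaMul n).re = ∑ d ∈ n.divisors, (χ (d : ZMod N)).re := by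
  rw [zetaMul_apply', Complex.re_sum]


lemma sum_multiples (x : ℝ) (hx0 : 0 < x) (hx1 : x < 1) (K d : ℕ) (hd : 1 ≤ d) :
    |x ^ d / (1 - x ^ d) - ∑ n ∈ (Finset.Icc 1 K).filter (fun n => d ∣ n), x ^ n|
      ≤ x ^ K / (1 - x) := by
  have himg : (Finset.Icc 1 K).filter (fun n => d ∣ n) =
      (Finset.range (K / d)).image (fun m => d * (m + 1)) := by
    ext n
    simp only [Finset.mem_filter, Finset.mem_Icc, Finset.mem_image, Finset.mem_range]
    constructor
    · rintro ⟨⟨h1, h2⟩, m, rfl⟩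
      have hm : 0 < m := Nat.pos_of_mul_pos_left (by lia : 0 < d * m)
      refine ⟨m - 1, ?_, by congr 1; lia⟩
      have : m ≤ K / d := (Nat.le_div_iff_mul_le (by lia)).mpr (by rwa [mul_comm])
      lia
    · rintro ⟨m, hm, rfl⟩
      have : (m + 1) * d ≤ K := (Nat.le_div_iff_mul_le (by lia)).mp hm
      refine ⟨⟨by nlinarith, by rwa [mul_comm]⟩, dvd_mul_right _ _⟩
  rw [himg, Finset.sum_image (by
    intro a _ b _ h
    have := Nat.eq_of_mul_eq_mul_left (by lia : 0 < d) h
    lia)]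
  set y := x ^ d with hy
  have hy0 : 0 < y := by positivity
  have hyx : y ≤ x := by
    simpa using pow_le_pow_of_le_one hx0.le hx1.le hd
  have hy1 : y < 1 := by linarith
  have e : ∑ m ∈ Finset.range (K / d), x ^ (d * (m + 1)) = (y - y ^ (K / d + 1)) / (1 - y) := by
    have h1 : ∑ m ∈ Finset.range (K / d), x ^ (d * (m + 1)) =
        y * ∑ m ∈ Finset.range (K / d), y ^ m := by
      rw [Finset.mul_sum]
      apply Finset.sum_congr rfl
      intro m _
      rw [pow_mul, pow_succ, mul_comm]
    rw [h1, eq_div_iff (by linarith)]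
    have := mul_neg_geom_sum y (K / d)
    rw [pow_succ]
    linear_combination y * this
  rw [e, ← sub_div, sub_sub_cancel, abs_of_nonneg (div_nonneg (by positivity) (by linarith))]
  apply div_le_div₀ (by positivity) _ (by linarith) (by linarith)
  rw [hy, ← pow_mul]
  apply pow_le_pow_of_le_one hx0.le hx1.le
  have := Nat.lt_mul_div_succ K (by lia : 0 < d)
  lia

/-- finite Lambert identity -/
lemma lambert_finite (c : ℕ → ℝ) (x : ℝ) (K : ℕ) :
    ∑ n ∈ Finset.Icc 1 K, (∑ d ∈ n.divisors, c d) * x ^ n =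
    ∑ d ∈ Finset.Icc 1 K, c d * ∑ n ∈ (Finset.Icc 1 K).filter (fun n => d ∣ n), x ^ n := by
  simp_rw [Finset.sum_mul, Finset.mul_sum]
  apply Finset.sum_comm'
  intro n d
  simp only [Finset.mem_Icc, Nat.mem_divisors, Finset.mem_filter]
  constructor
  · rintro ⟨⟨h1, h2⟩, h3, h4⟩
    exact ⟨⟨⟨h1, h2⟩, h3⟩, Nat.pos_of_dvd_of_pos h3 (by lia), (Nat.le_of_dvd (by lia) h3).trans h2⟩
  · rintro ⟨⟨⟨h1, h2⟩, h3⟩, h4⟩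
    exact ⟨⟨h1, h2⟩, h3, by lia⟩

lemma sum_Icc_one_range (f : ℕ → ℝ) (n : ℕ) :
    ∑ k ∈ Finset.Icc 1 n, f k = ∑ i ∈ Finset.range n, f (i + 1) := by
  induction n with
  | zero => simp
  | succ n ih => rw [Finset.sum_Icc_succ_top (by lia), ih, Finset.sum_range_succ]

lemma quad_finite {N : ℕ} [NeZero N] (χ : DirichletCharacter ℂ N) (hχ : χ ≠ 1) (hq : χ ^ 2 = 1)
    (K : ℕ) (hK : (4 * N) ^ 2 ≤ K) (x : ℝ) (hx : x = 1 - 1 / (32 * (N : ℝ) ^ 2)) :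
    (N : ℝ) - K * (x ^ K / (1 - x)) ≤
      (∑ d ∈ Finset.Icc 1 K, (χ (d : ZMod N)).re / d) / (1 - x) := by
  have hN : (1 : ℝ) ≤ N := by exact_mod_cast NeZero.one_le
  have hN2 : (1 : ℝ) ≤ (N : ℝ) ^ 2 := one_le_pow₀ hN
  have hy0 : 0 < 1 / (32 * (N : ℝ) ^ 2) := by positivity
  have hy1 : 1 / (32 * (N : ℝ) ^ 2) ≤ 1 / 32 := by
    apply one_div_le_one_div_of_le (by norm_num); linarith
  have hx0 : 0 < x := by rw [hx]; linarith
  have hx1 : x < 1 := by rw [hx]; linarith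
  set c : ℕ → ℝ := fun d => (χ (d : ZMod N)).re with hc
  have hc1 : ∀ d, |c d| ≤ 1 := fun d => (Complex.abs_re_le_norm _).trans (χ.norm_le_one _)
  -- the smooth part
  have h1 : |∑ d ∈ Finset.Icc 1 K, lamG x d * c d| ≤ N := by
    have := abel_bound (fun i => lamG x (i + 1)) (fun i => c (i + 1)) (lamG_anti x hx0 hx1)
      (lamG_nonneg x hx0 hx1) N (fun n => by
        have h2 := charsum_Icc_le χ hχ n
        have h3 : ∑ i ∈ Finset.range n, c (i + 1) =
            (∑ k ∈ Finset.Icc 1 n, χ (k : ZMod N)).re := by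
          rw [Complex.re_sum, sum_Icc_one_range]
        rw [h3]
        exact (Complex.abs_re_le_norm _).trans h2) K
    simp only [zero_add, lamG_one x hx1, mul_one] at this
    rwa [← sum_Icc_one_range (fun d => lamG x d * c d)] at this
  -- the Lambert part
  have h2 : (2 * N : ℝ) ≤ ∑ n ∈ Finset.Icc 1 K, (∑ d ∈ n.divisors, c d) * x ^ n := by
    have hr : ∀ n : ℕ, 0 ≤ (∑ d ∈ n.divisors, c d) := by
      intro n
      rw [← zetaMul_re]
      exact (Complex.le_def.mp (DirichletCharacter.zetaMul_nonneg hq n)).1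
    have hsub : (Finset.Icc 1 (4 * N)).image (fun m => m ^ 2) ⊆ Finset.Icc 1 K := by
      intro n hn
      simp only [Finset.mem_image, Finset.mem_Icc] at hn ⊢
      obtain ⟨m, ⟨hm1, hm2⟩, rfl⟩ := hn
      exact ⟨Nat.one_le_pow _ _ (by lia), (Nat.pow_le_pow_left hm2 2).trans hK⟩
    calc (2 * N : ℝ) = ∑ m ∈ Finset.Icc 1 (4 * N), (1 / 2 : ℝ) := by
          simp; ring
      _ ≤ ∑ m ∈ Finset.Icc 1 (4 * N), (∑ d ∈ (m ^ 2).divisors, c d) * x ^ (m ^ 2) := by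
          apply Finset.sum_le_sum
          intro m hm
          simp only [Finset.mem_Icc] at hm
          have a1 : 1 ≤ ∑ d ∈ (m ^ 2).divisors, c d := by
            have := zetaMul_sq hq m (by lia)
            rwa [zetaMul_re] at this
          have a2 : (1 / 2 : ℝ) ≤ x ^ (m ^ 2) := by
            have b1 := one_add_mul_le_pow (show (-2 : ℝ) ≤ -(1 / (32 * (N : ℝ) ^ 2)) by linarith)
              (m ^ 2)
            rw [← sub_eq_add_neg, ← hx] at b1
            refine le_trans ?_ b1
            have b2 : ((m ^ 2 : ℕ) : ℝ) ≤ 16 * (N : ℝ) ^ 2 := by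
              have : m ^ 2 ≤ 16 * N ^ 2 := by nlinarith
              exact_mod_cast this
            have b3 : ((m ^ 2 : ℕ) : ℝ) * (1 / (32 * (N : ℝ) ^ 2)) ≤ 1 / 2 := by
              rw [mul_one_div, div_le_iff₀ (by positivity)]
              linarith
            linarith
          nlinarith
      _ = ∑ n ∈ (Finset.Icc 1 (4 * N)).image (fun m => m ^ 2), (∑ d ∈ n.divisors, c d) * x ^ n := by
          rw [Finset.sum_image]
          intro a _ b _ h
          exact Nat.pow_left_injective (by norm_num : (2 : ℕ) ≠ 0) h
      _ ≤ _ := by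
          apply Finset.sum_le_sum_of_subset_of_nonneg hsub
          intro n _ _
          exact mul_nonneg (hr n) (by positivity)
  rw [lambert_finite] at h2
  have h3 : |∑ d ∈ Finset.Icc 1 K, c d * (x ^ d / (1 - x ^ d) -
      ∑ n ∈ (Finset.Icc 1 K).filter (fun n => d ∣ n), x ^ n)| ≤ K * (x ^ K / (1 - x)) := by
    refine (Finset.abs_sum_le_sum_abs _ _).trans ?_
    calc _ ≤ ∑ d ∈ Finset.Icc 1 K, x ^ K / (1 - x) := by
          apply Finset.sum_le_sum
          intro d hd
          rw [abs_mul]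
          have := sum_multiples x hx0 hx1 K d (Finset.mem_Icc.mp hd).1
          calc _ ≤ 1 * (x ^ K / (1 - x)) := by
                apply mul_le_mul (hc1 d) this (abs_nonneg _) zero_le_one
            _ = _ := one_mul _
      _ = _ := by simp
  have h4 : (∑ d ∈ Finset.Icc 1 K, c d / d) / (1 - x) =
      ∑ d ∈ Finset.Icc 1 K, lamG x d * c d +
      (∑ d ∈ Finset.Icc 1 K, c d * (x ^ d / (1 - x ^ d) -
      ∑ n ∈ (Finset.Icc 1 K).filter (fun n => d ∣ n), x ^ n) +
      ∑ d ∈ Finset.Icc 1 K, c d * ∑ n ∈ (Finset.Icc 1 K).filter (fun n => d ∣ n), x ^ n) := by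
    rw [← Finset.sum_add_distrib, ← Finset.sum_add_distrib, Finset.sum_div]
    apply Finset.sum_congr rfl
    intro d _
    rw [lamG, div_div, div_eq_mul_one_div (c d)]
    ring
  rw [h4]
  have := abs_le.mp h1
  have := abs_le.mp h3
  linarith


lemma tendsto_Mint_one {N : ℕ} [NeZero N] (χ : DirichletCharacter ℂ N) (hχ : χ ≠ 1) :
    Tendsto (fun K : ℕ => ∑ d ∈ Finset.Icc 1 K, (χ (d : ZMod N)).re / d) atTop
      (nhds (Mint χ 1).re) := by
  set f : ℝ → ℂ := fun t => ((t⁻¹ : ℝ) : ℂ) with hf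
  have hder : ∀ t : ℝ, t ≠ 0 → HasDerivAt f ((-(t ^ 2)⁻¹ : ℝ) : ℂ) t := fun t ht =>
    (hasDerivAt_inv ht).ofReal_comp
  have hA : ∀ n : ℕ, ∑ k ∈ Finset.Icc 0 n, χ (k : ZMod N) =
      ∑ k ∈ Finset.Icc 1 n, χ (k : ZMod N) := by
    intro n
    rw [charsum_Icc_eq χ hχ, Nat.range_succ_eq_Icc_zero]
  have key := tendsto_sum_mul_atTop_nhds_one_sub_integral₀ (fun n : ℕ => χ (n : ZMod N)) (f := f)
    (by simpa using char_zero χ hχ)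
    (fun t ht => (hder t (by have : (1 : ℝ) ≤ t := ht; linarith)).differentiableAt) ?_ (l := 0) ?_
    (g := fun t => t ^ (-2 : ℝ)) ?_ ?_
  · have e : (0 : ℂ) - ∫ t in Set.Ioi (1 : ℝ), deriv f t * ∑ k ∈ Finset.Icc 0 ⌊t⌋₊, χ (k : ZMod N)
        = Mint χ 1 := by
      rw [zero_sub, ← MeasureTheory.integral_neg]
      apply MeasureTheory.setIntegral_congr_fun measurableSet_Ioi
      intro t ht
      have ht0 : (0 : ℝ) < t := by
        have : (1 : ℝ) < t := ht
        linarith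
      simp only
      rw [(hder t ht0.ne').deriv, hA, mul_comm, ← mul_neg]
      congr 1
      rw [← Complex.ofReal_neg, neg_neg, show (-(1 + 1) : ℝ) = -((2 : ℕ) : ℝ) by norm_num,
        Real.rpow_neg ht0.le, Real.rpow_natCast]
    rw [e] at key
    have k2 := (Complex.continuous_re.tendsto _).comp key
    refine k2.congr ?_
    intro K
    simp only [Function.comp]
    rw [Complex.re_sum, ← Nat.range_succ_eq_Icc_zero, Finset.sum_range_succ', sum_Icc_one_range]
    simp only [hf, Nat.cast_zero, char_zero χ hχ, mul_zero, Complex.zero_re, add_zero]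
    apply Finset.sum_congr rfl
    intro i _
    rw [Complex.re_ofReal_mul]
    rw [div_eq_inv_mul]
  · have : ContinuousOn (fun t : ℝ => ((-(t ^ 2)⁻¹ : ℝ) : ℂ)) (Set.Ici 1) := by
      apply Complex.continuous_ofReal.comp_continuousOn
      apply ContinuousOn.neg
      apply ContinuousOn.inv₀ (by fun_prop)
      intro t ht
      have : (1 : ℝ) ≤ t := ht
      positivity
    refine MeasureTheory.LocallyIntegrableOn.congr ?_ (this.locallyIntegrableOn measurableSet_Ici)
    filter_upwards [MeasureTheory.ae_restrict_mem measurableSet_Ici] with t ht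
    exact ((hder t (by have : (1 : ℝ) ≤ t := ht; linarith)).deriv).symm
  · rw [tendsto_zero_iff_norm_tendsto_zero]
    refine squeeze_zero (fun _ => norm_nonneg _) (g := fun n : ℕ => (N : ℝ) * (n : ℝ)⁻¹) ?_ ?_
    · intro n
      rw [norm_mul, hA, mul_comm]
      apply mul_le_mul (charsum_Icc_le χ hχ n) _ (norm_nonneg _) (by positivity)
      simp [hf]
    · simpa using (tendsto_inv_atTop_nhds_zero_nat (𝕜 := ℝ)).const_mul (N : ℝ)
  · apply Asymptotics.IsBigO.of_bound (N : ℝ)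
    filter_upwards [eventually_gt_atTop 0] with t ht
    rw [(hder t ht.ne').deriv, hA, norm_mul, mul_comm]
    apply mul_le_mul (charsum_Icc_le χ hχ _) _ (norm_nonneg _) (by positivity)
    rw [Complex.norm_real, norm_neg, show (-2 : ℝ) = -((2 : ℕ) : ℝ) by norm_num,
        Real.rpow_neg ht.le, Real.rpow_natCast]
  · exact ⟨Set.Ioi 1, Ioi_mem_atTop 1, integrableOn_Ioi_rpow_of_lt (by norm_num) one_pos⟩

lemma Mint_one_quad {N : ℕ} [NeZero N] (χ : DirichletCharacter ℂ N) (hχ : χ ≠ 1) (hq : χ ^ 2 = 1) :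
    1 / (32 * (N : ℝ)) ≤ (Mint χ 1).re := by
  have hN : (1 : ℝ) ≤ N := by exact_mod_cast NeZero.one_le
  have hN2 : (1 : ℝ) ≤ (N : ℝ) ^ 2 := one_le_pow₀ hN
  have hy0 : 0 < 1 / (32 * (N : ℝ) ^ 2) := by positivity
  have hy1 : 1 / (32 * (N : ℝ) ^ 2) ≤ 1 / 32 := by
    apply one_div_le_one_div_of_le (by norm_num); linarith
  set x := 1 - 1 / (32 * (N : ℝ) ^ 2) with hx
  have hx0 : 0 < x := by rw [hx]; linarith
  have hx1 : x < 1 := by rw [hx]; linarith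
  have t1 := (tendsto_Mint_one χ hχ).div_const (1 - x)
  have t2 : Tendsto (fun K : ℕ => (N : ℝ) - K * (x ^ K / (1 - x))) atTop (nhds N) := by
    have := (tendsto_self_mul_const_pow_of_lt_one hx0.le hx1).div_const (1 - x)
    simp only [zero_div] at this
    have h2 := this.const_sub (N : ℝ)
    simp only [sub_zero] at h2
    refine h2.congr ?_
    intro K
    ring
  have h := le_of_tendsto_of_tendsto t2 t1 (by
    filter_upwards [eventually_ge_atTop ((4 * N) ^ 2)] with K hK
    exact quad_finite χ hχ hq K hK x hx)
  rw [le_div_iff₀ (by linarith)] at h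
  refine le_trans (le_of_eq ?_) h
  rw [hx]
  field_simp
  ring

lemma L_lower_quad {N : ℕ} [NeZero N] (χ : DirichletCharacter ℂ N) (hχ : χ ≠ 1) (hq : χ ^ 2 = 1)
    {u : ℝ} (hu : 1 < u) (hu2 : u ≤ 1 + 1 / (2048 * (N : ℝ) ^ 5)) :
    1 / (2048 * (N : ℝ) ^ 4) ≤ ‖LSeries (fun n => χ (n : ZMod N)) (u : ℂ)‖ := by
  have hN : (1 : ℝ) ≤ N := by exact_mod_cast NeZero.one_le
  have h1 := (Mint_one_quad χ hχ hq).trans (Complex.re_le_norm _)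
  have hd := Mint_sub_le χ hχ le_rfl hu.le
  have h6 : ‖Mint χ 1‖ - ‖Mint χ u‖ ≤ ‖Mint χ 1 - Mint χ u‖ := norm_sub_norm_le _ _
  have h7 : (N : ℝ) * (u - 1) ≤ 1 / (2048 * (N : ℝ) ^ 4) := by
    calc (N : ℝ) * (u - 1) ≤ N * (1 / (2048 * (N : ℝ) ^ 5)) := by
          gcongr; linarith
      _ = _ := by field_simp
  have h8 : 1 / (2048 * (N : ℝ) ^ 4) ≤ 1 / (64 * N) := by
    apply one_div_le_one_div_of_le (by positivity)
    have : (N : ℝ) ^ 1 ≤ (N : ℝ) ^ 4 := pow_le_pow_right₀ hN (by norm_num)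
    linarith
  have h9 : 1 / (32 * (N : ℝ)) = 1 / (64 * N) + 1 / (64 * N) := by field_simp; norm_num
  have h10 : 1 / (2048 * (N : ℝ) ^ 4) ≤ ‖Mint χ u‖ := by linarith
  rw [LSeries_eq_Mint χ hχ hu, norm_mul, Complex.norm_real, Real.norm_of_nonneg (by linarith)]
  nlinarith [norm_nonneg (Mint χ u)]

lemma L_lower {N : ℕ} [NeZero N] (χ : DirichletCharacter ℂ N) (hχ : χ ≠ 1)
    {u : ℝ} (hu : 1 < u) (hu2 : u ≤ 1 + 1 / (2048 * (N : ℝ) ^ 5)) :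
    1 / (2048 * (N : ℝ) ^ 4) ≤ ‖LSeries (fun n => χ (n : ZMod N)) (u : ℂ)‖ := by
  by_cases hq : χ ^ 2 = 1
  · exact L_lower_quad χ hχ hq hu hu2
  · exact L_lower_nonquad χ hq hu hu2

lemma L_upper {N : ℕ} [NeZero N] (χ : DirichletCharacter ℂ N) (hχ : χ ≠ 1)
    {u : ℝ} (hu : 1 < u) : ‖LSeries (fun n => χ (n : ZMod N)) (u : ℂ)‖ ≤ N := by
  have b2' := Mint_norm_le χ hχ (show 0 < u by linarith)
  rw [LSeries_eq_Mint χ hχ hu, norm_mul, Complex.norm_real, Real.norm_of_nonneg (by linarith)]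
  rwa [le_div_iff₀ (by linarith), mul_comm] at b2'


/-! ### Prime sums against characters -/

noncomputable def primeB {N : ℕ} (χ : DirichletCharacter ℂ N) (u : ℝ) : ℝ :=
  ∑' q : Nat.Primes, (χ ((q : ℕ) : ZMod N)).re * ((q : ℕ) : ℝ) ^ (-u)

noncomputable def cPrime : ℝ := ∑' q : Nat.Primes, ((q : ℕ) : ℝ) ^ (-2 : ℝ)

lemma cPrime_nonneg : 0 ≤ cPrime := tsum_nonneg fun _ => by positivity

lemma primes_summable {u : ℝ} (hu : 1 < u) :
    Summable (fun q : Nat.Primes => ((q : ℕ) : ℝ) ^ (-u)) :=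
  Nat.Primes.summable_rpow.mpr (by linarith)

lemma primeB_summable {N : ℕ} (χ : DirichletCharacter ℂ N) {u : ℝ} (hu : 1 < u) :
    Summable (fun q : Nat.Primes => (χ ((q : ℕ) : ZMod N)).re * ((q : ℕ) : ℝ) ^ (-u)) := by
  refine (primes_summable hu).of_norm_bounded ?_
  intro q
  rw [norm_mul, Real.norm_of_nonneg (show 0 ≤ ((q : ℕ) : ℝ) ^ (-u) by positivity)]
  apply mul_le_of_le_one_left (by positivity)
  rw [Real.norm_eq_abs]
  exact (Complex.abs_re_le_norm _).trans (χ.norm_le_one _)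

lemma primeB_log {N : ℕ} (χ : DirichletCharacter ℂ N) {u : ℝ} (hu : 1 < u) :
    |Real.log ‖LSeries (fun n => χ (n : ZMod N)) (u : ℂ)‖ - primeB χ u| ≤ cPrime := by
  have hs : 1 < (u : ℂ).re := by simpa using hu
  have H := DirichletCharacter.summable_neg_log_one_sub_mul_prime_cpow χ hs
  have E := DirichletCharacter.LSeries_eulerProduct_exp_log χ hs
  rw [← E, Complex.norm_exp, Real.log_exp, Complex.re_tsum H, primeB,
    ← ((Complex.hasSum_re H.hasSum).summable.tsum_sub (primeB_summable χ hu)), cPrime]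
  have hb : ∀ q : Nat.Primes, ‖(-Complex.log (1 - χ ((q : ℕ) : ZMod N) *
      ((q : ℕ) : ℂ) ^ (-(u : ℂ)))).re -
      (χ ((q : ℕ) : ZMod N)).re * ((q : ℕ) : ℝ) ^ (-u)‖ ≤ ((q : ℕ) : ℝ) ^ (-2 : ℝ) := by
    intro q
    have hq2 : (2 : ℝ) ≤ ((q : ℕ) : ℝ) := by exact_mod_cast q.2.two_le
    set z : ℂ := χ ((q : ℕ) : ZMod N) * ((q : ℕ) : ℂ) ^ (-(u : ℂ)) with hz
    have hzr : z = χ ((q : ℕ) : ZMod N) * ((((q : ℕ) : ℝ) ^ (-u) : ℝ) : ℂ) := by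
      rw [hz, Complex.ofReal_cpow (by positivity)]
      push_cast
      rfl
    have hre : (χ ((q : ℕ) : ZMod N)).re * ((q : ℕ) : ℝ) ^ (-u) = z.re := by
      rw [hzr, Complex.re_mul_ofReal]
    have hn : ‖z‖ ≤ ((q : ℕ) : ℝ)⁻¹ := by
      rw [hzr, norm_mul, Complex.norm_real, Real.norm_of_nonneg (by positivity)]
      calc _ ≤ 1 * ((q : ℕ) : ℝ) ^ (-u) := by
            gcongr; exact χ.norm_le_one _
        _ ≤ ((q : ℕ) : ℝ) ^ (-1 : ℝ) := by
            rw [one_mul]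
            exact Real.rpow_le_rpow_of_exponent_le (by linarith) (by linarith)
        _ = _ := Real.rpow_neg_one _
    have hn2 : ‖z‖ ≤ 1 / 2 := hn.trans (by
      rw [one_div]; exact inv_anti₀ (by norm_num) hq2)
    have key := Complex.norm_log_one_add_sub_self_le (z := -z) (by rw [norm_neg]; linarith)
    rw [norm_neg] at key
    rw [hre, ← Complex.sub_re, Real.norm_eq_abs]
    refine (Complex.abs_re_le_norm _).trans ?_
    have e : -Complex.log (1 - z) - z = -(Complex.log (1 + -z) - -z) := by
      rw [← sub_eq_add_neg]; ring
    rw [e, norm_neg]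
    refine key.trans ?_
    have h1 : (1 - ‖z‖)⁻¹ ≤ 2 := by
      rw [inv_le_comm₀ (by linarith) (by norm_num)]
      linarith
    calc ‖z‖ ^ 2 * (1 - ‖z‖)⁻¹ / 2 ≤ ‖z‖ ^ 2 * 2 / 2 := by gcongr
      _ = ‖z‖ ^ 2 := by ring
      _ ≤ (((q : ℕ) : ℝ)⁻¹) ^ 2 := by gcongr
      _ = _ := by
        rw [show (-2 : ℝ) = -((2 : ℕ) : ℝ) by norm_num, Real.rpow_neg (by positivity),
          Real.rpow_natCast, inv_pow]
  have := tsum_of_norm_bounded (primes_summable (u := 2) (by norm_num)).hasSum hb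
  rwa [Real.norm_eq_abs] at this

lemma primeB_one_lower {η : ℝ} (hη : 0 < η) :
    Real.log (1 / η) - cPrime ≤ ∑' q : Nat.Primes, ((q : ℕ) : ℝ) ^ (-(1 + η)) := by
  have hu : 1 < 1 + η := by linarith
  have h := primeB_log (1 : DirichletCharacter ℂ 1) hu
  have e1 : primeB (1 : DirichletCharacter ℂ 1) (1 + η) =
      ∑' q : Nat.Primes, ((q : ℕ) : ℝ) ^ (-(1 + η)) := by
    unfold primeB
    apply tsum_congr
    intro q
    rw [MulChar.one_apply (isUnit_of_subsingleton _)]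
    simp
  have e2 : (fun n : ℕ => (1 : DirichletCharacter ℂ 1) (n : ZMod 1)) = fun _ => (1 : ℂ) := by
    funext n
    rw [MulChar.one_apply (isUnit_of_subsingleton _)]
  rw [e1, e2, ← zr_eq hu] at h
  have hl := le_zr hu
  rw [Complex.norm_real, Real.norm_of_nonneg (le_trans (by
    simp only [add_sub_cancel_left]; positivity) hl)] at h
  have h3 : Real.log (1 / η) ≤ Real.log (∑' n : ℕ, (n : ℝ) ^ (-(1 + η))) := by
    apply Real.log_le_log (by positivity)
    simpa using hl
  have := abs_le.mp h
  linarith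

lemma primeB_principal {p : ℕ} (hp : p.Prime) {η : ℝ} (hη : 0 < η) :
    Real.log (1 / η) - cPrime - 1 ≤ primeB (1 : DirichletCharacter ℂ p) (1 + η) := by
  have hu : 1 < 1 + η := by linarith
  have h1 := primeB_one_lower hη
  haveI := Fact.mk hp
  obtain ⟨P, hP⟩ : ∃ P : Nat.Primes, (P : ℕ) = p := ⟨⟨p, hp⟩, rfl⟩
  have hs : ∀ q : Nat.Primes, ((q : ℕ) : ℝ) ^ (-(1 + η)) -
      ((1 : DirichletCharacter ℂ p) ((q : ℕ) : ZMod p)).re * ((q : ℕ) : ℝ) ^ (-(1 + η)) =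
      if q = P then (p : ℝ) ^ (-(1 + η)) else 0 := by
    intro q
    split_ifs with h
    · subst h
      have h0 : (1 : DirichletCharacter ℂ p) ((p : ℕ) : ZMod p) = 0 := by
        rw [ZMod.natCast_self]
        exact MulChar.map_nonunit _ not_isUnit_zero
      rw [hP, h0]
      simp
    · rw [MulChar.one_apply]
      · simp
      · rw [isUnit_iff_ne_zero]
        intro h0
        rw [ZMod.natCast_eq_zero_iff] at h0
        exact h (Subtype.ext (((Nat.prime_dvd_prime_iff_eq hp q.2).mp h0).symm.trans hP.symm))
  have h2 := (primes_summable hu).tsum_sub (primeB_summable (1 : DirichletCharacter ℂ p) hu)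
  rw [tsum_congr hs, tsum_ite_eq] at h2
  have h3 : (p : ℝ) ^ (-(1 + η)) ≤ 1 :=
    Real.rpow_le_one_of_one_le_of_nonpos (by exact_mod_cast hp.one_le) (by linarith)
  unfold primeB
  linarith

noncomputable def primeM (p : ℕ) (u : ℝ) : ℝ :=
  ∑' q : Nat.Primes, if ((q : ℕ) : ZMod p) = -1 then ((q : ℕ) : ℝ) ^ (-u) else 0

lemma char_neg_one_re {p : ℕ} (χ : DirichletCharacter ℂ p) :
    χ (-1) = (((χ (-1)).re : ℝ) : ℂ) ∧ |(χ (-1)).re| = 1 := by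
  have h : χ (-1) * χ (-1) = 1 := by rw [← map_mul]; simp
  rcases mul_self_eq_one_iff.mp h with h | h <;> rw [h] <;> simp

lemma primeM_eq {p : ℕ} (hp : p.Prime) {u : ℝ} (hu : 1 < u) :
    ((p : ℝ) - 1) * primeM p u =
      ∑ χ : DirichletCharacter ℂ p, (χ (-1)).re * primeB χ u := by
  haveI := Fact.mk hp
  unfold primeM primeB
  simp_rw [← tsum_mul_left]
  rw [← Summable.tsum_finsetSum (fun χ _ => (primeB_summable χ hu).mul_left _)]
  apply tsum_congr
  intro q
  have h := DirichletCharacter.sum_char_inv_mul_char_eq ℂ (n := p) (a := -1)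
    (isUnit_one.neg) ((q : ℕ) : ZMod p)
  have hi : (-1 : ZMod p)⁻¹ = -1 := by rw [inv_neg, inv_one]
  rw [hi] at h
  have h2 := congrArg Complex.re h
  rw [Complex.re_sum] at h2
  have h3 : ∀ χ : DirichletCharacter ℂ p, (χ (-1) * χ ((q : ℕ) : ZMod p)).re =
      (χ (-1)).re * (χ ((q : ℕ) : ZMod p)).re := by
    intro χ
    conv_lhs => rw [(char_neg_one_re χ).1]
    rw [Complex.re_ofReal_mul]
  simp_rw [h3] at h2
  simp_rw [← mul_assoc]
  rw [← Finset.sum_mul, h2]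
  have : ((p - 1 : ℕ) : ℝ) = (p : ℝ) - 1 := by
    rw [Nat.cast_sub hp.one_le]; simp
  by_cases hq : ((q : ℕ) : ZMod p) = -1
  · rw [if_pos hq, if_pos hq.symm, Nat.totient_prime hp]
    simp [this]
  · rw [if_neg hq, if_neg (fun h => hq h.symm)]
    simp

lemma primeB_abs_le {p : ℕ} (hp : p.Prime) (χ : DirichletCharacter ℂ p) (hχ : χ ≠ 1)
    {η : ℝ} (hη : 0 < η) (hη2 : η ≤ 1 / (2048 * (p : ℝ) ^ 5)) :
    |primeB χ (1 + η)| ≤ cPrime + 8 + 4 * p := by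
  haveI : NeZero p := ⟨hp.ne_zero⟩
  have hu : 1 < 1 + η := by linarith
  have hp1 : (1 : ℝ) ≤ p := by exact_mod_cast hp.one_le
  have h1 := primeB_log χ hu
  have h2 := L_lower χ hχ hu (by linarith)
  have h3 := L_upper χ hχ hu
  set X := ‖LSeries (fun n => χ (n : ZMod p)) ((1 + η : ℝ) : ℂ)‖ with hX
  have hpos : 0 < 1 / (2048 * (p : ℝ) ^ 4) := by positivity
  have l1 := Real.log_le_log hpos h2
  have l2 := Real.log_le_log (hpos.trans_le h2) h3
  have l3 : Real.log p ≤ p := by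
    have := Real.log_le_sub_one_of_pos (show (0 : ℝ) < p by linarith)
    linarith
  have l4 : Real.log 2048 ≤ 8 := by
    rw [show (2048 : ℝ) = 2 ^ 11 by norm_num, Real.log_pow]
    have := Real.log_two_lt_d9
    push_cast
    linarith
  have l5 : Real.log (1 / (2048 * (p : ℝ) ^ 4)) = -(Real.log 2048 + 4 * Real.log p) := by
    rw [one_div, Real.log_inv, Real.log_mul (by norm_num) (by positivity), Real.log_pow]
    norm_num
  rw [l5] at l1
  have := abs_le.mp h1
  rw [abs_le]
  constructor <;> linarith

lemma primeM_lower {p : ℕ} (hp : p.Prime) {η : ℝ} (hη : 0 < η)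
    (hη2 : η ≤ 1 / (2048 * (p : ℝ) ^ 5)) :
    Real.log (1 / η) / p - (2 * cPrime + 13) * p ≤ primeM p (1 + η) := by
  haveI : NeZero p := ⟨hp.ne_zero⟩
  have hu : 1 < 1 + η := by linarith
  have hp2 : (2 : ℝ) ≤ p := by exact_mod_cast hp.two_le
  have hc := cPrime_nonneg
  have h0 := primeM_eq hp hu
  rw [← Finset.add_sum_erase _ _ (Finset.mem_univ (1 : DirichletCharacter ℂ p))] at h0
  have h1 := primeB_principal hp hη
  have e1 : ((1 : DirichletCharacter ℂ p) (-1)).re = 1 := by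
    rw [MulChar.one_apply isUnit_one.neg]; simp
  rw [e1, one_mul] at h0
  have hcard : ((Finset.univ.erase (1 : DirichletCharacter ℂ p)).card : ℝ) = (p : ℝ) - 2 := by
    rw [Finset.card_erase_of_mem (Finset.mem_univ _), Finset.card_univ, ← Nat.card_eq_fintype_card,
      DirichletCharacter.card_eq_totient_of_hasEnoughRootsOfUnity, Nat.totient_prime hp]
    rw [Nat.sub_sub, Nat.cast_sub hp.two_le]
    norm_num
  have h2 : |∑ χ ∈ Finset.univ.erase (1 : DirichletCharacter ℂ p),
      (χ (-1)).re * primeB χ (1 + η)| ≤ ((p : ℝ) - 2) * (cPrime + 8 + 4 * p) := by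
    refine (Finset.abs_sum_le_sum_abs _ _).trans ?_
    rw [← hcard, ← nsmul_eq_mul]
    apply Finset.sum_le_card_nsmul
    intro χ hχ
    rw [abs_mul, (char_neg_one_re χ).2, one_mul]
    exact primeB_abs_le hp χ (Finset.ne_of_mem_erase hχ) hη hη2
  have h3 := (abs_le.mp h2).1
  have hL : 0 ≤ Real.log (1 / η) := by
    apply Real.log_nonneg
    rw [le_div_iff₀ hη, one_mul]
    refine hη2.trans ?_
    rw [div_le_one (by positivity)]
    have : (1 : ℝ) ≤ (p : ℝ) ^ 5 := one_le_pow₀ (by linarith)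
    linarith
  set L := Real.log (1 / η)
  have hM : (p - 1) * (L / p - (2 * cPrime + 13) * p) ≤ (p - 1) * primeM p (1 + η) := by
    rw [h0]
    have a1 : ((p : ℝ) - 1) * (L / p) ≤ L := by
      rw [mul_div_assoc', div_le_iff₀ (by linarith)]
      nlinarith
    have a2 : (1 + cPrime) + ((p : ℝ) - 2) * (cPrime + 8 + 4 * p) ≤
        (p - 1) * ((2 * cPrime + 13) * p) := by
      nlinarith [mul_nonneg hc (show (0 : ℝ) ≤ p - 2 by linarith),
        mul_nonneg (mul_nonneg hc (show (0 : ℝ) ≤ p - 2 by linarith))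
          (show (0 : ℝ) ≤ p by linarith)]
    linarith
  exact le_of_mul_le_mul_left hM (by linarith)


noncomputable def primeSet (p Z : ℕ) : Finset ℕ :=
  (Finset.Icc 1 Z).filter (fun q => q.Prime ∧ (q : ZMod p) = -1)

noncomputable def primeSum (p : ℕ) (z : ℝ) : ℝ := ∑ q ∈ primeSet p ⌊z⌋₊, 1 / (q : ℝ)

lemma primeM_split (p : ℕ) {η z : ℝ} (hη : 0 < η) (hz : 0 < z) :
    primeM p (1 + η) ≤ primeSum p z + z ^ (-(η / 2)) * ((1 + η / 2) / (η / 2)) := by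
  have hu : 1 < 1 + η / 2 := by linarith
  unfold primeM
  apply Real.tsum_le_of_sum_le
  · intro q
    show (0 : ℝ) ≤ if ((q : ℕ) : ZMod p) = -1 then ((q : ℕ) : ℝ) ^ (-(1 + η)) else 0
    split_ifs <;> positivity
  intro T
  set e : Nat.Primes ↪ ℕ := ⟨fun q => (q : ℕ), fun a b h => Subtype.ext h⟩ with he
  have h1 : ∑ q ∈ T, (if ((q : ℕ) : ZMod p) = -1 then ((q : ℕ) : ℝ) ^ (-(1 + η)) else 0) =
      ∑ n ∈ T.map e, (if (n : ZMod p) = -1 then (n : ℝ) ^ (-(1 + η)) else 0) := by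
    rw [Finset.sum_map]
    rfl
  rw [h1]
  have hT : ∀ n ∈ T.map e, n.Prime := by
    intro n hn
    rw [Finset.mem_map] at hn
    obtain ⟨q, _, rfl⟩ := hn
    exact q.2
  have h2 : ∀ n ∈ T.map e, (if (n : ZMod p) = -1 then (n : ℝ) ^ (-(1 + η)) else 0) ≤
      (if n ∈ primeSet p ⌊z⌋₊ then 1 / (n : ℝ) else 0) +
        z ^ (-(η / 2)) * (n : ℝ) ^ (-(1 + η / 2)) := by
    intro n hn
    have hn1 : (1 : ℝ) ≤ n := by exact_mod_cast (hT n hn).one_le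
    have hpos : 0 ≤ z ^ (-(η / 2)) * (n : ℝ) ^ (-(1 + η / 2)) := by positivity
    by_cases hm : (n : ZMod p) = -1
    · rw [if_pos hm]
      by_cases hnz : n ∈ primeSet p ⌊z⌋₊
      · rw [if_pos hnz]
        have : (n : ℝ) ^ (-(1 + η)) ≤ 1 / n := by
          rw [one_div, ← Real.rpow_neg_one]
          exact Real.rpow_le_rpow_of_exponent_le hn1 (by linarith)
        linarith
      · rw [if_neg hnz, zero_add]
        have hzn : z < n := by
          by_contra hc
          push Not at hc
          apply hnz
          simp only [primeSet, Finset.mem_filter, Finset.mem_Icc]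
          exact ⟨⟨(hT n hn).one_le, Nat.le_floor hc⟩, hT n hn, hm⟩
        have e1 : (n : ℝ) ^ (-(1 + η)) = (n : ℝ) ^ (-(η / 2)) * (n : ℝ) ^ (-(1 + η / 2)) := by
          rw [← Real.rpow_add (by linarith)]
          congr 1; ring
        rw [e1]
        gcongr ?_ * _
        exact Real.rpow_le_rpow_of_nonpos hz hzn.le (by linarith)
    · rw [if_neg hm]
      have : 0 ≤ (if n ∈ primeSet p ⌊z⌋₊ then 1 / (n : ℝ) else 0) := by
        split_ifs <;> positivity
      linarith
  refine (Finset.sum_le_sum h2).trans ?_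
  rw [Finset.sum_add_distrib, ← Finset.mul_sum]
  apply add_le_add
  · rw [← Finset.sum_filter]
    unfold primeSum
    apply Finset.sum_le_sum_of_subset_of_nonneg
    · intro n hn
      exact (Finset.mem_filter.mp hn).2
    · intros; positivity
  · gcongr
    refine ((zr_summable hu).sum_le_tsum _ (fun _ _ => by positivity)).trans ?_
    have := zr_le hu
    simpa using this

lemma primeSum_lower : ∃ C : ℝ, 1 ≤ C ∧ ∀ᶠ Y : ℝ in atTop, ∀ p : ℕ, p.Prime →
    C * (p : ℝ) ^ 2 ≤ Y → Y / (4 * p) ≤ primeSum p (Real.exp (Real.exp Y)) := by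
  have hc := cPrime_nonneg
  refine ⟨2 * (2 * cPrime + 14), by linarith, ?_⟩
  have t1 : ∀ᶠ Y : ℝ in atTop, Y ^ 4 * Real.exp (-Y) < 1 / 8192 :=
    (Real.tendsto_pow_mul_exp_neg_atTop_nhds_zero 4).eventually_lt_const (by norm_num)
  have t2 : ∀ᶠ Y : ℝ in atTop, Real.log (4 * Y) ≤ Y / 4 := by
    have h := (Real.isLittleO_log_id_atTop.bound (show (0 : ℝ) < 1 / 16 by norm_num))
    have h2 := (tendsto_id.const_mul_atTop (show (0 : ℝ) < 4 by norm_num)).eventually h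
    filter_upwards [h2, eventually_ge_atTop 1] with Y hY hY1
    simp only [id, Real.norm_eq_abs] at hY
    rw [abs_of_nonneg (show 0 ≤ 4 * Y by linarith)] at hY
    have := le_abs_self (Real.log (4 * Y))
    linarith
  filter_upwards [t1, t2, eventually_ge_atTop 1] with Y h1 h2 hY1 p hp hpY
  have hp2 : (2 : ℝ) ≤ p := by exact_mod_cast hp.two_le
  set η := 4 * Y * Real.exp (-Y) with hη
  have hη0 : 0 < η := by positivity
  have hpY' : (p : ℝ) ^ 2 ≤ Y := by
    nlinarith [sq_nonneg (p : ℝ)]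
  have hη2 : η ≤ 1 / (2048 * (p : ℝ) ^ 5) := by
    rw [le_div_iff₀ (by positivity)]
    have h5 : (p : ℝ) ^ 5 ≤ Y ^ 3 := by
      calc (p : ℝ) ^ 5 ≤ (p : ℝ) ^ 6 := pow_le_pow_right₀ (by linarith) (by norm_num)
        _ = ((p : ℝ) ^ 2) ^ 3 := by ring
        _ ≤ Y ^ 3 := by gcongr
    calc η * (2048 * (p : ℝ) ^ 5) ≤ η * (2048 * Y ^ 3) := by gcongr
      _ = 8192 * (Y ^ 4 * Real.exp (-Y)) := by rw [hη]; ring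
      _ ≤ 1 := by linarith
  have k1 := primeM_lower hp hη0 hη2
  have k2 := primeM_split p hη0 (Real.exp_pos (Real.exp Y))
  have e1 : Real.exp (Real.exp Y) ^ (-(η / 2)) = Real.exp (-(2 * Y)) := by
    rw [← Real.exp_mul]
    congr 1
    have : Real.exp Y * Real.exp (-Y) = 1 := by rw [← Real.exp_add]; simp
    rw [hη]
    linear_combination (-2 * Y) * this
  have e2 : (1 + η / 2) / (η / 2) ≤ 1 + Real.exp Y := by
    rw [div_le_iff₀ (by positivity)]
    have : Real.exp Y * Real.exp (-Y) = 1 := by rw [← Real.exp_add]; simp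
    have : Real.exp Y * η = 4 * Y := by
      rw [hη]; linear_combination (4 * Y) * this
    nlinarith
  have e3 : Real.exp (Real.exp Y) ^ (-(η / 2)) * ((1 + η / 2) / (η / 2)) ≤ 1 := by
    rw [e1]
    have a1 : 1 + Real.exp Y ≤ 2 * Real.exp Y := by
      have := Real.one_le_exp (show 0 ≤ Y by linarith)
      linarith
    have a2 : (2 : ℝ) ≤ Real.exp Y := by
      have := Real.add_one_le_exp Y
      linarith
    calc Real.exp (-(2 * Y)) * ((1 + η / 2) / (η / 2))
        ≤ Real.exp (-(2 * Y)) * (Real.exp Y * Real.exp Y) := by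
          gcongr
          nlinarith
      _ = 1 := by rw [← Real.exp_add, ← Real.exp_add]; ring_nf; simp
  have e4 : 3 * Y / 4 ≤ Real.log (1 / η) := by
    rw [one_div, Real.log_inv, hη, Real.log_mul (by positivity) (by positivity), Real.log_exp]
    linarith
  have e5 : 3 * Y / 4 / p ≤ Real.log (1 / η) / p := by gcongr
  have e6 : (2 * cPrime + 13) * p + 1 ≤ Y / (2 * p) := by
    rw [le_div_iff₀ (by linarith)]
    nlinarith
  have e7 : 3 * Y / 4 / p - Y / (2 * p) = Y / (4 * p) := by
    field_simp
    ring
  linarith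


/-! ### Second moment -/

lemma count_mult (X d : ℕ) : (((Finset.Icc 1 X).filter (fun n => d ∣ n)).card : ℝ) ≤ X / d := by
  have : (Finset.Icc 1 X).filter (fun n => d ∣ n) = (Finset.Ioc 0 X).filter (fun n => d ∣ n) := rfl
  rw [this, Nat.Ioc_filter_dvd_card_eq_div]
  exact Nat.cast_div_le

lemma count_mult_lower (X d : ℕ) (hd : 1 ≤ d) :
    (X : ℝ) / d - 1 ≤ (((Finset.Icc 1 X).filter (fun n => d ∣ n)).card : ℝ) := by
  have : (Finset.Icc 1 X).filter (fun n => d ∣ n) = (Finset.Ioc 0 X).filter (fun n => d ∣ n) := rfl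
  rw [this, Nat.Ioc_filter_dvd_card_eq_div]
  have h := Nat.lt_floor_add_one ((X : ℝ) / d)
  rw [Nat.floor_div_eq_div] at h
  linarith

noncomputable def fcount (P : Finset ℕ) (n : ℕ) : ℝ := ∑ q ∈ P, if q ∣ n then (1 : ℝ) else 0

lemma sum_ind_dvd (X d : ℕ) : ∑ n ∈ Finset.Icc 1 X, (if d ∣ n then (1 : ℝ) else 0) =
    (((Finset.Icc 1 X).filter (fun n => d ∣ n)).card : ℝ) := by
  rw [← Finset.sum_filter]; simp

lemma fcount_sum_lower (P : Finset ℕ) (hP : ∀ q ∈ P, q.Prime) (X : ℕ) :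
    X * (∑ q ∈ P, 1 / (q : ℝ)) - P.card ≤ ∑ n ∈ Finset.Icc 1 X, fcount P n := by
  unfold fcount
  rw [Finset.sum_comm, Finset.mul_sum]
  have : (P.card : ℝ) = ∑ q ∈ P, (1 : ℝ) := by simp
  rw [this, ← Finset.sum_sub_distrib]
  apply Finset.sum_le_sum
  intro q hq
  rw [sum_ind_dvd, mul_one_div]
  exact count_mult_lower X q (hP q hq).one_le

lemma fcount_sq_sum (P : Finset ℕ) (hP : ∀ q ∈ P, q.Prime) (X : ℕ) :
    ∑ n ∈ Finset.Icc 1 X, fcount P n ^ 2 ≤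
      X * (∑ q ∈ P, 1 / (q : ℝ)) ^ 2 + X * (∑ q ∈ P, 1 / (q : ℝ)) := by
  have h1 : ∀ n, fcount P n ^ 2 = ∑ q ∈ P, ∑ r ∈ P,
      (if q ∣ n then (1 : ℝ) else 0) * (if r ∣ n then (1 : ℝ) else 0) := by
    intro n
    rw [sq, fcount, Finset.sum_mul_sum]
  simp_rw [h1]
  rw [Finset.sum_comm]
  have h2 : (X : ℝ) * (∑ q ∈ P, 1 / (q : ℝ)) ^ 2 + X * (∑ q ∈ P, 1 / (q : ℝ)) =
      ∑ q ∈ P, ∑ r ∈ P, ((X : ℝ) * (1 / q * (1 / r)) + if q = r then (X : ℝ) * (1 / q) else 0) := by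
    rw [sq, Finset.sum_mul_sum, Finset.mul_sum, Finset.mul_sum, ← Finset.sum_add_distrib]
    apply Finset.sum_congr rfl
    intro q hq
    rw [Finset.sum_add_distrib, Finset.mul_sum, Finset.sum_ite_eq, if_pos hq]
  rw [h2]
  apply Finset.sum_le_sum
  intro q hq
  rw [Finset.sum_comm]
  apply Finset.sum_le_sum
  intro r hr
  by_cases hqr : q = r
  · subst hqr
    have : ∀ n : ℕ, (if q ∣ n then (1 : ℝ) else 0) * (if q ∣ n then (1 : ℝ) else 0) =
      if q ∣ n then (1 : ℝ) else 0 := by intro n; split_ifs <;> simp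
    simp_rw [this]
    rw [sum_ind_dvd, if_pos trivial]
    have := count_mult X q
    have h0 : 0 ≤ (X : ℝ) * (1 / q * (1 / q)) := by positivity
    have e : (X : ℝ) * (1 / q) = X / q := by ring
    linarith
  · have : ∀ n : ℕ, (if q ∣ n then (1 : ℝ) else 0) * (if r ∣ n then (1 : ℝ) else 0) =
      if q * r ∣ n then (1 : ℝ) else 0 := by
      intro n
      have hc : Nat.Coprime q r := (Nat.coprime_primes (hP q hq) (hP r hr)).mpr hqr
      have : q * r ∣ n ↔ q ∣ n ∧ r ∣ n :=
        ⟨fun h => ⟨(dvd_mul_right q r).trans h, (dvd_mul_left r q).trans h⟩,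
          fun h => hc.mul_dvd_of_dvd_of_dvd h.1 h.2⟩
      simp only [this]
      split_ifs <;> simp_all
    simp_rw [this]
    rw [sum_ind_dvd, if_neg hqr]
    have := count_mult X (q * r)
    push_cast at this
    refine this.trans (le_of_eq ?_)
    have : (q : ℝ) ≠ 0 := by exact_mod_cast (hP q hq).ne_zero
    have : (r : ℝ) ≠ 0 := by exact_mod_cast (hP r hr).ne_zero
    field_simp
    ring

lemma card_small_f (P : Finset ℕ) (hP : ∀ q ∈ P, q.Prime) (X : ℕ) {S : ℝ}
    (hS : S = ∑ q ∈ P, 1 / (q : ℝ)) (hS0 : 0 < S) :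
    (((Finset.Icc 1 X).filter (fun n => fcount P n ≤ S / 2)).card : ℝ) ≤
      (4 * X + 8 * P.card) / S := by
  have h1 := fcount_sum_lower P hP X
  have h2 := fcount_sq_sum P hP X
  rw [← hS] at h1 h2
  have h3 : ∑ n ∈ Finset.Icc 1 X, (fcount P n - S) ^ 2 ≤ X * S + 2 * S * P.card := by
    have : ∀ n, (fcount P n - S) ^ 2 = fcount P n ^ 2 - 2 * S * fcount P n + S ^ 2 := by
      intro n; ring
    simp_rw [this]
    rw [Finset.sum_add_distrib, Finset.sum_sub_distrib, ← Finset.mul_sum]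
    simp only [Finset.sum_const, Nat.card_Icc, Nat.add_sub_cancel, nsmul_eq_mul]
    nlinarith
  have h4 : (((Finset.Icc 1 X).filter (fun n => fcount P n ≤ S / 2)).card : ℝ) * (S ^ 2 / 4) ≤
      ∑ n ∈ Finset.Icc 1 X, (fcount P n - S) ^ 2 := by
    rw [← nsmul_eq_mul]
    refine (Finset.card_nsmul_le_sum _ (fun n => (fcount P n - S) ^ 2) _ ?_).trans ?_
    · intro n hn
      have := (Finset.mem_filter.mp hn).2
      nlinarith
    · exact Finset.sum_le_sum_of_subset_of_nonneg (Finset.filter_subset _ _)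
        (fun _ _ _ => sq_nonneg _)
  rw [le_div_iff₀ hS0]
  have h5 := h4.trans h3
  have h6 : (S / 4) * ((((Finset.Icc 1 X).filter (fun n => fcount P n ≤ S / 2)).card : ℝ) * S) ≤
      (S / 4) * (4 * X + 8 * P.card) := by nlinarith
  exact le_of_mul_le_mul_left h6 (by positivity)

noncomputable def gcount (P : Finset ℕ) (n : ℕ) : ℝ := ∑ q ∈ P, if q ^ 2 ∣ n then (1 : ℝ) else 0

lemma card_large_g (P : Finset ℕ) (X : ℕ) {S c : ℝ}
    (hc : ∑ q ∈ P, 1 / (q : ℝ) ^ 2 ≤ c) (hS0 : 0 < S) :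
    (((Finset.Icc 1 X).filter (fun n => S / 4 ≤ gcount P n)).card : ℝ) ≤ 4 * c * X / S := by
  have h1 : ∑ n ∈ Finset.Icc 1 X, gcount P n ≤ c * X := by
    unfold gcount
    rw [Finset.sum_comm]
    calc _ ≤ ∑ q ∈ P, (X : ℝ) * (1 / (q : ℝ) ^ 2) := by
          apply Finset.sum_le_sum
          intro q _
          rw [sum_ind_dvd, mul_one_div]
          exact_mod_cast count_mult X (q ^ 2)
      _ ≤ c * X := by
          rw [← Finset.mul_sum, mul_comm]
          gcongr
  have h4 : (((Finset.Icc 1 X).filter (fun n => S / 4 ≤ gcount P n)).card : ℝ) * (S / 4) ≤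
      ∑ n ∈ Finset.Icc 1 X, gcount P n := by
    rw [← nsmul_eq_mul]
    refine (Finset.card_nsmul_le_sum _ (fun n => gcount P n) _ ?_).trans ?_
    · intro n hn
      exact (Finset.mem_filter.mp hn).2
    · apply Finset.sum_le_sum_of_subset_of_nonneg (Finset.filter_subset _ _)
      intro n _ _
      exact Finset.sum_nonneg fun q _ => by split_ifs <;> norm_num
  rw [le_div_iff₀ hS0]
  linarith

lemma card_few (P : Finset ℕ) (hP : ∀ q ∈ P, q.Prime) (X k : ℕ) {S c : ℝ}
    (hS : S = ∑ q ∈ P, 1 / (q : ℝ)) (hc : ∑ q ∈ P, 1 / (q : ℝ) ^ 2 ≤ c) (hS0 : 0 < S)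
    (hk : 4 * (k : ℝ) ≤ S) :
    (((Finset.Icc 1 X).filter
      (fun n => (P.filter (fun q => q ∣ n ∧ ¬ q ^ 2 ∣ n)).card < k)).card : ℝ) ≤
      ((4 + 4 * c) * X + 8 * P.card) / S := by
  have hsub : (Finset.Icc 1 X).filter
      (fun n => (P.filter (fun q => q ∣ n ∧ ¬ q ^ 2 ∣ n)).card < k) ⊆
      (Finset.Icc 1 X).filter (fun n => fcount P n ≤ S / 2) ∪
      (Finset.Icc 1 X).filter (fun n => S / 4 ≤ gcount P n) := by
    intro n hn
    rw [Finset.mem_filter] at hn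
    obtain ⟨hn1, hn2⟩ := hn
    by_contra hcon
    rw [Finset.mem_union, Finset.mem_filter, Finset.mem_filter, not_or] at hcon
    have a1 : S / 2 < fcount P n := by
      by_contra h; exact hcon.1 ⟨hn1, not_lt.mp h⟩
    have a2 : gcount P n < S / 4 := by
      by_contra h; exact hcon.2 ⟨hn1, not_lt.mp h⟩
    have a3 : fcount P n - gcount P n ≤
        ((P.filter (fun q => q ∣ n ∧ ¬ q ^ 2 ∣ n)).card : ℝ) := by
      rw [Finset.card_filter]
      push_cast
      unfold fcount gcount
      rw [← Finset.sum_sub_distrib]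
      apply Finset.sum_le_sum
      intro q _
      by_cases h1 : q ∣ n <;> by_cases h2 : q ^ 2 ∣ n <;> simp [h1, h2]
    have a4 : ((P.filter (fun q => q ∣ n ∧ ¬ q ^ 2 ∣ n)).card : ℝ) < k := by exact_mod_cast hn2
    linarith
  have h1 := card_small_f P hP X hS hS0
  have h2 := card_large_g P X hc hS0
  have h3 : (((Finset.Icc 1 X).filter
      (fun n => (P.filter (fun q => q ∣ n ∧ ¬ q ^ 2 ∣ n)).card < k)).card : ℝ) ≤
      (((Finset.Icc 1 X).filter (fun n => fcount P n ≤ S / 2)).card : ℝ) +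
      (((Finset.Icc 1 X).filter (fun n => S / 4 ≤ gcount P n)).card : ℝ) := by
    exact_mod_cast (Finset.card_le_card hsub).trans (Finset.card_union_le _ _)
  refine h3.trans ((add_le_add h1 h2).trans (le_of_eq ?_))
  field_simp
  ring

lemma pow_dvd_sigma (p : ℕ) (T : Finset ℕ) : ∀ n : ℕ, n ≠ 0 →
    (∀ q ∈ T, q.Prime ∧ (q : ZMod p) = -1 ∧ q ∣ n ∧ ¬ q ^ 2 ∣ n) →
    p ^ T.card ∣ ArithmeticFunction.sigma 1 n := by
  induction T using Finset.induction_on with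
  | empty => intro n _ _; simp
  | insert q T hq ih =>
    intro n hn h
    obtain ⟨hqp, hqm, ⟨m, rfl⟩, hq2⟩ := h q (Finset.mem_insert_self _ _)
    have hqm' : ¬ q ∣ m := by
      intro hd
      apply hq2
      rw [sq]
      exact Nat.mul_dvd_mul_left q hd
    have hcop : Nat.Coprime q m := (Nat.Prime.coprime_iff_not_dvd hqp).mpr hqm'
    rw [ArithmeticFunction.isMultiplicative_sigma.map_mul_of_coprime hcop,
      Finset.card_insert_of_notMem hq, pow_succ, mul_comm]
    apply Nat.mul_dvd_mul
    · have : ArithmeticFunction.sigma 1 q = q + 1 := by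
        rw [ArithmeticFunction.sigma_one_apply, hqp.sum_divisors]
      rw [this, ← ZMod.natCast_eq_zero_iff]
      push_cast
      rw [hqm]; ring
    · apply ih m (by rintro rfl; simp at hn)
      intro r hr
      obtain ⟨a, b, c, d⟩ := h r (Finset.mem_insert_of_mem hr)
      refine ⟨a, b, ?_, ?_⟩
      · rcases (Nat.Prime.dvd_mul a).mp c with h1 | h1
        · exfalso
          have := (Nat.prime_dvd_prime_iff_eq a hqp).mp h1
          exact hq (this ▸ hr)
        · exact h1
      · intro h1
        exact d (h1.mul_left q)




lemma card_large_pow (k X M : ℕ) (hk : 2 ≤ k) :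
    (((Finset.Icc 1 X).filter (fun n => ∃ p : ℕ, p.Prime ∧ M < p ∧ p ^ k ∣ n)).card : ℝ) ≤
      X * (2 / ((M : ℝ) + 1)) := by
  have hsub : (Finset.Icc 1 X).filter (fun n => ∃ p : ℕ, p.Prime ∧ M < p ∧ p ^ k ∣ n) ⊆
      (Finset.Ioo M (X + 1)).biUnion (fun p => (Finset.Icc 1 X).filter (fun n => p ^ 2 ∣ n)) := by
    intro n hn
    rw [Finset.mem_filter] at hn
    obtain ⟨hn1, p, hp, hM, hd⟩ := hn
    have hd2 : p ^ 2 ∣ n := (pow_dvd_pow p hk).trans hd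
    rw [Finset.mem_biUnion]
    refine ⟨p, ?_, Finset.mem_filter.mpr ⟨hn1, hd2⟩⟩
    rw [Finset.mem_Icc] at hn1
    have : p ≤ n := Nat.le_of_dvd hn1.1 ((dvd_pow_self p two_ne_zero).trans hd2)
    rw [Finset.mem_Ioo]
    omega
  have h1 : (((Finset.Icc 1 X).filter (fun n => ∃ p : ℕ, p.Prime ∧ M < p ∧ p ^ k ∣ n)).card : ℝ) ≤
      ∑ p ∈ Finset.Ioo M (X + 1), (((Finset.Icc 1 X).filter (fun n => p ^ 2 ∣ n)).card : ℝ) := by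
    exact_mod_cast (Finset.card_le_card hsub).trans Finset.card_biUnion_le
  refine h1.trans ?_
  calc _ ≤ ∑ p ∈ Finset.Ioo M (X + 1), (X : ℝ) * (((p : ℝ) ^ 2)⁻¹) := by
        apply Finset.sum_le_sum
        intro p _
        rw [← div_eq_mul_inv]
        exact_mod_cast count_mult X (p ^ 2)
    _ ≤ _ := by
        rw [← Finset.mul_sum]
        gcongr
        exact sum_Ioo_inv_sq_le M (X + 1)

lemma dvd_s_iff (n d : ℕ) (hn : 1 ≤ n) (h : d ∣ sigma1 n) : d ∣ n ↔ d ∣ s n := by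
  have hle : n ≤ sigma1 n := by
    unfold sigma1
    rw [ArithmeticFunction.sigma_one_apply]
    exact Finset.single_le_sum (f := fun i => i) (fun _ _ => Nat.zero_le _)
      (Nat.mem_divisors_self n (by omega))
  have he : s n + n = sigma1 n := by unfold s; omega
  rw [← he] at h
  exact ⟨fun h1 => (Nat.dvd_add_left h1).mp h, fun h1 => (Nat.dvd_add_right h1).mp h⟩

lemma primeSet_prime {p Z q : ℕ} (hq : q ∈ primeSet p Z) : q.Prime ∧ (q : ZMod p) = -1 :=
  (Finset.mem_filter.mp hq).2

lemma primeSet_card (p Z : ℕ) : (primeSet p Z).card ≤ Z := by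
  refine (Finset.card_filter_le _ _).trans ?_
  simp

lemma primeSet_sq (p Z : ℕ) : ∑ q ∈ primeSet p Z, 1 / (q : ℝ) ^ 2 ≤ 2 := by
  have h2 : (1 : ℝ) < 2 := by norm_num
  have h := (zr_summable h2).sum_le_tsum (primeSet p Z) (fun _ _ => by positivity)
  have h3 := zr_le h2
  have h4 : ∑ q ∈ primeSet p Z, 1 / (q : ℝ) ^ 2 = ∑ q ∈ primeSet p Z, (q : ℝ) ^ (-2 : ℝ) := by
    apply Finset.sum_congr rfl
    intro q _
    rw [show (-2 : ℝ) = -((2 : ℕ) : ℝ) by norm_num, Real.rpow_neg (by positivity),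
      Real.rpow_natCast, one_div]
  rw [h4]
  have h5 : (2 : ℝ) / (2 - 1) = 2 := by norm_num
  linarith

noncomputable def badSet (k p X : ℕ) : Finset ℕ :=
  (Finset.Icc 1 X).filter
    (fun n => ((primeSet p X).filter (fun q => q ∣ n ∧ ¬ q ^ 2 ∣ n)).card < k)

lemma dvd_sigma_of_not_bad {k p X n : ℕ} (hn : n ∈ Finset.Icc 1 X) (h : n ∉ badSet k p X) :
    p ^ k ∣ sigma1 n := by
  have h1 : k ≤ ((primeSet p X).filter (fun q => q ∣ n ∧ ¬ q ^ 2 ∣ n)).card := by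
    by_contra hc
    exact h (Finset.mem_filter.mpr ⟨hn, not_le.mp hc⟩)
  refine (pow_dvd_pow p h1).trans ?_
  have hn0 : n ≠ 0 := by
    rw [Finset.mem_Icc] at hn; omega
  apply pow_dvd_sigma p _ n hn0
  intro q hq
  rw [Finset.mem_filter] at hq
  exact ⟨(primeSet_prime hq.1).1, (primeSet_prime hq.1).2, hq.2.1, hq.2.2⟩

lemma tendsto_pow_ratio : Tendsto (fun L : ℝ => L ^ (0.9 : ℝ) / L) atTop (nhds 0) := by
  refine (tendsto_rpow_neg_atTop (show (0 : ℝ) < 0.1 by norm_num)).congr' ?_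
  filter_upwards [eventually_gt_atTop 0] with L hL
  rw [show (-0.1 : ℝ) = 0.9 - 1 by norm_num, Real.rpow_sub hL, Real.rpow_one]

/-- Union of the exceptional sets over the small primes. -/
lemma card_bad_union (k : ℕ) (hk : 2 ≤ k) : ∀ᶠ L : ℝ in atTop, ∀ x : ℝ,
    x = Real.exp (Real.exp L) →
    ((((Finset.Icc 1 ⌊Real.sqrt (L ^ (0.9 : ℝ))⌋₊).filter
      (fun p => p.Prime ∧ ((p ^ k : ℕ) : ℝ) ≤ L ^ (0.9 : ℝ))).biUnion
        (fun p => badSet k p ⌊x⌋₊)).card : ℝ) ≤ x * (80 * (L ^ (0.9 : ℝ) / L)) := by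
  obtain ⟨C, hC1, hC⟩ := primeSum_lower
  have ev : ∀ᶠ L : ℝ in atTop, L ^ (0.9 : ℝ) / L < 1 / (C + 16 * k) :=
    tendsto_pow_ratio.eventually_lt_const (by positivity)
  filter_upwards [hC, ev, eventually_ge_atTop 1] with L h1 h2 hL x hx
  set T := L ^ (0.9 : ℝ) with hT
  have hT0 : 0 < T := by positivity
  have hx0 : 0 < x := by rw [hx]; positivity
  have hCT : (C + 16 * k) * T ≤ L := by
    rw [div_lt_div_iff₀ (by linarith) (by positivity)] at h2
    linarith
  have hCT1 : C * T ≤ L := by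
    have : 0 ≤ 16 * (k : ℝ) * T := by positivity
    nlinarith
  have hCT2 : 16 * k * T ≤ L := by
    have : 0 ≤ C * T := by positivity
    nlinarith
  set R := ⌊Real.sqrt T⌋₊ with hR
  have hR2 : (R : ℝ) ≤ Real.sqrt T := Nat.floor_le (Real.sqrt_nonneg _)
  have hRT : (R : ℝ) * R ≤ T := by
    calc (R : ℝ) * R ≤ Real.sqrt T * Real.sqrt T := by gcongr
      _ = T := Real.mul_self_sqrt hT0.le
  set I := (Finset.Icc 1 R).filter (fun p => p.Prime ∧ ((p ^ k : ℕ) : ℝ) ≤ T) with hI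
  have hIc : (I.card : ℝ) ≤ R := by
    have : I.card ≤ (Finset.Icc 1 R).card := Finset.card_filter_le _ _
    rw [Nat.card_Icc] at this
    exact_mod_cast this
  have hone : ∀ p ∈ I, ((badSet k p ⌊x⌋₊).card : ℝ) ≤ 80 * x * R / L := by
    intro p hpI
    rw [hI, Finset.mem_filter, Finset.mem_Icc] at hpI
    obtain ⟨⟨hp1, hpR⟩, hp, hpk⟩ := hpI
    have hpR' : (p : ℝ) ≤ R := by exact_mod_cast hpR
    have hp2 : (2 : ℝ) ≤ p := by exact_mod_cast hp.two_le
    have hpT : (p : ℝ) ^ 2 ≤ T := by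
      nlinarith
    have hlow := h1 p hp (by nlinarith)
    rw [← hx] at hlow
    have hpos : 0 < L / (4 * p) := by positivity
    have hk4 : 4 * (k : ℝ) ≤ L / (4 * p) := by
      rw [le_div_iff₀ (by positivity)]
      have : (p : ℝ) ≤ T := by nlinarith
      have : 16 * (k : ℝ) * p ≤ 16 * k * T := by gcongr
      linarith
    have hS0 : 0 < primeSum p x := hpos.trans_le hlow
    have := card_few (primeSet p ⌊x⌋₊) (fun q hq => (primeSet_prime hq).1) ⌊x⌋₊ k
      (S := primeSum p x) rfl (primeSet_sq p _) hS0 (hk4.trans hlow)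
    refine this.trans ?_
    have hf : (⌊x⌋₊ : ℝ) ≤ x := Nat.floor_le hx0.le
    have hc : ((primeSet p ⌊x⌋₊).card : ℝ) ≤ x :=
      le_trans (by exact_mod_cast primeSet_card p ⌊x⌋₊) hf
    calc ((4 + 4 * 2) * (⌊x⌋₊ : ℝ) + 8 * (primeSet p ⌊x⌋₊).card) / primeSum p x
        ≤ ((4 + 4 * 2) * x + 8 * x) / (L / (4 * p)) := by gcongr
      _ = 80 * x * p / L := by
          field_simp
          ring
      _ ≤ 80 * x * R / L := by gcongr
  calc ((I.biUnion (fun p => badSet k p ⌊x⌋₊)).card : ℝ)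
      ≤ ∑ p ∈ I, ((badSet k p ⌊x⌋₊).card : ℝ) := by
        exact_mod_cast Finset.card_biUnion_le
    _ ≤ ∑ p ∈ I, 80 * x * R / L := Finset.sum_le_sum hone
    _ = I.card * (80 * x * R / L) := by rw [Finset.sum_const, nsmul_eq_mul]
    _ ≤ R * (80 * x * R / L) := by gcongr
    _ = x * (80 * (R * R / L)) := by ring
    _ ≤ x * (80 * (T / L)) := by gcongr

theorem conjecture_reduction (k : ℕ) (hk : 2 ≤ k)
    (H : (fun x : ℝ => (((Finset.Icc 1 ⌊x⌋₊).filter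
        (fun n => ∃ p : ℕ, p.Prime ∧
          (Real.log (Real.log x)) ^ (0.9 : ℝ) < ((p ^ k : ℕ) : ℝ) ∧ p ^ k ∣ s n)).card : ℝ))
      =o[atTop] (fun x : ℝ => x)) :
    (fun x : ℝ => (((Finset.Icc 1 ⌊x⌋₊).filter
        (fun n => ¬ (KFree k n ↔ KFree k (s n)))).card : ℝ))
      =o[atTop] (fun x : ℝ => x) := by
  rw [Asymptotics.isLittleO_iff] at H ⊢
  intro ε hε
  have H1 := H (show 0 < ε / 3 by positivity)
  obtain ⟨M, hM⟩ := exists_nat_gt (6 / ε)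
  have hLL : Tendsto (fun x : ℝ => Real.log (Real.log x)) atTop atTop :=
    Real.tendsto_log_atTop.comp Real.tendsto_log_atTop
  have H2 := hLL.eventually (card_bad_union k hk)
  have H3 := hLL.eventually
    (tendsto_pow_ratio.eventually_lt_const (show 0 < ε / 240 by positivity))
  have H4 := hLL.eventually ((tendsto_rpow_atTop (show (0 : ℝ) < 0.9 by norm_num)).eventually_ge_atTop
    ((M ^ k : ℕ) : ℝ))
  filter_upwards [H1, H2, H3, H4, eventually_gt_atTop 1] with x h1 h2 h3 h4 hx1
  have hx0 : 0 < x := by linarith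
  have hxx : x = Real.exp (Real.exp (Real.log (Real.log x))) := by
    rw [Real.exp_log (Real.log_pos hx1), Real.exp_log hx0]
  have h2 := h2 x hxx
  set L := Real.log (Real.log x) with hL
  set T := L ^ (0.9 : ℝ) with hT
  rw [Real.norm_of_nonneg (Nat.cast_nonneg _), Real.norm_of_nonneg hx0.le] at h1 ⊢
  set A := (Finset.Icc 1 ⌊x⌋₊).filter
        (fun n => ∃ p : ℕ, p.Prime ∧ T < ((p ^ k : ℕ) : ℝ) ∧ p ^ k ∣ s n) with hA
  set V := ((Finset.Icc 1 ⌊Real.sqrt T⌋₊).filter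
      (fun p => p.Prime ∧ ((p ^ k : ℕ) : ℝ) ≤ T)).biUnion
        (fun p => badSet k p ⌊x⌋₊) with hV
  set U := (Finset.Icc 1 ⌊x⌋₊).filter (fun n => ∃ p : ℕ, p.Prime ∧ M < p ∧ p ^ k ∣ n) with hU
  have hsub : (Finset.Icc 1 ⌊x⌋₊).filter (fun n => ¬ (KFree k n ↔ KFree k (s n))) ⊆
      (A ∪ V) ∪ U := by
    intro n hn
    rw [Finset.mem_filter] at hn
    obtain ⟨hn1, hn2⟩ := hn
    by_contra hcon
    rw [Finset.mem_union, Finset.mem_union, not_or, not_or] at hcon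
    obtain ⟨⟨cA, cV⟩, cU⟩ := hcon
    apply hn2
    have key : ∀ p : ℕ, p.Prime → (p ^ k ∣ n ↔ p ^ k ∣ s n) := by
      intro p hp
      by_cases hpT : ((p ^ k : ℕ) : ℝ) ≤ T
      · apply dvd_s_iff n _ (Finset.mem_Icc.mp hn1).1
        refine dvd_sigma_of_not_bad hn1 (fun hb => cV ?_)
        rw [hV, Finset.mem_biUnion]
        refine ⟨p, ?_, hb⟩
        rw [Finset.mem_filter, Finset.mem_Icc]
        refine ⟨⟨hp.one_le, Nat.le_floor (Real.le_sqrt_of_sq_le ?_)⟩, hp, hpT⟩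
        refine le_trans ?_ hpT
        exact_mod_cast Nat.pow_le_pow_right hp.pos hk
      · have hpT' := not_le.mp hpT
        constructor
        · intro hd
          exfalso
          apply cU
          rw [hU, Finset.mem_filter]
          refine ⟨hn1, p, hp, ?_, hd⟩
          have : M ^ k < p ^ k := by exact_mod_cast h4.trans_lt hpT'
          exact lt_of_pow_lt_pow_left₀ k (Nat.zero_le _) this
        · intro hd
          exfalso
          apply cA
          rw [hA, Finset.mem_filter]
          exact ⟨hn1, p, hp, hpT', hd⟩
    unfold KFree
    exact forall_congr' fun p => imp_congr_right fun hp => not_congr (key p hp)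
  have hcard : (((Finset.Icc 1 ⌊x⌋₊).filter
      (fun n => ¬ (KFree k n ↔ KFree k (s n)))).card : ℝ) ≤ A.card + V.card + U.card := by
    exact_mod_cast (Finset.card_le_card hsub).trans ((Finset.card_union_le _ _).trans
      (Nat.add_le_add_right (Finset.card_union_le _ _) _))
  have hUc : (U.card : ℝ) ≤ ε / 3 * x := by
    refine (card_large_pow k ⌊x⌋₊ M hk).trans ?_
    rw [mul_comm]
    have hM0 : (0 : ℝ) < (M : ℝ) + 1 := by positivity
    have : 2 / ((M : ℝ) + 1) ≤ ε / 3 := by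
      rw [div_le_div_iff₀ hM0 (by norm_num)]
      rw [div_lt_iff₀ hε] at hM
      nlinarith
    have hf : (⌊x⌋₊ : ℝ) ≤ x := Nat.floor_le hx0.le
    gcongr
  have hVc : (V.card : ℝ) ≤ ε / 3 * x := by
    refine h2.trans ?_
    nlinarith
  linarith
end

section
/- Let y be a positive real number, and let n be a positive integer whose largest squarefull divisor is at most y/2. Suppose p is a prime with p > y that divides both n and σ(n). Then there exists a prime q with q ∥ n and q ≡ −1 (mod p). -/
open scoped Classical

/-- A positive integer `r` is squarefull if `p² ∣ r` for every prime `p ∣ r`. -/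
def Squarefull (r : ℕ) : Prop := ∀ p : ℕ, p.Prime → p ∣ r → p ^ 2 ∣ r

theorem exact_prime_divisor_neg_one_mod_p (y : ℝ) (hy : 0 < y) (n : ℕ) (hn : 0 < n)
    (hsf : ∀ r : ℕ, Squarefull r → r ∣ n → (r : ℝ) ≤ y / 2)
    (p : ℕ) (hp : p.Prime) (hpy : y < (p : ℝ)) (hpn : p ∣ n) (hps : p ∣ sigma1 n) :
    ∃ q : ℕ, q.Prime ∧ q ∣ n ∧ ¬ q ^ 2 ∣ n ∧ (q : ℤ) ≡ -1 [ZMOD (p : ℤ)] := by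
  unfold sigma1 at hps
  rw [ArithmeticFunction.isMultiplicative_sigma.multiplicative_factorization _ hn.ne',
    Finsupp.prod, hp.prime.dvd_finset_prod_iff] at hps
  obtain ⟨q, hq, hd⟩ := hps
  rw [Nat.support_factorization, Nat.mem_primeFactors] at hq
  obtain ⟨hqp, hqn, -⟩ := hq
  have hdvd : q ^ n.factorization q ∣ n := Nat.ordProj_dvd n q
  have h1 : 1 ≤ n.factorization q := (hqp.dvd_iff_one_le_factorization hn.ne').1 hqn
  have hiff := hqp.pow_dvd_iff_le_factorization (k := 2) hn.ne'
  generalize n.factorization q = a at *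
  rw [ArithmeticFunction.sigma_one_apply_prime_pow hqp] at hd
  by_cases h2 : 2 ≤ a
  · exfalso
    have hs : Squarefull (q ^ a) := by
      intro r hr hra
      rw [(Nat.prime_dvd_prime_iff_eq hr hqp).1 (hr.dvd_of_dvd_pow hra)]
      exact pow_dvd_pow q h2
    have hb := hsf _ hs hdvd
    have hlt : ∑ k ∈ Finset.range a, q ^ k < q ^ a :=
      Nat.geomSum_lt hqp.two_le (fun k hk => Finset.mem_range.1 hk)
    rw [Finset.sum_range_succ] at hd
    have hpos : 0 < q ^ a := pow_pos hqp.pos a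
    have hle := Nat.le_of_dvd (by omega) hd
    have h3 : p ≤ 2 * q ^ a := by omega
    have h4 : (p : ℝ) ≤ 2 * ((q ^ a : ℕ) : ℝ) := by exact_mod_cast h3
    linarith
  · have ha : a = 1 := by omega
    subst ha
    refine ⟨q, hqp, hqn, fun h => h2 (hiff.1 h), ?_⟩
    simp [Finset.sum_range_succ] at hd
    apply Int.ModEq.symm
    rw [Int.modEq_iff_dvd]
    have : (p : ℤ) ∣ ((1 + q : ℕ) : ℤ) := by exact_mod_cast hd
    push_cast at this
    rwa [sub_neg_eq_add, add_comm]
end
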